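/- arXiv:0903.2016 — 7 statements merged into one kernel-verified Lean document; each statement's English description precedes it below -/
import Mathlib

section
/- Let t ≥ 3 be an odd integer and let g_t(x,y,z) = (x^t + y^t + z^t + (x+y+z)^t)/((x+y)(x+z)(y+z)) ∈ F_2[x,y,z]. If g_t(x,y,z) has an absolutely irreducible factor defined over F_2, then for all sufficiently large n there exists a point (α, β, γ) ∈ (F_{2^n})^3 with pairwise distinct coordinates such that g_t(α, β, γ) = 0. -/
open MvPolynomial

lemma indep_pow {K L : Type*} [Field K] [Field L] [Algebra K L] [CharP L 2]
    (hK : ∀ u : L, (∀ s : ℕ, ∃ w : L, w ^ 2 ^ s = u) → ∃ a : K, algebraMap K L a = u)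
    {ι : Type*} [DecidableEq ι] (v : ι → L) (S : Finset ι)
    (h : ∀ c : ι → K, ∑ i ∈ S, algebraMap K L (c i) * v i = 0 → ∀ i ∈ S, c i = 0) :
    ∃ s : ℕ, ∀ D : ι → L, ∑ i ∈ S, D i ^ 2 ^ s * v i = 0 → ∀ i ∈ S, D i = 0 := by
  induction S using Finset.induction_on with
  | empty => exact ⟨0, by simp⟩
  | insert a S ha ih =>
    obtain ⟨s0, h0⟩ := ih (by
      intro c hc i hi
      have := h (fun j => if j = a then 0 else c j) (by
        rw [Finset.sum_insert ha]
        simp only [if_true, map_zero, zero_mul, zero_add]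
        rw [← hc]
        apply Finset.sum_congr rfl
        intro j hj
        have : j ≠ a := fun h => ha (h ▸ hj)
        simp [this]) i (Finset.mem_insert_of_mem hi)
      have hia : i ≠ a := fun h => ha (h ▸ hi)
      simpa [hia] using this)
    by_contra! hcon
    have key : ∀ s, s0 ≤ s → ∃ E : ι → L, v a = ∑ i ∈ S, E i ^ 2 ^ s * v i := by
      intro s hs
      obtain ⟨D, hD, i, hi, hDi⟩ := hcon s
      rw [Finset.sum_insert ha] at hD
      have hDa : D a ≠ 0 := by
        intro hDa
        rw [hDa, zero_pow (by positivity), zero_mul, zero_add] at hD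
        have := h0 (fun i => D i ^ 2 ^ (s - s0)) (by
          rw [← hD]
          apply Finset.sum_congr rfl
          intro j _
          simp only [← pow_mul, ← pow_add]
          rw [Nat.sub_add_cancel hs])
        rcases Finset.mem_insert.1 hi with rfl | hi
        · exact hDi hDa
        · exact hDi (by simpa using this i hi)
      refine ⟨fun i => D i / D a, ?_⟩
      have h1 : D a ^ 2 ^ s * v a = ∑ i ∈ S, D i ^ 2 ^ s * v i := by
        have := eq_neg_of_add_eq_zero_left hD
        rwa [CharTwo.neg_eq] at this
      have h2 : D a ^ 2 ^ s ≠ 0 := pow_ne_zero _ hDa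
      apply mul_left_cancel₀ h2
      rw [h1, Finset.mul_sum]
      apply Finset.sum_congr rfl
      intro j _
      rw [div_pow]
      field_simp
    obtain ⟨E0, hE0⟩ := key s0 le_rfl
    have huniq : ∀ s, s0 ≤ s → ∃ E : ι → L, ∀ i ∈ S, E i ^ 2 ^ s = E0 i ^ 2 ^ s0 := by
      intro s hs
      obtain ⟨E, hE⟩ := key s hs
      refine ⟨E, ?_⟩
      have := h0 (fun i => E i ^ 2 ^ (s - s0) - E0 i) (by
        have e1 : ∀ i, (E i ^ 2 ^ (s - s0) - E0 i) ^ 2 ^ s0 = E i ^ 2 ^ s - E0 i ^ 2 ^ s0 := by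
          intro i
          rw [sub_pow_char_pow, ← pow_mul, ← pow_add, Nat.sub_add_cancel hs]
        simp only [e1, sub_mul, Finset.sum_sub_distrib]
        rw [← hE, ← hE0, sub_self])
      intro i hi
      have := this i hi
      rw [← sub_eq_zero.1 this, ← pow_mul, ← pow_add, Nat.sub_add_cancel hs]
    have hc : ∀ i, ∃ c : K, i ∈ S → algebraMap K L c = E0 i ^ 2 ^ s0 := by
      intro i
      by_cases hi : i ∈ S
      · obtain ⟨c, hc⟩ := hK (E0 i ^ 2 ^ s0) (by
          intro s
          rcases le_total s0 s with hs | hs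
          · obtain ⟨E, hE⟩ := huniq s hs
            exact ⟨E i, hE i hi⟩
          · refine ⟨E0 i ^ 2 ^ (s0 - s), ?_⟩
            rw [← pow_mul, ← pow_add, Nat.sub_add_cancel hs])
        exact ⟨c, fun _ => hc⟩
      · exact ⟨0, fun h => absurd h hi⟩
    choose c hc using hc
    have := h (fun j => if j = a then 1 else c j) (by
      rw [Finset.sum_insert ha]
      simp only [if_true, map_one, one_mul]
      have : ∑ x ∈ S, (algebraMap K L) (if x = a then 1 else c x) * v x = v a := by
        rw [hE0]
        apply Finset.sum_congr rfl
        intro j hj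
        have : j ≠ a := fun h => ha (h ▸ hj)
        simp [this, hc j hj]
      rw [this, CharTwo.add_self_eq_zero]) a (Finset.mem_insert_self _ _)
    simp at this

lemma const_frac {K F : Type*} [Field K] [Field F] [Algebra (Polynomial K) F]
    [IsFractionRing (Polynomial K) F] (u : F)
    (hu : ∀ s : ℕ, ∃ w : F, w ^ 2 ^ s = u) :
    ∃ a : K, algebraMap (Polynomial K) F (Polynomial.C a) = u := by
  classical
  by_cases h0 : u = 0
  · exact ⟨0, by simp [h0]⟩
  obtain ⟨a, b, hab, hb, rfl⟩ : ∃ a b : Polynomial K, IsCoprime a b ∧ b ≠ 0 ∧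
      u = algebraMap _ F a / algebraMap _ F b := by
    refine ⟨IsFractionRing.num (Polynomial K) u, IsFractionRing.den (Polynomial K) u, ?_, ?_, ?_⟩
    · exact (IsFractionRing.num_den_reduced (Polynomial K) u).isCoprime
    · exact nonZeroDivisors.ne_zero (IsFractionRing.den (Polynomial K) u).2
    · exact (IsFractionRing.mk'_num_den' (Polynomial K) u).symm
  have inj := IsFractionRing.injective (Polynomial K) F
  have ha : a ≠ 0 := by rintro rfl; simp at h0
  obtain ⟨w, hw⟩ := hu (a.natDegree + b.natDegree)
  obtain ⟨c, e, hce, he, rfl⟩ : ∃ a b : Polynomial K, IsCoprime a b ∧ b ≠ 0 ∧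
      w = algebraMap _ F a / algebraMap _ F b := by
    refine ⟨IsFractionRing.num (Polynomial K) w, IsFractionRing.den (Polynomial K) w, ?_, ?_, ?_⟩
    · exact (IsFractionRing.num_den_reduced (Polynomial K) w).isCoprime
    · exact nonZeroDivisors.ne_zero (IsFractionRing.den (Polynomial K) w).2
    · exact (IsFractionRing.mk'_num_den' (Polynomial K) w).symm
  set s := a.natDegree + b.natDegree with hs
  have hb' : algebraMap _ F b ≠ 0 := by simpa using inj.ne hb
  have he' : algebraMap _ F e ≠ 0 := by simpa using inj.ne he
  have heq : c ^ 2 ^ s * b = a * e ^ 2 ^ s := by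
    apply inj
    simp only [map_mul, map_pow]
    rw [div_pow, div_eq_div_iff (pow_ne_zero _ he') hb'] at hw
    exact hw
  have hc : c ≠ 0 := by
    rintro rfl
    rw [zero_pow (by positivity), zero_mul] at heq
    exact (mul_ne_zero ha (pow_ne_zero _ he)) heq.symm
  have hlt : s < 2 ^ s := Nat.lt_two_pow_self
  have hdeg : ∀ x y : Polynomial K, y ≠ 0 → x ^ 2 ^ s ∣ y → y.natDegree ≤ s → x.natDegree = 0 := by
    intro x y hy hd hys
    have := Polynomial.natDegree_le_of_dvd hd hy
    rw [Polynomial.natDegree_pow] at this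
    by_contra hx
    have : 2 ^ s * 1 ≤ 2 ^ s * x.natDegree := Nat.mul_le_mul_left _ (Nat.pos_of_ne_zero hx)
    omega
  have h1 : c ^ 2 ^ s ∣ a := (IsCoprime.pow hce).dvd_of_dvd_mul_right (Dvd.intro _ heq)
  have h2 : e ^ 2 ^ s ∣ b := (IsCoprime.pow hce.symm).dvd_of_dvd_mul_left (Dvd.intro_left _ heq.symm)
  have h3 := Polynomial.eq_C_of_natDegree_eq_zero (hdeg c a ha h1 (by omega))
  have h4 := Polynomial.eq_C_of_natDegree_eq_zero (hdeg e b hb h2 (by omega))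
  have h5 : e.coeff 0 ≠ 0 := fun h => he (by rw [h4, h, Polynomial.C_0])
  refine ⟨(c.coeff 0 / e.coeff 0) ^ 2 ^ s, ?_⟩
  rw [← hw]
  simp only [map_pow]
  congr 1
  rw [eq_div_iff he', ← map_mul]
  congr 1
  conv_lhs => rw [h4]
  conv_rhs => rw [h3]
  rw [← Polynomial.C_mul, Polynomial.coeff_C_zero, div_mul_cancel₀ _ h5]

lemma const_ext {K F L : Type*} [Field K] [IsAlgClosed K] [Field F] [Algebra (Polynomial K) F]
    [IsFractionRing (Polynomial K) F] [Algebra K F] [IsScalarTower K (Polynomial K) F]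
    [Field L] [CharP F 2] [CharP L 2] [Algebra F L] [Algebra K L] [IsScalarTower K F L]
    [Algebra.IsSeparable F L] (u : L)
    (hu : ∀ s : ℕ, ∃ w : L, w ^ 2 ^ s = u) :
    ∃ a : K, algebraMap K L a = u := by
  have hint : ∀ x : L, IsIntegral F x := fun x => Algebra.IsSeparable.isIntegral F x
  have : ExpChar F 2 := ExpChar.prime Nat.prime_two
  have : ExpChar L 2 := ExpChar.prime Nat.prime_two
  have hco : ∀ i, ∃ a : K, algebraMap K F a = (minpoly F u).coeff i := by
    intro i
    obtain ⟨a, ha⟩ := const_frac (K := K) ((minpoly F u).coeff i) (by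
      intro s
      obtain ⟨w, rfl⟩ := hu s
      have hm : minpoly F (w ^ 2 ^ s) = (minpoly F w).map (iterateFrobenius F 2 s) := by
        symm
        have hmon : ((minpoly F w).map (iterateFrobenius F 2 s)).Monic :=
          (minpoly.monic (hint w)).map _
        apply minpoly.unique_of_degree_le_degree_minpoly F _ hmon
        · have hcomp : (algebraMap F L).comp (iterateFrobenius F 2 s) =
              (iterateFrobenius L 2 s).comp (algebraMap F L) := by
            ext x
            simp [iterateFrobenius_def]
          rw [Polynomial.aeval_def, Polynomial.eval₂_map, hcomp, ← iterateFrobenius_def 2 s w,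
            Polynomial.hom_eval₂ (minpoly F w) (algebraMap F L) (iterateFrobenius L 2 s) w |>.symm,
            ← Polynomial.aeval_def, minpoly.aeval, map_zero]
        · rw [Polynomial.degree_eq_natDegree hmon.ne_zero,
            Polynomial.degree_eq_natDegree (minpoly.ne_zero (hint _)),
            (minpoly.monic (hint w)).natDegree_map, ← IntermediateField.adjoin.finrank (hint w),
            ← IntermediateField.adjoin.finrank (hint _),
            IntermediateField.adjoin_simple_eq_adjoin_pow_expChar_pow_of_isSeparable' F L w 2 s]
      refine ⟨(minpoly F w).coeff i, ?_⟩
      rw [hm, Polynomial.coeff_map, iterateFrobenius_def])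
    exact ⟨a, by rw [← ha, IsScalarTower.algebraMap_apply K (Polynomial K) F]; rfl⟩
  have hui : IsIntegral K u := by
    have hl : minpoly F u ∈ Polynomial.lifts (algebraMap K F) :=
      (Polynomial.lifts_iff_coeff_lifts _).2 hco
    obtain ⟨q, hq, -, hqm⟩ := Polynomial.lifts_and_natDegree_eq_and_monic hl
      (minpoly.monic (hint u))
    refine ⟨q, hqm, ?_⟩
    rw [IsScalarTower.algebraMap_eq K F L, ← Polynomial.eval₂_map, hq, ← Polynomial.aeval_def,
      minpoly.aeval]
  have h1 := IsAlgClosed.degree_eq_one_of_irreducible K (minpoly.irreducible hui)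
  exact minpoly.mem_range_of_degree_eq_one K u h1

abbrev KK := AlgebraicClosure (ZMod 2)

lemma exists_field (f : Polynomial (Polynomial (ZMod 2))) (hf : f.Monic)
    (hirr : Irreducible (f.map (Polynomial.mapRingHom (algebraMap (ZMod 2) KK))))
    (hder : Polynomial.derivative f ≠ 0) :
    ∃ (L : Type) (_ : Field L) (_ : Algebra KK L) (_ : CharP L 2) (x y : L),
      f.eval₂ (Polynomial.eval₂RingHom ((algebraMap KK L).comp (algebraMap (ZMod 2) KK)) x) y = 0 ∧
      (∀ b : ℕ, ∀ c : ℕ × ℕ → KK,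
        ∑ p ∈ Finset.range b ×ˢ Finset.range f.natDegree,
          algebraMap KK L (c p) * (x ^ p.1 * y ^ p.2) = 0 →
        ∀ p ∈ Finset.range b ×ˢ Finset.range f.natDegree, c p = 0) ∧
      (∀ u : L, (∀ s : ℕ, ∃ w : L, w ^ 2 ^ s = u) → ∃ a : KK, algebraMap KK L a = u) := by
  classical
  let φ := Polynomial.mapRingHom (algebraMap (ZMod 2) KK)
  have hφ : Function.Injective φ :=
    Polynomial.map_injective _ (algebraMap (ZMod 2) KK).injective
  let fK := f.map φ
  have hfK : fK.Monic := hf.map _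
  let F := FractionRing (Polynomial KK)
  let ψ := algebraMap (Polynomial KK) F
  have hψ : Function.Injective ψ := IsFractionRing.injective _ _
  let fF := fK.map ψ
  have hfF : fF.Monic := hfK.map _
  have hirrF : Irreducible fF :=
    (Polynomial.Monic.irreducible_iff_irreducible_map_fraction_map hfK).1 hirr
  have hderF : Polynomial.derivative fF ≠ 0 := by
    rw [Polynomial.derivative_map, Polynomial.derivative_map]
    intro h
    apply hder
    apply Polynomial.map_injective _ hφ
    apply Polynomial.map_injective _ hψ
    simpa using h
  have hsep : fF.Separable := (Polynomial.separable_iff_derivative_ne_zero hirrF).2 hderF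
  have : Fact (Irreducible fF) := ⟨hirrF⟩
  have : CharP KK 2 := charP_of_injective_algebraMap (algebraMap (ZMod 2) KK).injective 2
  have : CharP F 2 := charP_of_injective_algebraMap (algebraMap KK F).injective 2
  have : CharP (AdjoinRoot fF) 2 := charP_of_injective_algebraMap (algebraMap F (AdjoinRoot fF)).injective 2
  have : Algebra.IsSeparable F (AdjoinRoot fF) := by
    have h1 : IsSeparable F (AdjoinRoot.root fF) := by
      refine hsep.of_dvd (minpoly.dvd F _ ?_)
      rw [AdjoinRoot.aeval_eq, AdjoinRoot.mk_self]
    have h2 := (IntermediateField.isSeparable_adjoin_simple_iff_isSeparable F _).2 h1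
    have h3 : IntermediateField.adjoin F {AdjoinRoot.root fF} = ⊤ :=
      IntermediateField.adjoin_eq_top_of_algebra _ _ (AdjoinRoot.adjoinRoot_eq_top)
    rw [h3] at h2
    exact Algebra.IsSeparable.of_algHom F _
      (IntermediateField.topEquiv (F := F) (E := AdjoinRoot fF)).symm.toAlgHom
  have hdF : fF.natDegree = f.natDegree := by
    rw [hfK.natDegree_map, hf.natDegree_map]
  refine ⟨AdjoinRoot fF, inferInstance, inferInstance, inferInstance,
    algebraMap F _ (ψ Polynomial.X), AdjoinRoot.root fF, ?_, ?_, ?_⟩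
  · have := AdjoinRoot.eval₂_root fF
    rw [Polynomial.eval₂_map, Polynomial.eval₂_map] at this
    rw [← this]
    congr 1
    ext
    · simp [φ, ψ]
      rfl
    · simp [φ, ψ]
  · intro b c hc
    let G : Polynomial (Polynomial KK) :=
      ∑ p ∈ Finset.range b ×ˢ Finset.range f.natDegree,
        Polynomial.monomial p.2 (Polynomial.monomial p.1 (c p))
    have hG : AdjoinRoot.mk fF (G.map ψ) = 0 := by
      rw [← hc]
      simp only [G, Polynomial.map_sum, map_sum]
      apply Finset.sum_congr rfl
      intro p _
      rw [Polynomial.map_monomial, ← Polynomial.C_mul_X_pow_eq_monomial,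
        ← Polynomial.C_mul_X_pow_eq_monomial]
      simp only [map_mul, map_pow, AdjoinRoot.mk_X, AdjoinRoot.mk_C]
      rw [mul_assoc]
      rfl
    have hG0 : G.map ψ = 0 := by
      by_contra hne
      have h1 := Polynomial.natDegree_le_of_dvd (AdjoinRoot.mk_eq_zero.1 hG) hne
      have h2 : G.degree < f.natDegree := by
        refine lt_of_le_of_lt (Polynomial.degree_sum_le _ _) ?_
        rw [Finset.sup_lt_iff (WithBot.bot_lt_coe _)]
        intro p hp
        refine lt_of_le_of_lt (Polynomial.degree_monomial_le _ _) ?_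
        have := (Finset.mem_product.1 hp).2
        exact_mod_cast Finset.mem_range.1 this
      have h3 : (G.map ψ).natDegree < f.natDegree := by
        rw [Polynomial.natDegree_lt_iff_degree_lt hne]
        exact lt_of_le_of_lt Polynomial.degree_map_le h2
      omega
    have hGz : G = 0 := Polynomial.map_injective _ hψ (by simpa using hG0)
    intro p hp
    have : (G.coeff p.2).coeff p.1 = c p := by
      simp only [G, Polynomial.finsetSum_coeff, Polynomial.coeff_monomial]
      rw [Finset.sum_eq_single p]
      · simp
      · intro r _ hr
        by_cases h2 : r.2 = p.2
        · have : r.1 ≠ p.1 := fun h1 => hr (Prod.ext h1 h2)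
          simp [h2, Polynomial.coeff_monomial, this]
        · simp [h2]
      · intro h; exact absurd hp h
    rw [← this, hGz]; simp
  · intro u hu
    exact const_ext (K := KK) (F := F) u hu

lemma exists_s (f : Polynomial (Polynomial (ZMod 2))) (hf : f.Monic)
    (hirr : Irreducible (f.map (Polynomial.mapRingHom (algebraMap (ZMod 2) KK))))
    (hder : Polynomial.derivative f ≠ 0) (b : ℕ) :
    ∃ s : ℕ, ∀ J : ℕ, ∀ c : (ℕ × ℕ) → (ℕ × ℕ) → ZMod 2,
      f ∣ ∑ p ∈ Finset.range b ×ˢ Finset.range f.natDegree,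
        ∑ r ∈ Finset.range J ×ˢ Finset.range f.natDegree,
          Polynomial.C (Polynomial.C (c p r) * Polynomial.X ^ (p.1 + 2 ^ s * r.1)) *
            Polynomial.X ^ (p.2 + 2 ^ s * r.2) →
      ∀ p ∈ Finset.range b ×ˢ Finset.range f.natDegree,
        ∀ r ∈ Finset.range J ×ˢ Finset.range f.natDegree, c p r = 0 := by
  classical
  obtain ⟨L, _, _, _, x, y, h0, hind, hK⟩ := exists_field f hf hirr hder
  obtain ⟨s, hs⟩ := indep_pow hK (fun p : ℕ × ℕ => x ^ p.1 * y ^ p.2) _ (hind b)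
  refine ⟨s, fun J c hdvd => ?_⟩
  let e : ZMod 2 →+* L := (algebraMap KK L).comp (algebraMap (ZMod 2) KK)
  have hz := Polynomial.eval₂_eq_zero_of_dvd_of_eval₂_eq_zero
    (Polynomial.eval₂RingHom e x) y hdvd h0
  have he : ∀ z : ZMod 2, e z ^ 2 ^ s = e z := by
    intro z
    rw [← map_pow]
    congr 1
    have := ZMod.pow_card_pow (p := 2) (n := s) z
    exact this
  have key := hs (fun p => ∑ r ∈ Finset.range J ×ˢ Finset.range f.natDegree,
      e (c p r) * (x ^ r.1 * y ^ r.2)) (by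
    rw [← hz, Polynomial.eval₂_finsetSum]
    apply Finset.sum_congr rfl
    intro p _
    rw [Polynomial.eval₂_finsetSum, sum_pow_char_pow, Finset.sum_mul]
    apply Finset.sum_congr rfl
    intro r _
    simp only [Polynomial.eval₂_mul, Polynomial.eval₂_C, Polynomial.eval₂_pow, Polynomial.eval₂_X,
      map_mul, map_pow, Polynomial.coe_eval₂RingHom, mul_pow, he]
    ring)
  intro p hp r hr
  have := hind J (fun r => algebraMap (ZMod 2) KK (c p r)) (key p hp) r hr
  simpa using this

lemma red_deg (f : Polynomial (Polynomial (ZMod 2))) (hf : f.Monic) (hd : 1 ≤ f.natDegree)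
    (e : ℕ) (he : ∀ i, (f.coeff i).natDegree ≤ e) (a : ℕ) :
    ∀ i, (((Polynomial.X ^ a : Polynomial (Polynomial (ZMod 2))) %ₘ f).coeff i).natDegree ≤ e * a := by
  induction a with
  | zero =>
    intro i
    rw [pow_zero, (Polynomial.modByMonic_eq_self_iff hf).2]
    · rw [Polynomial.coeff_one]; split_ifs <;> simp
    · rw [Polynomial.degree_one]
      exact Polynomial.natDegree_pos_iff_degree_pos.1 hd
  | succ a ih =>
    intro i
    set r := (Polynomial.X ^ a : Polynomial (Polynomial (ZMod 2))) %ₘ f with hr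
    have hrd : r.degree < f.degree := Polynomial.degree_modByMonic_lt _ hf
    have h1 : (Polynomial.X ^ (a + 1) : Polynomial (Polynomial (ZMod 2))) %ₘ f =
        Polynomial.X * r - Polynomial.C (r.coeff (f.natDegree - 1)) * f := by
      have h2 : (Polynomial.X ^ (a + 1) : Polynomial (Polynomial (ZMod 2))) %ₘ f =
          (Polynomial.X * r - Polynomial.C (r.coeff (f.natDegree - 1)) * f) %ₘ f := by
        apply Polynomial.modByMonic_eq_of_dvd_sub hf
        have h3 : f ∣ r - Polynomial.X ^ a := Polynomial.dvd_modByMonic_sub _ _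
        obtain ⟨w, hw⟩ := h3
        refine ⟨Polynomial.C (r.coeff (f.natDegree - 1)) - Polynomial.X * w, ?_⟩
        have : r = Polynomial.X ^ a + f * w := by rw [← hw]; ring
        calc _ = Polynomial.X ^ (a+1) - (Polynomial.X * (Polynomial.X ^ a + f * w) -
              Polynomial.C (r.coeff (f.natDegree - 1)) * f) := by rw [← this]
          _ = _ := by ring
      rw [h2, (Polynomial.modByMonic_eq_self_iff hf).2]
      rw [Polynomial.degree_eq_natDegree hf.ne_zero, Polynomial.degree_lt_iff_coeff_zero]
      intro m hm
      obtain ⟨m', rfl⟩ : ∃ m', m = m' + 1 := ⟨m - 1, by omega⟩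
      rw [Polynomial.coeff_sub, Polynomial.coeff_X_mul, Polynomial.coeff_C_mul]
      rcases Nat.lt_or_ge f.natDegree (m' + 1) with h | h
      · rw [Polynomial.coeff_eq_zero_of_natDegree_lt h,
          Polynomial.coeff_eq_zero_of_degree_lt (lt_of_lt_of_le hrd _)]
        · simp
        · rw [Polynomial.degree_eq_natDegree hf.ne_zero]; exact_mod_cast (by omega)
      · have h5 : f.natDegree = m' + 1 := le_antisymm hm h
        have h4 : f.coeff (m' + 1) = 1 := by rw [← h5]; exact hf.coeff_natDegree
        rw [h4, h5]; simp
    rw [h1, Polynomial.coeff_sub, Polynomial.coeff_C_mul]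
    refine (Polynomial.natDegree_sub_le _ _).trans (max_le ?_ ?_)
    · cases i with
      | zero => simp
      | succ i => rw [Polynomial.coeff_X_mul]; exact (ih i).trans (Nat.mul_le_mul_left _ (by omega))
    · refine Polynomial.natDegree_mul_le.trans ?_
      have := ih (f.natDegree - 1)
      have := he i
      rw [Nat.mul_succ]; omega

/-- the finite spanning set -/
noncomputable def UU {R : Type*} [CommRing R] [Algebra (ZMod 2) R] (x y Y : R) (d M : ℕ) :
    Submodule (ZMod 2) R :=
  Submodule.span (ZMod 2) (Set.range (fun q : Fin (M + 1) × Fin d × Fin (d - 1) =>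
    x ^ (q.1 : ℕ) * y ^ (q.2.1 : ℕ) * Y ^ (q.2.2 : ℕ)))

section span
variable {R : Type*} [CommRing R] [Algebra (ZMod 2) R] (x y Y : R)
  (f : Polynomial (Polynomial (ZMod 2)))

lemma UU_one (d M a b : ℕ) (ha : a < d) (hb : b < d - 1) (q : Polynomial (ZMod 2))
    (hq : q.natDegree ≤ M) : Polynomial.aeval x q * y ^ a * Y ^ b ∈ UU x y Y d M := by
  rw [Polynomial.aeval_eq_sum_range' (Nat.lt_succ_of_le hq), Finset.sum_mul, Finset.sum_mul]
  apply Submodule.sum_mem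
  intro i hi
  rw [smul_mul_assoc, smul_mul_assoc]
  apply Submodule.smul_mem
  apply Submodule.subset_span
  exact ⟨(⟨i, Finset.mem_range.1 hi⟩, ⟨a, ha⟩, ⟨b, hb⟩), rfl⟩

lemma UU_two (hf : f.Monic) (hd : 1 ≤ f.natDegree)
    (e : ℕ) (he : ∀ i, (f.coeff i).natDegree ≤ e)
    (hy : f.eval₂ (Polynomial.aeval x : Polynomial (ZMod 2) →ₐ[ZMod 2] R).toRingHom y = 0)
    (M m b M' : ℕ) (hb : b < f.natDegree - 1) (q : Polynomial (ZMod 2))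
    (hq : q.natDegree ≤ M) (hM : M + e * m ≤ M') :
    Polynomial.aeval x q * y ^ m * Y ^ b ∈ UU x y Y f.natDegree M' := by
  have h1 : y ^ m = ((Polynomial.X ^ m : Polynomial (Polynomial (ZMod 2))) %ₘ f).eval₂
      (Polynomial.aeval x : Polynomial (ZMod 2) →ₐ[ZMod 2] R).toRingHom y := by
    rw [Polynomial.eval₂_modByMonic_eq_self_of_root hy]
    simp
  have h2 : ((Polynomial.X ^ m : Polynomial (Polynomial (ZMod 2))) %ₘ f).natDegree <
      f.natDegree := by
    apply Polynomial.natDegree_modByMonic_lt _ hf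
    rintro rfl
    simp at hd
  rw [h1, Polynomial.eval₂_eq_sum_range' _ h2, Finset.mul_sum, Finset.sum_mul]
  apply Submodule.sum_mem
  intro i hi
  have := UU_one x y Y f.natDegree M' i b (Finset.mem_range.1 hi) hb
    (q * ((Polynomial.X ^ m : Polynomial (Polynomial (ZMod 2))) %ₘ f).coeff i) (by
      refine Polynomial.natDegree_mul_le.trans ?_
      have := red_deg f hf hd e he m i
      omega)
  rw [map_mul] at this
  rw [← mul_assoc]
  exact this

lemma UU_three (hf : f.Monic) (hd : 1 ≤ f.natDegree)
    (e : ℕ) (he : ∀ i, (f.coeff i).natDegree ≤ e)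
    (hy : f.eval₂ (Polynomial.aeval x : Polynomial (ZMod 2) →ₐ[ZMod 2] R).toRingHom y = 0)
    (hY : ∑ k ∈ Finset.range (f.natDegree + 1), Polynomial.aeval x (f.coeff k) *
      ∑ i ∈ Finset.range k, Y ^ i * y ^ (k - 1 - i) = 0)
    (M m b M' : ℕ) (hb : b < f.natDegree) (q : Polynomial (ZMod 2))
    (hq : q.natDegree ≤ M) (hM : M + e * (m + f.natDegree) + e ≤ M') :
    Polynomial.aeval x q * y ^ m * Y ^ b ∈ UU x y Y f.natDegree M' := by
  rcases Nat.lt_or_ge b (f.natDegree - 1) with h | h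
  · refine UU_two x y Y f hf hd e he hy M m b M' h q hq (le_trans ?_ hM)
    have := Nat.mul_le_mul_left e (Nat.le_add_right m f.natDegree)
    omega
  have hb' : b = f.natDegree - 1 := by omega
  subst hb'
  set d := f.natDegree with hdd
  have hmem : ∀ k i, i < d - 1 → k ≤ d → Polynomial.aeval x q * y ^ m *
      (Polynomial.aeval x (f.coeff k) * (Y ^ i * y ^ (k - 1 - i))) ∈ UU x y Y d M' := by
    intro k i hi hk
    have := UU_two x y Y f hf hd e he hy (M + e) (m + (k - 1 - i)) i M' hi (q * f.coeff k)
      (Polynomial.natDegree_mul_le.trans (add_le_add hq (he k))) (by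
        have : e * (m + (k - 1 - i)) ≤ e * (m + d) := Nat.mul_le_mul_left _ (by omega)
        omega)
    rw [map_mul] at this
    convert this using 1
    ring
  rw [Finset.sum_range_succ] at hY
  have hlead : f.coeff d = 1 := hf.coeff_natDegree
  rw [hlead, map_one, one_mul] at hY
  obtain ⟨d', hd'⟩ : ∃ d', d = d' + 1 := ⟨d - 1, by omega⟩
  have h2 : ∑ i ∈ Finset.range d, Y ^ i * y ^ (d - 1 - i) =
      ∑ i ∈ Finset.range (d - 1), Y ^ i * y ^ (d - 1 - i) + Y ^ (d - 1) := by
    rw [hd', Finset.sum_range_succ]; simp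
  rw [h2] at hY
  have h3 : Y ^ (d - 1) = - (∑ k ∈ Finset.range d, Polynomial.aeval x (f.coeff k) *
      ∑ i ∈ Finset.range k, Y ^ i * y ^ (k - 1 - i)) -
      ∑ i ∈ Finset.range (d - 1), Y ^ i * y ^ (d - 1 - i) := by
    linear_combination hY
  rw [h3, mul_sub, mul_neg]
  apply Submodule.sub_mem
  · apply Submodule.neg_mem
    rw [Finset.mul_sum]
    apply Submodule.sum_mem
    intro k hk
    rw [Finset.mul_sum, Finset.mul_sum]
    apply Submodule.sum_mem
    intro i hi
    have := Finset.mem_range.1 hk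
    have := Finset.mem_range.1 hi
    exact hmem k i (by omega) (by omega)
  · rw [Finset.mul_sum]
    apply Submodule.sum_mem
    intro i hi
    have := hmem d i (Finset.mem_range.1 hi) le_rfl
    rwa [hlead, map_one, one_mul] at this

lemma exists_rel (hf : f.Monic) (hd : 1 ≤ f.natDegree)
    (e : ℕ) (he : ∀ i, (f.coeff i).natDegree ≤ e)
    (hy : f.eval₂ (Polynomial.aeval x : Polynomial (ZMod 2) →ₐ[ZMod 2] R).toRingHom y = 0)
    (hY : ∑ k ∈ Finset.range (f.natDegree + 1), Polynomial.aeval x (f.coeff k) *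
      ∑ i ∈ Finset.range k, Y ^ i * y ^ (k - 1 - i) = 0)
    (b J P : ℕ)
    (hcard : (P * (b - 1) + J + e * (P * f.natDegree + f.natDegree) + e + 1) *
      (f.natDegree * (f.natDegree - 1)) < b * f.natDegree * (J * f.natDegree)) :
    ∃ c : (ℕ × ℕ) → (ℕ × ℕ) → ZMod 2,
      (∃ p ∈ Finset.range b ×ˢ Finset.range f.natDegree,
        ∃ r ∈ Finset.range J ×ˢ Finset.range f.natDegree, c p r ≠ 0) ∧
      ∑ p ∈ Finset.range b ×ˢ Finset.range f.natDegree,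
        ∑ r ∈ Finset.range J ×ˢ Finset.range f.natDegree,
          c p r • (x ^ (P * p.1 + r.1) * y ^ (P * p.2) * Y ^ r.2) = 0 := by
  classical
  set d := f.natDegree with hdd
  set S := (Finset.range b ×ˢ Finset.range d) ×ˢ (Finset.range J ×ˢ Finset.range d) with hS
  let v : S → R := fun q =>
    x ^ (P * q.1.1.1 + q.1.2.1) * y ^ (P * q.1.1.2) * Y ^ q.1.2.2
  have hnot : ¬ LinearIndependent (ZMod 2) v := by
    intro hli
    have h1 : Set.range v ≤ (UU x y Y d (P * (b - 1) + J + e * (P * d + d) + e) : Set R) := by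
      rintro _ ⟨⟨⟨⟨i, l⟩, ⟨j, k⟩⟩, hq⟩, rfl⟩
      simp only [hS, Finset.mem_product, Finset.mem_range] at hq
      obtain ⟨⟨hi, hl⟩, hj, hk⟩ := hq
      have := UU_three x y Y f hf hd e he hy hY (P * i + j) (P * l) k
        (P * (b - 1) + J + e * (P * d + d) + e) hk (Polynomial.X ^ (P * i + j))
        (Polynomial.natDegree_X_pow_le _) (by
          have h1 : P * i ≤ P * (b - 1) := Nat.mul_le_mul_left _ (by omega)
          have h2 : e * (P * l + d) ≤ e * (P * d + d) :=
            Nat.mul_le_mul_left _ (Nat.add_le_add_right (Nat.mul_le_mul_left _ hl.le) _)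
          rw [← hdd]
          omega)
      simpa [v] using this
    have h2 := linearIndependent_le_span' v hli _ h1
    have h3 : Fintype.card S = b * d * (J * d) := by
      simp [hS]
    have h4 : Fintype.card (Set.range (fun q : Fin ((P * (b - 1) + J + e * (P * d + d) + e) + 1) ×
        Fin d × Fin (d - 1) => x ^ (q.1 : ℕ) * y ^ (q.2.1 : ℕ) * Y ^ (q.2.2 : ℕ))) ≤
        (P * (b - 1) + J + e * (P * d + d) + e + 1) * (d * (d - 1)) := by
      refine (Fintype.card_range_le _).trans ?_
      simp
    rw [Cardinal.mk_fintype, h3] at h2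
    have h5 := Nat.cast_le.1 h2
    have h6 := h5.trans (le_trans (le_of_eq (Fintype.card_congr (Equiv.refl _))) h4)
    omega
  rw [Fintype.not_linearIndependent_iff] at hnot
  obtain ⟨g, hg, q, hq⟩ := hnot
  refine ⟨fun p r => if h : (p, r) ∈ S then g ⟨(p, r), h⟩ else 0, ?_, ?_⟩
  · obtain ⟨⟨p, r⟩, hmem⟩ := q
    refine ⟨p, (Finset.mem_product.1 hmem).1, r, (Finset.mem_product.1 hmem).2, ?_⟩
    simpa [hmem] using hq
  · rw [← Finset.sum_product' (f := fun p r => (if h : (p, r) ∈ S then g ⟨(p, r), h⟩ else 0) •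
      (x ^ (P * p.1 + r.1) * y ^ (P * p.2) * Y ^ r.2)), ← hg, ← hS, ← Finset.sum_coe_sort S]
    apply Finset.sum_congr rfl
    rintro ⟨q, hq⟩ _
    simp [hq, v]

end span

lemma exists_disc (f : Polynomial (Polynomial (ZMod 2))) (hf : f.Monic)
    (hirr : Irreducible (f.map (Polynomial.mapRingHom (algebraMap (ZMod 2) KK))))
    (hder : Polynomial.derivative f ≠ 0) :
    ∃ Δ : Polynomial (ZMod 2), Δ ≠ 0 ∧ ∀ x0 : KK, Polynomial.aeval x0 Δ ≠ 0 →
      (f.map (Polynomial.aeval x0 : Polynomial (ZMod 2) →ₐ[ZMod 2] KK).toRingHom).Separable := by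
  have hirr' : Irreducible f := Polynomial.Monic.irreducible_of_irreducible_map _ f hf hirr
  let F := FractionRing (Polynomial (ZMod 2))
  let ψ := algebraMap (Polynomial (ZMod 2)) F
  have hψ : Function.Injective ψ := IsFractionRing.injective _ _
  have hirrF : Irreducible (f.map ψ) :=
    (Polynomial.Monic.irreducible_iff_irreducible_map_fraction_map hf).1 hirr'
  have hderF : Polynomial.derivative (f.map ψ) ≠ 0 := by
    rw [Polynomial.derivative_map]
    intro h
    apply hder
    apply Polynomial.map_injective _ hψ
    simpa using h
  have hsep : (f.map ψ).Separable := (Polynomial.separable_iff_derivative_ne_zero hirrF).2 hderF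
  have hd : f.natDegree ≠ 0 := by
    intro h
    rw [hf.natDegree_eq_zero] at h
    exact hirr'.1 (h ▸ isUnit_one)
  refine ⟨Polynomial.resultant f (Polynomial.derivative f), ?_, ?_⟩
  · intro h
    have h1 := Polynomial.resultant_ne_zero _ _ hsep
    apply h1
    rw [Polynomial.derivative_map, Polynomial.natDegree_map_eq_of_injective hψ,
      Polynomial.natDegree_map_eq_of_injective hψ, Polynomial.resultant_map_map, h, map_zero]
  · intro x0 hx0
    obtain ⟨p, q, -, -, hpq⟩ := Polynomial.exists_mul_add_mul_eq_C_resultant f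
      (Polynomial.derivative f) (m := f.natDegree) (n := (Polynomial.derivative f).natDegree) le_rfl le_rfl (by left; exact hd)
    let η := (Polynomial.aeval x0 : Polynomial (ZMod 2) →ₐ[ZMod 2] KK).toRingHom
    have := congrArg (Polynomial.map η) hpq
    simp only [Polynomial.map_add, Polynomial.map_mul, Polynomial.map_C] at this
    refine ⟨p.map η * Polynomial.C (Polynomial.aeval x0 (Polynomial.resultant f (Polynomial.derivative f)))⁻¹, q.map η * Polynomial.C (Polynomial.aeval x0 (Polynomial.resultant f (Polynomial.derivative f)))⁻¹, ?_⟩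
    rw [Polynomial.derivative_map]
    calc _ = (f.map η * p.map η + (Polynomial.derivative f).map η * q.map η) * Polynomial.C (Polynomial.aeval x0 (Polynomial.resultant f (Polynomial.derivative f)))⁻¹ := by ring
      _ = 1 := by
        rw [this, ← Polynomial.C_mul]
        rw [show η (Polynomial.resultant f (Polynomial.derivative f)) = Polynomial.aeval x0 (Polynomial.resultant f (Polynomial.derivative f)) from rfl]
        rw [mul_inv_cancel₀ hx0, Polynomial.C_1]

lemma galois_emb (n : ℕ) (hn : n ≠ 0) :
    ∃ ι : GaloisField 2 n →ₐ[ZMod 2] KK, (∀ a, (ι a) ^ 2 ^ n = ι a) ∧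
      ∀ y : KK, y ^ 2 ^ n = y → ∃ a, ι a = y := by
  classical
  let ι : GaloisField 2 n →ₐ[ZMod 2] KK := IsAlgClosed.lift
  have hc : Nat.card (GaloisField 2 n) = 2 ^ n := GaloisField.card 2 n hn
  have h1 : ∀ a : GaloisField 2 n, a ^ 2 ^ n = a := by
    intro a
    let _ := Fintype.ofFinite (GaloisField 2 n)
    have := FiniteField.pow_card a
    rwa [← Nat.card_eq_fintype_card, hc] at this
  have h2 : ∀ a, (ι a) ^ 2 ^ n = ι a := fun a => by rw [← map_pow, h1]
  refine ⟨ι, h2, ?_⟩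
  intro y hy
  let _ := Fintype.ofFinite (GaloisField 2 n)
  by_contra hne
  push Not at hne
  let s : Finset KK := insert y (Finset.univ.image ι)
  have hs : s.card = 2 ^ n + 1 := by
    rw [Finset.card_insert_of_notMem (by simpa using hne),
      Finset.card_image_of_injective _ (show Function.Injective ι from ι.toRingHom.injective), Finset.card_univ, ← Nat.card_eq_fintype_card, hc]
  have h2n : 1 < 2 ^ n := Nat.one_lt_two_pow hn
  have := Polynomial.eq_zero_of_natDegree_lt_card_of_eval_eq_zero'
    (Polynomial.X ^ 2 ^ n - Polynomial.X : Polynomial KK) s (by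
      intro i hi
      rcases Finset.mem_insert.1 hi with rfl | hi
      · simp [hy]
      · obtain ⟨a, -, rfl⟩ := Finset.mem_image.1 hi
        simp [h2]) (by
      rw [FiniteField.X_pow_card_sub_X_natDegree_eq _ h2n, hs]; omega)
  exact FiniteField.X_pow_card_sub_X_ne_zero _ h2n this

lemma galois_set (n : ℕ) (hn : n ≠ 0) :
    ∃ E : Finset KK, E.card = 2 ^ n ∧ ∀ x ∈ E, x ^ 2 ^ n = x := by
  classical
  obtain ⟨ι, h, -⟩ := galois_emb n hn
  let _ := Fintype.ofFinite (GaloisField 2 n)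
  refine ⟨Finset.univ.image ι, ?_, ?_⟩
  · rw [Finset.card_image_of_injective _ (show Function.Injective ι from ι.toRingHom.injective), Finset.card_univ, ← Nat.card_eq_fintype_card,
      GaloisField.card 2 n hn]
  · intro x hx
    obtain ⟨a, -, rfl⟩ := Finset.mem_image.1 hx
    exact h a

lemma arith (e d b P J D Q C1 : ℕ) (hd : 1 ≤ d) (hb : b = e * d ^ 2 + 1)
    (hC : C1 = D + b + 2 * e * d + 1) (hP : b * d * C1 + d * (e * d + e + 1) + C1 + 1 ≤ P)
    (hJ : J = P - C1) (hQ : 1 ≤ Q) :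
    (P * (b - 1) + J + e * (P * d + d) + e + 1) * (d * (d - 1)) < b * d * (J * d) ∧
    b + Q * J + e * (d + Q * d) + D < P * Q := by
  obtain ⟨K, rfl⟩ : ∃ J', P = J' + C1 := ⟨P - C1, by omega⟩
  obtain ⟨d, rfl⟩ : ∃ d', d = d' + 1 := ⟨d - 1, by omega⟩
  have hJK : J = K := by omega
  subst hJK
  have hJ2 : b * (d + 1) * C1 + (d + 1) * (e * (d + 1) + e + 1) + 1 ≤ J := by omega
  clear hJ hP hd
  constructor
  · have hb1 : b - 1 = e * (d + 1) ^ 2 := by omega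
    rw [hb1]
    have h0 : d + 1 - 1 = d := rfl
    rw [h0]
    clear hb1 h0 hC
    subst hb
    have h2 : ((d + 1) * C1) * (e * (d + 1)) ≤ J * (e * (d + 1)) := by
      apply Nat.mul_le_mul_right
      refine le_trans ?_ hJ2
      have : 1 * ((d + 1) * C1) ≤ (e * (d + 1) ^ 2 + 1) * ((d + 1) * C1) :=
        Nat.mul_le_mul_right _ (by omega)
      have h4 : 0 ≤ (d + 1) * (e * (d + 1) + e + 1) + 1 := Nat.zero_le _
      calc (d + 1) * C1 = 1 * ((d + 1) * C1) := (one_mul _).symm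
        _ ≤ (e * (d + 1) ^ 2 + 1) * ((d + 1) * C1) := this
        _ = (e * (d + 1) ^ 2 + 1) * (d + 1) * C1 := (mul_assoc _ _ _).symm
        _ ≤ _ := by omega
    have key : d * (C1 * (e * (d + 1) ^ 2 + e * (d + 1)) + e * (d + 1) + e + 1)
        < J * (e * (d + 1) + 1) := by
      have h3 : 0 ≤ C1 * (e * (d + 1) ^ 2 + e * (d + 1)) + e * (d + 1) + e + 1 := Nat.zero_le _
      nlinarith [Nat.zero_le C1]
    have := Nat.mul_lt_mul_of_pos_right key (Nat.succ_pos d)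
    nlinarith [this]
  · obtain ⟨Q, rfl⟩ : ∃ Q', Q = Q' + 1 := ⟨Q - 1, by omega⟩
    subst hC
    have h1 : 0 ≤ D * Q := Nat.zero_le _
    have h2 : 0 ≤ b * Q := Nat.zero_le _
    have h3 : 0 ≤ e * (d + 1) * Q := Nat.zero_le _
    nlinarith

lemma psi_pow (b d J k Q : ℕ) (c : ℕ × ℕ → ℕ × ℕ → ZMod 2) (x0 y0 : KK)
    (hx : x0 ^ (2 ^ k * Q) = x0) :
    (∑ p ∈ Finset.range b ×ˢ Finset.range d, ∑ r ∈ Finset.range J ×ˢ Finset.range d,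
      (algebraMap (ZMod 2) KK (c p r) * x0 ^ (p.1 + Q * r.1)) * y0 ^ (p.2 + Q * r.2)) ^ 2 ^ k =
    ∑ p ∈ Finset.range b ×ˢ Finset.range d, ∑ r ∈ Finset.range J ×ˢ Finset.range d,
      c p r • (x0 ^ (2 ^ k * p.1 + r.1) * y0 ^ (2 ^ k * p.2) * (y0 ^ (2 ^ k * Q)) ^ r.2) := by
  have hF : Fact (Nat.Prime 2) := ⟨Nat.prime_two⟩
  rw [sum_pow_char_pow]
  refine Finset.sum_congr rfl fun p _ => ?_
  rw [sum_pow_char_pow]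
  refine Finset.sum_congr rfl fun r _ => ?_
  rw [mul_pow, mul_pow, ← map_pow, ZMod.pow_card_pow, Algebra.smul_def, mul_assoc]
  congr 1
  have h1 : (x0 ^ (p.1 + Q * r.1)) ^ 2 ^ k = x0 ^ (2 ^ k * p.1 + r.1) := by
    rw [← pow_mul, pow_add]
    rw [show (p.1 + Q * r.1) * 2 ^ k = 2 ^ k * p.1 + (2 ^ k * Q) * r.1 by ring, pow_add, pow_mul _ (2 ^ k * Q), hx]
  rw [h1, mul_assoc]
  congr 1
  rw [← pow_mul, ← pow_mul, ← pow_add]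
  congr 1
  ring

lemma psi_deg (f : Polynomial (Polynomial (ZMod 2))) (hf : f.Monic) (hd : 1 ≤ f.natDegree)
    (e : ℕ) (he : ∀ i, (f.coeff i).natDegree ≤ e) (b J Q : ℕ)
    (c : ℕ × ℕ → ℕ × ℕ → ZMod 2) (l : ℕ) :
    (((∑ p ∈ Finset.range b ×ˢ Finset.range f.natDegree,
      ∑ r ∈ Finset.range J ×ˢ Finset.range f.natDegree,
      Polynomial.C (Polynomial.C (c p r) * Polynomial.X ^ (p.1 + Q * r.1)) *
        Polynomial.X ^ (p.2 + Q * r.2)) %ₘ f).coeff l).natDegree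
      ≤ b + Q * J + e * (f.natDegree + Q * f.natDegree) := by
  have : (∑ p ∈ Finset.range b ×ˢ Finset.range f.natDegree,
      ∑ r ∈ Finset.range J ×ˢ Finset.range f.natDegree,
      Polynomial.C (Polynomial.C (c p r) * Polynomial.X ^ (p.1 + Q * r.1)) *
        Polynomial.X ^ (p.2 + Q * r.2)) %ₘ f = ∑ p ∈ Finset.range b ×ˢ Finset.range f.natDegree,
      ∑ r ∈ Finset.range J ×ˢ Finset.range f.natDegree,
      (Polynomial.C (c p r) * Polynomial.X ^ (p.1 + Q * r.1)) •
        ((Polynomial.X ^ (p.2 + Q * r.2) : Polynomial (Polynomial (ZMod 2))) %ₘ f) := by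
    simp only [← Polynomial.modByMonicHom_apply, map_sum, ← Polynomial.smul_eq_C_mul, map_smul]
  rw [this, Polynomial.finsetSum_coeff]
  refine Polynomial.natDegree_sum_le_of_forall_le _ _ fun p hp => ?_
  rw [Polynomial.finsetSum_coeff]
  refine Polynomial.natDegree_sum_le_of_forall_le _ _ fun r hr => ?_
  rw [Polynomial.coeff_smul, smul_eq_mul]
  have h1 := red_deg f hf hd e he (p.2 + Q * r.2) l
  simp only [Finset.mem_product, Finset.mem_range] at hp hr
  have h2 : p.1 + Q * r.1 ≤ b + Q * J :=
    Nat.add_le_add hp.1.le (Nat.mul_le_mul_left _ hr.1.le)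
  have h3 : p.2 + Q * r.2 ≤ f.natDegree + Q * f.natDegree :=
    Nat.add_le_add hp.2.le (Nat.mul_le_mul_left _ hr.2.le)
  refine Polynomial.natDegree_mul_le.trans (Nat.add_le_add ?_ (h1.trans (Nat.mul_le_mul_left _ h3)))
  exact (Polynomial.natDegree_C_mul_X_pow_le _ _).trans h2

lemma W_vanish (f W : Polynomial (Polynomial (ZMod 2))) (hf : f.Monic) (hW : W.degree < f.degree)
    (M : ℕ) (hM : ∀ l, (W.coeff l).natDegree ≤ M) (G : Polynomial (ZMod 2)) (hG : G ≠ 0)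
    (E : Finset KK) (hE : M + G.natDegree < E.card)
    (hsep : ∀ x0 ∈ E, Polynomial.aeval x0 G ≠ 0 →
      (f.map (Polynomial.aeval x0 : Polynomial (ZMod 2) →ₐ[ZMod 2] KK).toRingHom).Separable)
    (hv : ∀ x0 ∈ E, Polynomial.aeval x0 G ≠ 0 → ∀ y0 : KK,
      f.eval₂ (Polynomial.aeval x0 : Polynomial (ZMod 2) →ₐ[ZMod 2] KK).toRingHom y0 = 0 →
      W.eval₂ (Polynomial.aeval x0 : Polynomial (ZMod 2) →ₐ[ZMod 2] KK).toRingHom y0 = 0) :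
    W = 0 := by
  classical
  have h1 : ∀ x0 ∈ E, Polynomial.aeval x0 G ≠ 0 →
      W.map (Polynomial.aeval x0 : Polynomial (ZMod 2) →ₐ[ZMod 2] KK).toRingHom = 0 := by
    intro x0 hx hx0
    set η := (Polynomial.aeval x0 : Polynomial (ZMod 2) →ₐ[ZMod 2] KK).toRingHom with hη
    have hs := hsep x0 hx hx0
    have hfm : (f.map η).Monic := hf.map η
    have hcard : (f.map η).roots.toFinset.card = f.natDegree := by
      rw [Multiset.toFinset_card_of_nodup (Polynomial.nodup_roots hs),
        ← (IsAlgClosed.splits (f.map η)).natDegree_eq_card_roots, hf.natDegree_map]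
    by_contra hne
    have hlt : (W.map η).natDegree < f.natDegree := by
      rw [Polynomial.natDegree_lt_iff_degree_lt hne]
      refine lt_of_le_of_lt Polynomial.degree_map_le ?_
      rwa [← Polynomial.degree_eq_natDegree hf.ne_zero]
    refine hne (Polynomial.eq_zero_of_natDegree_lt_card_of_eval_eq_zero' _
      (f.map η).roots.toFinset ?_ (by rw [hcard]; exact hlt))
    intro y hy
    rw [Multiset.mem_toFinset, Polynomial.mem_roots hfm.ne_zero, Polynomial.IsRoot,
      Polynomial.eval_map] at hy
    rw [Polynomial.eval_map]
    exact hv x0 hx hx0 y hy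
  ext1 l
  rw [Polynomial.coeff_zero]
  have hinj : Function.Injective (algebraMap (ZMod 2) KK) := (algebraMap (ZMod 2) KK).injective
  have hprod : W.coeff l * G = 0 := by
    apply Polynomial.map_injective _ hinj
    rw [Polynomial.map_zero]
    refine Polynomial.eq_zero_of_natDegree_lt_card_of_eval_eq_zero' _ E ?_ ?_
    · intro x0 hx
      rw [Polynomial.eval_map, ← Polynomial.aeval_def, map_mul]
      by_cases h : Polynomial.aeval x0 G = 0
      · rw [h, mul_zero]
      · have := congrArg (fun w => Polynomial.coeff w l) (h1 x0 hx h)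
        simp only [Polynomial.coeff_map, Polynomial.coeff_zero] at this
        rw [show Polynomial.aeval x0 (W.coeff l) = 0 from this, zero_mul]
    · refine lt_of_le_of_lt (Polynomial.natDegree_map_le.trans Polynomial.natDegree_mul_le) ?_
      exact lt_of_le_of_lt (Nat.add_le_add_right (hM l) _) hE
  exact (mul_eq_zero.1 hprod).resolve_right hG

lemma hY_point (f : Polynomial (Polynomial (ZMod 2))) (n : ℕ) (x0 y0 : KK) (hx : x0 ^ 2 ^ n = x0)
    (hy : f.eval₂ (Polynomial.aeval x0 : Polynomial (ZMod 2) →ₐ[ZMod 2] KK).toRingHom y0 = 0)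
    (hne : y0 ^ 2 ^ n ≠ y0) :
    ∑ k ∈ Finset.range (f.natDegree + 1), Polynomial.aeval x0 (f.coeff k) *
      ∑ i ∈ Finset.range k, (y0 ^ 2 ^ n) ^ i * y0 ^ (k - 1 - i) = 0 := by
  have hF : Fact (Nat.Prime 2) := ⟨Nat.prime_two⟩
  have h1 : f.eval₂ (Polynomial.aeval x0 : Polynomial (ZMod 2) →ₐ[ZMod 2] KK).toRingHom
      (y0 ^ 2 ^ n) = 0 := by
    have := congrArg (iterateFrobenius KK 2 n) hy
    rw [Polynomial.hom_eval₂, map_zero, iterateFrobenius_def] at this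
    convert this using 2
    ext a
    · simp [iterateFrobenius_def, ← map_pow, ZMod.pow_card_pow]
    · simp [iterateFrobenius_def, hx]
  have h2 : (y0 ^ 2 ^ n - y0) ≠ 0 := sub_ne_zero.2 hne
  refine (mul_eq_zero.1 (?_ : _ * (y0 ^ 2 ^ n - y0) = 0)).resolve_right h2
  rw [Finset.sum_mul]
  rw [Polynomial.eval₂_eq_sum_range] at h1 hy
  calc _ = ∑ k ∈ Finset.range (f.natDegree + 1),
        (Polynomial.aeval x0 (f.coeff k) * (y0 ^ 2 ^ n) ^ k - Polynomial.aeval x0 (f.coeff k) * y0 ^ k) := by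
        refine Finset.sum_congr rfl fun k _ => ?_
        rw [mul_assoc, (Commute.all _ _).geom_sum₂_mul, mul_sub]
    _ = 0 := by
      rw [Finset.sum_sub_distrib]
      exact (congrArg₂ (· - ·) h1 hy).trans (sub_zero 0)

lemma core_points (f : Polynomial (Polynomial (ZMod 2))) (hf : f.Monic)
    (hirr : Irreducible (f.map (Polynomial.mapRingHom (algebraMap (ZMod 2) KK))))
    (hder : Polynomial.derivative f ≠ 0) (B : Polynomial (ZMod 2)) (hB : B ≠ 0) :
    ∃ N, ∀ n ≥ N, ∃ x0 y0 : KK, x0 ^ 2 ^ n = x0 ∧ y0 ^ 2 ^ n = y0 ∧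
      Polynomial.aeval x0 B ≠ 0 ∧
      f.eval₂ (Polynomial.aeval x0 : Polynomial (ZMod 2) →ₐ[ZMod 2] KK).toRingHom y0 = 0 := by
  classical
  have hirr' : Irreducible f := Polynomial.Monic.irreducible_of_irreducible_map _ f hf hirr
  have hd : 1 ≤ f.natDegree := by
    rw [Nat.one_le_iff_ne_zero]
    intro h
    rw [hf.natDegree_eq_zero] at h
    exact hirr'.1 (h ▸ isUnit_one)
  obtain ⟨e, he⟩ : ∃ e, ∀ i, (f.coeff i).natDegree ≤ e := by
    refine ⟨f.support.sup fun i => (f.coeff i).natDegree, fun i => ?_⟩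
    by_cases hi : i ∈ f.support
    · exact Finset.le_sup (f := fun i => (f.coeff i).natDegree) hi
    · rw [Polynomial.notMem_support_iff.1 hi]; simp
  obtain ⟨b, hb⟩ : ∃ b, b = e * f.natDegree ^ 2 + 1 := ⟨_, rfl⟩
  obtain ⟨s, hs⟩ := exists_s f hf hirr hder b
  obtain ⟨Δ, hΔ, hsep⟩ := exists_disc f hf hirr hder
  obtain ⟨G, hG⟩ : ∃ G, G = B * Δ := ⟨_, rfl⟩
  have hG0 : G ≠ 0 := hG ▸ mul_ne_zero hB hΔ
  obtain ⟨C1, hC1⟩ : ∃ C1, C1 = G.natDegree + b + 2 * e * f.natDegree + 1 := ⟨_, rfl⟩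
  refine ⟨s + (b * f.natDegree * C1 + f.natDegree * (e * f.natDegree + e + 1) + C1 + 1), fun n hn => ?_⟩
  obtain ⟨k, rfl⟩ : ∃ k, n = k + s := ⟨n - s, by omega⟩
  have hk : b * f.natDegree * C1 + f.natDegree * (e * f.natDegree + e + 1) + C1 + 1 ≤ k := by omega
  obtain ⟨J, hJ⟩ : ∃ J, J = 2 ^ k - C1 := ⟨_, rfl⟩
  obtain ⟨ha1, ha2⟩ := arith e f.natDegree b (2 ^ k) J G.natDegree (2 ^ s) C1 hd hb hC1
    (hk.trans Nat.lt_two_pow_self.le) hJ Nat.one_le_two_pow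
  by_contra hno
  push Not at hno
  let T := {pt : KK × KK // pt.1 ^ 2 ^ (k + s) = pt.1 ∧ Polynomial.aeval pt.1 G ≠ 0 ∧
    f.eval₂ (Polynomial.aeval pt.1 : Polynomial (ZMod 2) →ₐ[ZMod 2] KK).toRingHom pt.2 = 0}
  let x : T → KK := fun pt => pt.1.1
  let y : T → KK := fun pt => pt.1.2
  have hae : ∀ (pt : T) (a : Polynomial (ZMod 2)), (Polynomial.aeval x a) pt = Polynomial.aeval pt.1.1 a := by
    intro pt a
    have := Polynomial.aeval_algHom_apply (Pi.evalAlgHom (ZMod 2) (fun _ : T => KK) pt) x a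
    exact this.symm
  have hGB : ∀ x0 : KK, Polynomial.aeval x0 G ≠ 0 → Polynomial.aeval x0 B ≠ 0 ∧ Polynomial.aeval x0 Δ ≠ 0 := by
    intro x0 h
    rw [hG, map_mul] at h
    exact ⟨left_ne_zero_of_mul h, right_ne_zero_of_mul h⟩
  have hy : f.eval₂ (Polynomial.aeval x : Polynomial (ZMod 2) →ₐ[ZMod 2] (T → KK)).toRingHom y = 0 := by
    funext pt
    have h1 := Polynomial.hom_eval₂ f (Polynomial.aeval x : Polynomial (ZMod 2) →ₐ[ZMod 2] (T → KK)).toRingHom (Pi.evalRingHom (fun _ : T => KK) pt) y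
    refine h1.trans ?_
    rw [show (Pi.evalRingHom (fun _ : T => KK) pt).comp (Polynomial.aeval x : Polynomial (ZMod 2) →ₐ[ZMod 2] (T → KK)).toRingHom = (Polynomial.aeval pt.1.1 : Polynomial (ZMod 2) →ₐ[ZMod 2] KK).toRingHom from RingHom.ext fun a => hae pt a]
    exact pt.2.2.2
  have hY : ∑ j ∈ Finset.range (f.natDegree + 1), Polynomial.aeval x (f.coeff j) *
      ∑ i ∈ Finset.range j, (y ^ 2 ^ (k + s)) ^ i * y ^ (j - 1 - i) = 0 := by
    funext pt
    have h1 := hY_point f (k + s) pt.1.1 pt.1.2 pt.2.1 pt.2.2.2 (fun h =>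
      hno pt.1.1 pt.1.2 pt.2.1 h (hGB _ pt.2.2.1).1 pt.2.2.2)
    simp only [Finset.sum_apply, Pi.mul_apply, Pi.pow_apply, hae, Pi.zero_apply]
    exact h1
  obtain ⟨c, ⟨p, hp, r, hr, hpr⟩, hc⟩ := exists_rel x y (y ^ 2 ^ (k + s)) f hf hd e he hy hY b J (2 ^ k) ha1
  apply hpr
  refine hs J c ?_ p hp r hr
  rw [← Polynomial.modByMonic_eq_zero_iff_dvd hf]
  have hdeg := psi_deg f hf hd e he b J (2 ^ s) c
  obtain ⟨E, hE, hE2⟩ := galois_set (k + s) (by omega)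
  refine W_vanish f _ hf (Polynomial.degree_modByMonic_lt _ hf) _ hdeg G hG0 E ?_ ?_ ?_
  · rw [hE, pow_add]; exact ha2
  · intro x0 _ hx0
    exact hsep x0 (hGB x0 hx0).2
  · intro x0 hx0 hx0G y0 hy0
    have hmod := Polynomial.modByMonic_add_div (∑ p ∈ Finset.range b ×ˢ Finset.range f.natDegree,
      ∑ r ∈ Finset.range J ×ˢ Finset.range f.natDegree,
      Polynomial.C (Polynomial.C (c p r) * Polynomial.X ^ (p.1 + 2 ^ s * r.1)) *
        Polynomial.X ^ (p.2 + 2 ^ s * r.2)) f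
    have h1 := congrArg (Polynomial.eval₂ (Polynomial.aeval x0 : Polynomial (ZMod 2) →ₐ[ZMod 2] KK).toRingHom y0) hmod
    rw [Polynomial.eval₂_add, Polynomial.eval₂_mul, hy0, zero_mul, add_zero] at h1
    rw [h1]
    have h2 := congrFun hc ⟨(x0, y0), hE2 x0 hx0, hx0G, hy0⟩
    simp only [Finset.sum_apply, Pi.smul_apply, Pi.mul_apply, Pi.pow_apply, Pi.zero_apply] at h2
    have h3 := psi_pow b f.natDegree J k (2 ^ s) c x0 y0 (by rw [← pow_add]; exact hE2 x0 hx0)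
    have h4 := eq_zero_of_pow_eq_zero (h3.trans (by rw [← pow_add]; exact h2))
    simp only [Polynomial.eval₂_finsetSum, Polynomial.eval₂_mul, Polynomial.eval₂_C,
      Polynomial.eval₂_X_pow]
    rw [← h4]
    refine Finset.sum_congr rfl fun p _ => Finset.sum_congr rfl fun r _ => ?_
    simp

lemma curve_points (f : Polynomial (Polynomial (ZMod 2))) (hf : f.Monic)
    (hirr : Irreducible (f.map (Polynomial.mapRingHom (algebraMap (ZMod 2) KK))))
    (hder : Polynomial.derivative f ≠ 0) (B : Polynomial (ZMod 2)) (hB : B ≠ 0) :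
    ∃ N, ∀ n ≥ N, ∃ x0 y0 : GaloisField 2 n,
      Polynomial.aeval x0 B ≠ 0 ∧
      f.eval₂ (Polynomial.aeval x0 : Polynomial (ZMod 2) →ₐ[ZMod 2] GaloisField 2 n).toRingHom y0 = 0 := by
  obtain ⟨N, hN⟩ := core_points f hf hirr hder B hB
  refine ⟨N + 1, fun n hn => ?_⟩
  obtain ⟨x0, y0, hx, hy, h1, h2⟩ := hN n (by omega)
  obtain ⟨ι, -, hι⟩ := galois_emb n (by omega)
  obtain ⟨a, rfl⟩ := hι x0 hx
  obtain ⟨c, rfl⟩ := hι y0 hy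
  refine ⟨a, c, ?_, ?_⟩
  · intro h
    apply h1
    rw [Polynomial.aeval_algHom_apply, h, map_zero]
  · apply ι.toRingHom.injective
    rw [Polynomial.hom_eval₂, map_zero]
    rw [← h2]
    congr 1
    apply RingHom.ext
    intro w
    exact (Polynomial.aeval_algHom_apply ι a w).symm

lemma hom_ext3 {S : Type*} [CommRing S] (a b : MvPolynomial (Fin 3) (ZMod 2) →+* S)
    (h0 : a (X 0) = b (X 0)) (h1 : a (X 1) = b (X 1)) (h2 : a (X 2) = b (X 2)) (q) : a q = b q := by
  have : a = b := by
    apply MvPolynomial.ringHom_ext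
    · intro r
      exact congrFun (congrArg DFunLike.coe (Subsingleton.elim
        (a.comp MvPolynomial.C) (b.comp MvPolynomial.C))) r
    · intro j
      fin_cases j
      · exact h0
      · exact h1
      · exact h2
  rw [this]

noncomputable def PhiScale : MvPolynomial (Fin 3) (ZMod 2) →ₐ[ZMod 2]
    Polynomial (MvPolynomial (Fin 3) (ZMod 2)) :=
  MvPolynomial.aeval (fun i => Polynomial.X * Polynomial.C (X i))

lemma phiScale_eval (S : Type*) [CommRing S] (i : ZMod 2 →+* S) (a : Fin 3 → S) (l : S)
    (p : MvPolynomial (Fin 3) (ZMod 2)) :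
    (PhiScale p).eval₂ (MvPolynomial.eval₂Hom i a) l = MvPolynomial.eval₂ i (fun j => l * a j) p := by
  have : (Polynomial.eval₂RingHom (MvPolynomial.eval₂Hom i a) l).comp PhiScale.toRingHom =
      MvPolynomial.eval₂Hom i (fun j => l * a j) := by
    apply MvPolynomial.ringHom_ext
    · intro r
      exact congrFun (congrArg DFunLike.coe (Subsingleton.elim
        (((Polynomial.eval₂RingHom (MvPolynomial.eval₂Hom i a) l).comp PhiScale.toRingHom).comp MvPolynomial.C)
        ((MvPolynomial.eval₂Hom i (fun j => l * a j)).comp MvPolynomial.C))) r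
    · intro j
      simp [PhiScale]
      exact mul_comm _ _
  exact congrFun (congrArg DFunLike.coe this) p

lemma scale_dvd (p F : MvPolynomial (Fin 3) (ZMod 2)) (hp : p ∣ F) (hF : F ≠ 0) (t : ℕ)
    (hΦ : PhiScale F = Polynomial.C F * Polynomial.X ^ t) :
    ∃ m, PhiScale p = Polynomial.C p * Polynomial.X ^ m := by
  obtain ⟨h, rfl⟩ := hp
  rw [map_mul] at hΦ
  have hne : PhiScale p * PhiScale h ≠ 0 := by
    rw [hΦ]
    exact mul_ne_zero (by simpa using hF) (pow_ne_zero _ Polynomial.X_ne_zero)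
  have hp0 := left_ne_zero_of_mul hne
  have hh0 := right_ne_zero_of_mul hne
  have h1 := Polynomial.natDegree_mul hp0 hh0
  have h2 := Polynomial.natTrailingDegree_mul hp0 hh0
  rw [hΦ, Polynomial.natDegree_C_mul_X_pow _ _ hF] at h1
  rw [hΦ, Polynomial.natTrailingDegree_mul (by simpa using hF) (pow_ne_zero _ Polynomial.X_ne_zero),
    Polynomial.natTrailingDegree_C, zero_add, Polynomial.natTrailingDegree_X_pow] at h2
  have h3 := Polynomial.natTrailingDegree_le_natDegree (PhiScale p)
  have h4 := Polynomial.natTrailingDegree_le_natDegree (PhiScale h)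
  have h5 : (PhiScale p).natTrailingDegree = (PhiScale p).natDegree := by omega
  refine ⟨(PhiScale p).natDegree, ?_⟩
  have h6 : PhiScale p = Polynomial.C ((PhiScale p).coeff (PhiScale p).natDegree) *
      Polynomial.X ^ (PhiScale p).natDegree := by
    ext1 k
    rw [Polynomial.coeff_C_mul_X_pow]
    split_ifs with hk
    · rw [hk]
    · rcases lt_or_gt_of_ne hk with h | h
      · exact Polynomial.coeff_eq_zero_of_lt_natTrailingDegree (by omega)
      · exact Polynomial.coeff_eq_zero_of_natDegree_lt h
  have h7 := phiScale_eval _ MvPolynomial.C MvPolynomial.X 1 p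
  rw [h6] at h7
  simp only [one_mul, MvPolynomial.eval₂_eta, Polynomial.eval₂_mul, Polynomial.eval₂_C,
    Polynomial.eval₂_X_pow, one_pow, mul_one] at h7
  have h8 : (PhiScale p).coeff (PhiScale p).natDegree = p :=
    (MvPolynomial.eval₂_eta _).symm.trans h7
  rw [h8] at h6
  exact h6

lemma scale_eval (p : MvPolynomial (Fin 3) (ZMod 2)) (m : ℕ)
    (hp : PhiScale p = Polynomial.C p * Polynomial.X ^ m)
    (S : Type*) [CommRing S] (i : ZMod 2 →+* S) (a : Fin 3 → S) (l : S) :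
    MvPolynomial.eval₂ i (fun j => l * a j) p = l ^ m * MvPolynomial.eval₂ i a p := by
  rw [← phiScale_eval, hp, Polynomial.eval₂_mul, Polynomial.eval₂_C, Polynomial.eval₂_X_pow, mul_comm]
  rfl

lemma gg_monic (t : ℕ) (ht : 3 ≤ t) (htodd : Odd t) (g : MvPolynomial (Fin 3) (ZMod 2))
    (hg : (X 0 + X 1) * (X 0 + X 2) * (X 1 + X 2) * g =
      X 0 ^ t + X 1 ^ t + X 2 ^ t + (X 0 + X 1 + X 2) ^ t) :
    (finSuccEquiv (ZMod 2) 2 g).Monic := by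
  have h := congrArg (finSuccEquiv (ZMod 2) 2) hg
  have h1 : finSuccEquiv (ZMod 2) 2 (X 1) = Polynomial.C (X 0) := finSuccEquiv_X_succ (j := 0)
  have h2 : finSuccEquiv (ZMod 2) 2 (X 2) = Polynomial.C (X 1) := finSuccEquiv_X_succ (j := 1)
  simp only [map_mul, map_add, map_pow, finSuccEquiv_X_zero, h1, h2] at h
  have hw : (X 0 + X 1 : MvPolynomial (Fin 2) (ZMod 2)) ≠ 0 := by
    intro h0
    have := congrArg (MvPolynomial.eval ![1, 0]) h0
    simp at this
  set w : MvPolynomial (Fin 2) (ZMod 2) := X 0 + X 1 with hwdef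
  have hL := congrArg Polynomial.leadingCoeff h
  rw [Polynomial.leadingCoeff_mul, Polynomial.leadingCoeff_mul, Polynomial.leadingCoeff_mul,
    Polynomial.leadingCoeff_X_add_C, Polynomial.leadingCoeff_X_add_C, ← Polynomial.C_add,
    Polynomial.leadingCoeff_C, one_mul, one_mul, add_assoc Polynomial.X, ← Polynomial.C_add,
    ← Polynomial.C_pow, ← Polynomial.C_pow] at hL
  have h2z : (2 : MvPolynomial (Fin 2) (ZMod 2)) = 0 := CharTwo.two_eq_zero
  have hco : ∀ k, 1 ≤ k → (Polynomial.X ^ t + Polynomial.C (X 0 ^ t) + Polynomial.C (X 1 ^ t) +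
      (Polynomial.X + Polynomial.C w) ^ t : Polynomial (MvPolynomial (Fin 2) (ZMod 2))).coeff k =
      (if k = t then 1 else 0) + w ^ (t - k) * (t.choose k : MvPolynomial (Fin 2) (ZMod 2)) := by
    intro k hk
    rw [Polynomial.coeff_add, Polynomial.coeff_add, Polynomial.coeff_add, Polynomial.coeff_X_pow,
      Polynomial.coeff_C_of_ne_zero (by omega), Polynomial.coeff_C_of_ne_zero (by omega),
      Polynomial.coeff_X_add_C_pow]
    ring
  have hc1 : (Polynomial.X ^ t + Polynomial.C (X 0 ^ t) + Polynomial.C (X 1 ^ t) +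
      (Polynomial.X + Polynomial.C w) ^ t : Polynomial (MvPolynomial (Fin 2) (ZMod 2))).coeff (t - 1) = w := by
    rw [hco _ (by omega), if_neg (by omega), zero_add, show t - (t - 1) = 1 by omega, pow_one,
      Nat.choose_symm_of_eq_add (show t = (t - 1) + 1 by omega), Nat.choose_one_right]
    obtain ⟨r, rfl⟩ := htodd
    push_cast
    rw [h2z]; ring
  have hnd : (Polynomial.X ^ t + Polynomial.C (X 0 ^ t) + Polynomial.C (X 1 ^ t) +
      (Polynomial.X + Polynomial.C w) ^ t : Polynomial (MvPolynomial (Fin 2) (ZMod 2))).natDegree = t - 1 := by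
    refine Polynomial.natDegree_eq_of_le_of_coeff_ne_zero ?_ (by rw [hc1]; exact hw)
    rw [Polynomial.natDegree_le_iff_coeff_eq_zero]
    intro k hk
    rw [hco _ (by omega)]
    rcases Nat.lt_or_ge t k with h | h
    · rw [if_neg (by omega), Nat.choose_eq_zero_of_lt h]; simp
    · have : k = t := by omega
      subst this
      simp only [if_true, Nat.sub_self, pow_zero, Nat.choose_self, Nat.cast_one, one_mul]
      rw [← h2z]; norm_num
  rw [Polynomial.leadingCoeff, Polynomial.leadingCoeff, hnd, hc1] at hL
  exact mul_left_cancel₀ hw (hL.trans (mul_one w).symm)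

lemma exists_curve (t : ℕ) (ht : 3 ≤ t) (htodd : Odd t) (g p : MvPolynomial (Fin 3) (ZMod 2))
    (hg : (X 0 + X 1) * (X 0 + X 2) * (X 1 + X 2) * g =
      X 0 ^ t + X 1 ^ t + X 2 ^ t + (X 0 + X 1 + X 2) ^ t) (hpg : p ∣ g)
    (hirr : Irreducible (MvPolynomial.map (algebraMap (ZMod 2) KK) p))
    (hder : Polynomial.derivative (finSuccEquiv (ZMod 2) 2 p) ≠ 0) :
    ∃ f : Polynomial (Polynomial (ZMod 2)), f.Monic ∧
      Irreducible (f.map (Polynomial.mapRingHom (algebraMap (ZMod 2) KK))) ∧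
      Polynomial.derivative f ≠ 0 ∧
      f = MvPolynomial.aeval (![Polynomial.X, Polynomial.C Polynomial.X, 1] : Fin 3 → Polynomial (Polynomial (ZMod 2))) p := by
  have hgm := gg_monic t ht htodd g hg
  -- homogeneity
  obtain ⟨m, hm⟩ : ∃ m, PhiScale p = Polynomial.C p * Polynomial.X ^ m := by
    refine scale_dvd p (X 0 ^ t + X 1 ^ t + X 2 ^ t + (X 0 + X 1 + X 2) ^ t) ?_ ?_ t ?_
    · rw [← hg]; exact hpg.mul_left _
    · rw [← hg]
      have hne : ∀ a : Fin 3 → ZMod 2, ∀ i j : Fin 3, a i + a j ≠ 0 →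
          (X i + X j : MvPolynomial (Fin 3) (ZMod 2)) ≠ 0 := by
        intro a i j h h0
        have := congrArg (MvPolynomial.eval a) h0
        simp at this
        exact h this
      refine mul_ne_zero (mul_ne_zero (mul_ne_zero (hne ![1, 0, 0] _ _ (by decide))
        (hne ![1, 0, 0] _ _ (by decide))) (hne ![0, 1, 0] _ _ (by decide))) ?_
      rintro rfl
      simp [Polynomial.Monic] at hgm
    · simp only [PhiScale, map_add, map_pow, MvPolynomial.aeval_X]
      rw [← mul_add, ← mul_add, mul_pow, mul_pow, mul_pow, mul_pow]
      ring
  -- monicity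
  set pp2 := finSuccEquiv (ZMod 2) 2 p with hpp2
  have hpp2m : pp2.Monic := by
    obtain ⟨h, hh⟩ := hpg
    have h1 := congrArg (fun q => Polynomial.leadingCoeff (finSuccEquiv (ZMod 2) 2 q)) hh
    simp only [map_mul, Polynomial.leadingCoeff_mul, hgm.leadingCoeff] at h1
    have h2 : IsUnit pp2.leadingCoeff := IsUnit.of_mul_eq_one _ h1.symm
    obtain ⟨r, hr, hr2⟩ := MvPolynomial.isUnit_iff_eq_C_of_isReduced.1 h2
    have h3 : r = 1 := by
      have : r ≠ 0 := hr.ne_zero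
      clear hr hr2
      revert r
      decide
    rw [Polynomial.Monic, hr2, h3, C_1]
  let A := MvPolynomial (Fin 2) KK
  let F := FractionRing A
  let κ : MvPolynomial (Fin 2) (ZMod 2) →+* F := (algebraMap A F).comp (MvPolynomial.map (algebraMap (ZMod 2) KK))
  have hκ : Function.Injective κ := (IsFractionRing.injective A F).comp
    (MvPolynomial.map_injective _ (algebraMap (ZMod 2) KK).injective)
  have hfs1 : finSuccEquiv (ZMod 2) 2 (X 1) = Polynomial.C (X 0) := finSuccEquiv_X_succ (j := 0)
  have hfs2 : finSuccEquiv (ZMod 2) 2 (X 2) = Polynomial.C (X 1) := finSuccEquiv_X_succ (j := 1)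
  have hfs1K : finSuccEquiv KK 2 (X 1) = Polynomial.C (X 0) := finSuccEquiv_X_succ (j := 0)
  have hfs2K : finSuccEquiv KK 2 (X 2) = Polynomial.C (X 1) := finSuccEquiv_X_succ (j := 1)
  have hirrF : Irreducible (pp2.map κ) := by
    have h1 : finSuccEquiv KK 2 (MvPolynomial.map (algebraMap (ZMod 2) KK) p) =
        pp2.map (MvPolynomial.map (algebraMap (ZMod 2) KK)) := by
      refine hom_ext3 (((finSuccEquiv KK 2).toRingEquiv.toRingHom).comp
        (MvPolynomial.map (algebraMap (ZMod 2) KK)))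
        ((Polynomial.mapRingHom (MvPolynomial.map (algebraMap (ZMod 2) KK))).comp
          (finSuccEquiv (ZMod 2) 2).toRingEquiv.toRingHom) ?_ ?_ ?_ p
      · simp [finSuccEquiv_X_zero]
      · simp [hfs1, hfs1K]
      · simp [hfs2, hfs2K]
    have h2 := (MulEquiv.irreducible_iff (finSuccEquiv KK 2)).2 hirr
    rw [h1] at h2
    rw [← Polynomial.map_map]
    exact (Polynomial.Monic.irreducible_iff_irreducible_map_fraction_map (hpp2m.map _)).1 h2
  let x : F := algebraMap A F (X 0)
  let z : F := algebraMap A F (X 1)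
  have hz : z ≠ 0 := by
    intro h
    have : (X 1 : A) = 0 := IsFractionRing.injective A F (h.trans (map_zero _).symm)
    exact MvPolynomial.X_ne_zero _ this
  let ψK : Polynomial KK →+* F := Polynomial.eval₂RingHom ((algebraMap A F).comp C) (x / z)
  let ψ : Polynomial (ZMod 2) →+* F := ψK.comp (Polynomial.mapRingHom (algebraMap (ZMod 2) KK))
  have hψX : ψ Polynomial.X = x / z := by simp [ψ, ψK]
  obtain ⟨f, hfdef⟩ : ∃ f : Polynomial (Polynomial (ZMod 2)), f = MvPolynomial.aeval (![Polynomial.X, Polynomial.C Polynomial.X, 1] : Fin 3 → Polynomial (Polynomial (ZMod 2))) p := ⟨_, rfl⟩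
  have hfm : f.Monic := by
    have : f = pp2.map (MvPolynomial.aeval ![Polynomial.X, 1] : MvPolynomial (Fin 2) (ZMod 2) →ₐ[ZMod 2] Polynomial (ZMod 2)).toRingHom := by
      rw [hfdef]
      refine hom_ext3 (MvPolynomial.aeval (![Polynomial.X, Polynomial.C Polynomial.X, 1] : Fin 3 → Polynomial (Polynomial (ZMod 2))) : MvPolynomial (Fin 3) (ZMod 2) →ₐ[ZMod 2] _).toRingHom
        ((Polynomial.mapRingHom (MvPolynomial.aeval ![Polynomial.X, 1] : MvPolynomial (Fin 2) (ZMod 2) →ₐ[ZMod 2] Polynomial (ZMod 2)).toRingHom).comp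
          (finSuccEquiv (ZMod 2) 2).toRingEquiv.toRingHom) ?_ ?_ ?_ p
      · simp [finSuccEquiv_X_zero]
      · simp [hfs1]
      · simp [hfs2]
    rw [this]
    exact hpp2m.map _
  have hkey : (pp2.map κ).comp (Polynomial.C z * Polynomial.X) = Polynomial.C z ^ m * f.map ψ := by
    have h1 := scale_eval p m hm (Polynomial F) (Polynomial.C.comp (κ.comp C))
      ![Polynomial.X, Polynomial.C (x / z), 1] (Polynomial.C z)
    have h2 : (pp2.map κ).comp (Polynomial.C z * Polynomial.X) =
        MvPolynomial.eval₂ (Polynomial.C.comp (κ.comp C)) (fun j => Polynomial.C z * (![Polynomial.X, Polynomial.C (x / z), 1] : Fin 3 → Polynomial F) j) p := by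
      refine hom_ext3 (((Polynomial.compRingHom (Polynomial.C z * Polynomial.X)).comp
        (Polynomial.mapRingHom κ)).comp (finSuccEquiv (ZMod 2) 2).toRingEquiv.toRingHom)
        (MvPolynomial.eval₂Hom (Polynomial.C.comp (κ.comp C)) (fun j => Polynomial.C z * (![Polynomial.X, Polynomial.C (x / z), 1] : Fin 3 → Polynomial F) j)) ?_ ?_ ?_ p
      · simp [finSuccEquiv_X_zero]
      · simp [hfs1, κ]
        rw [← Polynomial.C_mul, mul_div_cancel₀ _ hz, MvPolynomial.map_X]
      · simp [hfs2, κ, z]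
        rw [MvPolynomial.map_X]
    have h3 : f.map ψ = MvPolynomial.eval₂ (Polynomial.C.comp (κ.comp C)) ![Polynomial.X, Polynomial.C (x / z), 1] p := by
      rw [hfdef]
      refine hom_ext3 ((Polynomial.mapRingHom ψ).comp (MvPolynomial.aeval (![Polynomial.X, Polynomial.C Polynomial.X, 1] : Fin 3 → Polynomial (Polynomial (ZMod 2))) : MvPolynomial (Fin 3) (ZMod 2) →ₐ[ZMod 2] _).toRingHom)
        (MvPolynomial.eval₂Hom (Polynomial.C.comp (κ.comp C)) ![Polynomial.X, Polynomial.C (x / z), 1]) ?_ ?_ ?_ p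
      · simp
      · simp [hψX]
      · simp
    rw [h2, h1, h3]
  let hinv : Invertible z := invertibleOfNonzero hz
  let σ := Polynomial.algEquivCMulXAddC z 0
  have hσ : ∀ q : Polynomial F, σ q = q.comp (Polynomial.C z * Polynomial.X) := by
    intro q
    simp [σ, Polynomial.algEquivCMulXAddC, Polynomial.comp, Polynomial.aeval_def]
  have hunit : IsUnit (Polynomial.C z ^ m : Polynomial F) :=
    (Polynomial.isUnit_C.2 (isUnit_iff_ne_zero.2 hz)).pow m
  refine ⟨f, hfm, ?_, ?_, hfdef⟩
  · apply Polynomial.Monic.irreducible_of_irreducible_map ψK _ (hfm.map _)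
    rw [Polynomial.map_map]
    have h1 := (MulEquiv.irreducible_iff σ).2 hirrF
    rw [hσ, hkey] at h1
    exact (irreducible_isUnit_mul hunit).1 h1
  · intro h0
    apply hder
    apply Polynomial.map_injective κ hκ
    rw [← Polynomial.derivative_map, Polynomial.map_zero]
    have h1 := congrArg Polynomial.derivative hkey
    rw [Polynomial.derivative_comp, ← Polynomial.C_pow, Polynomial.derivative_C_mul,
      Polynomial.derivative_C_mul,
      Polynomial.derivative_map f, h0, Polynomial.map_zero, mul_zero, Polynomial.derivative_X, mul_one] at h1
    have h2 := (mul_eq_zero.1 h1).resolve_left (by simpa using hz)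
    rw [← hσ] at h2
    exact σ.injective (h2.trans (map_zero _).symm)

lemma exists_good_swap (p : MvPolynomial (Fin 3) (ZMod 2))
    (hirr : Irreducible (MvPolynomial.map (algebraMap (ZMod 2) KK) p)) :
    ∃ i : Fin 3, Polynomial.derivative
      (finSuccEquiv (ZMod 2) 2 (rename (Equiv.swap 0 i) p)) ≠ 0 := by
  have hF : Fact (Nat.Prime 2) := ⟨Nat.prime_two⟩
  by_contra hno
  push Not at hno
  have hev : ∀ d : Fin 3 →₀ ℕ, coeff d p ≠ 0 → ∀ i, 2 * (d i / 2) = d i := by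
    intro d hd i
    by_contra hodd
    apply hd
    rw [← coeff_rename_mapDomain _ (Equiv.swap 0 i).injective p d]
    set d' := Finsupp.mapDomain (Equiv.swap 0 i) d with hd'
    have hd0 : d' 0 = d i := by
      have := Finsupp.mapDomain_apply (Equiv.swap 0 i).injective d i
      rwa [Equiv.swap_apply_right] at this
    rw [← Finsupp.cons_tail d', ← finSuccEquiv_coeff_coeff, hd0]
    obtain ⟨k, hk⟩ : ∃ k, d i = 2 * k + 1 := ⟨d i / 2, by omega⟩
    have h1 := congrArg (fun q => Polynomial.coeff q (2 * k)) (hno i)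
    simp only [Polynomial.coeff_derivative, Polynomial.coeff_zero] at h1
    push_cast at h1
    rw [show (2 : MvPolynomial (Fin 2) (ZMod 2)) = 0 from CharTwo.two_eq_zero] at h1
    rw [hk, (by simpa using h1 : Polynomial.coeff (finSuccEquiv (ZMod 2) 2 (rename (Equiv.swap 0 i) p)) (2 * k + 1) = 0), coeff_zero]
  let q : MvPolynomial (Fin 3) (ZMod 2) :=
    ∑ d ∈ p.support, monomial (Finsupp.mapRange (· / 2) rfl d) (coeff d p)
  have hq : p = q ^ 2 := by
    have h1 := sum_pow_char 2 p.support
      (fun d => monomial (Finsupp.mapRange (· / 2) rfl d) (coeff d p))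
    rw [show q ^ 2 = _ from h1]
    conv_lhs => rw [p.as_sum]
    refine Finset.sum_congr rfl fun d hd => ?_
    rw [monomial_pow, ZMod.pow_card]
    have h2 : 2 • Finsupp.mapRange (· / 2) rfl d = d := by
      ext i
      simpa using hev d (mem_support_iff.1 hd) i
    rw [h2]
  rw [hq, map_pow] at hirr
  exact not_irreducible_pow (by norm_num) hirr

lemma g_symm (t : ℕ) (g : MvPolynomial (Fin 3) (ZMod 2))
    (hg : (X 0 + X 1) * (X 0 + X 2) * (X 1 + X 2) * g =
      X 0 ^ t + X 1 ^ t + X 2 ^ t + (X 0 + X 1 + X 2) ^ t) (i : Fin 3) :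
    rename (Equiv.swap 0 i) g = g := by
  have hne : ∀ a : Fin 3 → ZMod 2, ∀ i j : Fin 3, a i + a j ≠ 0 →
      (X i + X j : MvPolynomial (Fin 3) (ZMod 2)) ≠ 0 := by
    intro a i j h h0
    have := congrArg (MvPolynomial.eval a) h0
    simp at this
    exact h this
  have hP : (X 0 + X 1) * (X 0 + X 2) * (X 1 + X 2) ≠ (0 : MvPolynomial (Fin 3) (ZMod 2)) :=
    (mul_ne_zero (mul_ne_zero (hne ![1, 0, 0] _ _ (by decide))
        (hne ![1, 0, 0] _ _ (by decide))) (hne ![0, 1, 0] _ _ (by decide)))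
  have h := congrArg (rename (Equiv.swap 0 i)) hg
  simp only [map_mul, map_add, map_pow, rename_X] at h
  apply mul_left_cancel₀ hP
  rw [hg]
  fin_cases i
  · simpa using h
  · have e0 : Equiv.swap (0 : Fin 3) 1 0 = 1 := by decide
    have e1 : Equiv.swap (0 : Fin 3) 1 1 = 0 := by decide
    have e2 : Equiv.swap (0 : Fin 3) 1 2 = 2 := by decide
    simp only [Fin.mk_one, e0, e1, e2] at h ⊢
    linear_combination h
  · have e0 : Equiv.swap (0 : Fin 3) 2 0 = 2 := by decide
    have e1 : Equiv.swap (0 : Fin 3) 2 1 = 1 := by decide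
    have e2 : Equiv.swap (0 : Fin 3) 2 2 = 0 := by decide
    simp only [Fin.reduceFinMk, e0, e1, e2] at h ⊢
    linear_combination h

lemma g_deriv (t : ℕ) (htodd : Odd t) (g : MvPolynomial (Fin 3) (ZMod 2))
    (hg : (X 0 + X 1) * (X 0 + X 2) * (X 1 + X 2) * g =
      X 0 ^ t + X 1 ^ t + X 2 ^ t + (X 0 + X 1 + X 2) ^ t)
    {S : Type*} [Field S] [Algebra (ZMod 2) S] (y x : S)
    (h0 : aeval ![y, x, 1] g = 0) (hyx : y = x ∨ y = 1) : x ^ (t - 1) + 1 = 0 := by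
  have hch : CharP S 2 := charP_of_injective_algebraMap (algebraMap (ZMod 2) S).injective 2
  have h2 : (2 : S) = 0 := CharTwo.two_eq_zero
  have ht1 : (t : S) = 1 := by
    obtain ⟨r, rfl⟩ := htodd
    push_cast
    rw [h2]; ring
  have h := congrArg (fun q => aeval ![y, x, 1] (pderiv 0 q)) hg
  simp only [Derivation.leibniz, Derivation.leibniz_pow, map_add, map_mul, smul_eq_mul, aeval_X, h0,
    pderiv_X_self, pderiv_X_of_ne (show (1 : Fin 3) ≠ 0 by decide),
    pderiv_X_of_ne (show (2 : Fin 3) ≠ 0 by decide), map_zero, nsmul_eq_mul, map_pow,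
    map_natCast, ht1, Matrix.cons_val_zero, Matrix.cons_val_one, Matrix.cons_val, mul_zero, zero_mul,
    add_zero, mul_one, one_mul] at h
  rcases hyx with rfl | rfl
  · have e : y + y = 0 := CharTwo.add_self_eq_zero y
    rw [e] at h
    simpa using h.symm
  · have e : (1 : S) + 1 = 0 := CharTwo.add_self_eq_zero 1
    rw [e, show 1 + x + 1 = x + (1 + 1) by ring, e] at h
    rw [add_comm]
    simpa using h.symm

/-- If `g_t(x,y,z) = (x^t + y^t + z^t + (x+y+z)^t)/((x+y)(x+z)(y+z))` has an absolutely
irreducible factor defined over `𝔽₂`, then for all sufficiently large `n` it has a rational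
point over `𝔽_{2^n}` with pairwise distinct coordinates. -/
theorem stmt_2 (t : ℕ) (ht : 3 ≤ t) (htodd : Odd t)
    (g : MvPolynomial (Fin 3) (ZMod 2))
    (hg : (X 0 + X 1) * (X 0 + X 2) * (X 1 + X 2) * g =
      X 0 ^ t + X 1 ^ t + X 2 ^ t + (X 0 + X 1 + X 2) ^ t)
    (hfac : ∃ p : MvPolynomial (Fin 3) (ZMod 2), p ∣ g ∧
      Irreducible (MvPolynomial.map (algebraMap (ZMod 2) (AlgebraicClosure (ZMod 2))) p)) :
    ∃ N : ℕ, ∀ n ≥ N, ∃ α β γ : GaloisField 2 n,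
      α ≠ β ∧ α ≠ γ ∧ β ≠ γ ∧ (MvPolynomial.aeval ![α, β, γ]) g = 0 := by
  obtain ⟨p, hpg, hirr⟩ := hfac
  obtain ⟨i, hi⟩ := exists_good_swap p hirr
  have hpg' : rename (Equiv.swap 0 i) p ∣ g := by
    rw [← g_symm t g hg i]
    exact map_dvd _ hpg
  have hirr' : Irreducible (MvPolynomial.map (algebraMap (ZMod 2) KK) (rename (Equiv.swap 0 i) p)) := by
    rw [map_rename]
    exact (MulEquiv.irreducible_iff (renameEquiv KK (Equiv.swap 0 i))).2 hirr
  obtain ⟨f, hf, hfirr, hfder, hfp⟩ := exists_curve t ht htodd g _ hg hpg' hirr' hi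
  have hB : (Polynomial.X ^ (t - 1) + 1 : Polynomial (ZMod 2)) ≠ 0 := by
    have := (Polynomial.monic_X_pow_add_C (1 : ZMod 2) (show t - 1 ≠ 0 by omega)).ne_zero
    simpa using this
  obtain ⟨N, hN⟩ := curve_points f hf hfirr hfder _ hB
  refine ⟨N, fun n hn => ?_⟩
  obtain ⟨x, y, hx, hy⟩ := hN n hn
  have hx' : x ^ (t - 1) + 1 ≠ 0 := by simpa using hx
  have hpy : aeval ![y, x, 1] (rename (Equiv.swap 0 i) p) = 0 := by
    rw [← hy, hfp]
    refine hom_ext3 (aeval ![y, x, 1] : _ →ₐ[ZMod 2] GaloisField 2 n).toRingHom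
      ((Polynomial.eval₂RingHom (Polynomial.aeval x : Polynomial (ZMod 2) →ₐ[ZMod 2] GaloisField 2 n).toRingHom y).comp
        (aeval (![Polynomial.X, Polynomial.C Polynomial.X, 1] : Fin 3 → Polynomial (Polynomial (ZMod 2)))).toRingHom) ?_ ?_ ?_ _
    · simp
    · simp
    · simp
  have hgy : aeval ![y, x, 1] g = 0 := by
    obtain ⟨h, hh⟩ := hpg'
    rw [hh, map_mul, hpy, zero_mul]
  refine ⟨y, x, 1, ?_, ?_, ?_, hgy⟩
  · intro h
    exact hx' (g_deriv t htodd g hg y x hgy (Or.inl h))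
  · intro h
    exact hx' (g_deriv t htodd g hg y x hgy (Or.inr h))
  · rintro rfl
    apply hx'
    rw [one_pow]
    exact CharTwo.add_self_eq_zero 1
end

section
/- Let t ≥ 3 be an odd integer and let h_t(x,y) = ((x+1)^t + x^t + (y+1)^t + y^t)/((x+y)(x+y+1)) ∈ F_2[x,y]. If h_t(x,y) has an absolutely irreducible factor defined over F_2, then for all sufficiently large n there exists a point (α, β) ∈ (F_{2^n})^2 with α ≠ β and α ≠ β + 1 such that h_t(α, β) = 0. -/
theorem lift_aux {R₀ S k : Type*} [CommRing R₀] [IsDomain R₀] [CommRing S] [IsDomain S] [Algebra R₀ S]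
    [FaithfulSMul R₀ S] [Algebra.IsIntegral R₀ S] [Field k] [IsAlgClosed k] (φ : R₀ →+* k)
    (hφ : Function.Injective φ) : ∃ P : S →+* k, ∀ r, P (algebraMap R₀ S r) = φ r := by
  let : Algebra R₀ k := φ.toAlgebra
  have : FaithfulSMul R₀ k :=
    (faithfulSMul_iff_algebraMap_injective _ _).2 hφ
  have : Module.IsTorsionFree R₀ S := inferInstance
  have : Module.IsTorsionFree R₀ k := inferInstance
  obtain ⟨f⟩ : Nonempty (S →ₐ[R₀] k) := ⟨IsAlgClosed.lift⟩
  exact ⟨f.toRingHom, fun r => f.commutes r⟩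

theorem lift_aux2 {R B : Type*} [CommRing R] [CommRing B] [Algebra R B]
    [Algebra.IsIntegral R B]
    {k : Type*} [Field k] [IsAlgClosed k] (φ : R →+* k) (Q : Ideal B) [Q.IsPrime] (I : Ideal R)
    [I.IsPrime] (hI : I = RingHom.ker φ) (hQ : I = Q.comap (algebraMap R B)) :
    ∃ P : B →+* k, ∀ r, P (algebraMap R B r) = φ r := by
  have : Q.LiesOver I := ⟨hQ⟩
  have : FaithfulSMul (R ⧸ I) (B ⧸ Q) :=
    inferInstance
  have h1 : ∀ a ∈ I, φ a = 0 := by intro a ha; rw [hI] at ha; exact ha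
  have h2 : Function.Injective (Ideal.Quotient.lift I φ h1) := by
    refine RingHom.lift_injective_of_ker_le_ideal I h1 hI.ge
  obtain ⟨P, hP⟩ := lift_aux (S := B ⧸ Q) (Ideal.Quotient.lift I φ h1) h2
  exact ⟨P.comp (Ideal.Quotient.mk Q), fun r => by
    have := hP (Ideal.Quotient.mk _ r)
    rw [Ideal.Quotient.lift_mk] at this
    rw [← this]
    rfl⟩

theorem lift_exists_gen {R B : Type*} [CommRing R] [CommRing B] [Algebra R B]
    [FaithfulSMul R B] [Algebra.IsIntegral R B]
    {k : Type*} [Field k] [IsAlgClosed k] (φ : R →+* k) :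
    ∃ P : B →+* k, ∀ r, P (algebraMap R B r) = φ r := by
  have hp : (RingHom.ker φ).IsPrime := RingHom.ker_isPrime φ
  have h0 : Ideal.comap (algebraMap R B) ⊥ ≤ RingHom.ker φ := by
    intro a ha
    have h1 : algebraMap R B a = 0 := by simpa using ha
    have h2 : a = 0 := (FaithfulSMul.algebraMap_injective R B) (by simpa using h1)
    simp [h2]
  obtain ⟨Q, -, hQp, hQ2⟩ := Ideal.exists_ideal_over_prime_of_isIntegral (S := B) (RingHom.ker φ) ⊥ h0
  exact lift_aux2 φ Q (RingHom.ker φ) rfl hQ2.symm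

open Polynomial in
theorem lift_exists {B : Type*} [CommRing B] [Algebra (ZMod 2)[X] B]
    [FaithfulSMul (ZMod 2)[X] B] [Algebra.IsIntegral (ZMod 2)[X] B]
    (k : Type*) [Field k] [IsAlgClosed k] [Algebra (ZMod 2) k] (x : k) :
    ∃ P : B →+* k, P (algebraMap (ZMod 2)[X] B X) = x := by
  obtain ⟨P, hP⟩ := lift_exists_gen (B := B)
    (aeval x : (ZMod 2)[X] →ₐ[ZMod 2] k).toRingHom
  exact ⟨P, by simpa using hP X⟩

open Polynomial in
theorem frob_exists {B : Type*} [CommRing B] [IsDomain B] [Algebra (ZMod 2)[X] B]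
    [Module.Finite (ZMod 2)[X] B] {G : Type*} [Group G] [Finite G] [MulSemiringAction G B]
    [SMulCommClass G (ZMod 2)[X] B] [Algebra.IsInvariant (ZMod 2)[X] B G]
    {k : Type*} [Field k] [Algebra (ZMod 2) k] (n : ℕ) (hn : n ≠ 0)
    (ι : GaloisField 2 n →ₐ[ZMod 2] k) (a : GaloisField 2 n)
    (P : B →+* k) (hP : P (algebraMap (ZMod 2)[X] B X) = ι a) :
    ∃ τ : G, ∀ b, P (τ • b) = P b ^ (2 ^ n) := by
  have hcomp : P.comp (algebraMap (ZMod 2)[X] B) =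
      (ι.comp (aeval a : (ZMod 2)[X] →ₐ[ZMod 2] GaloisField 2 n)).toRingHom := by
    refine Polynomial.ringHom_ext' (RingHom.ext_zmod _ _) ?_
    simpa using hP
  let Q := RingHom.ker P
  have : Q.IsPrime := RingHom.ker_isPrime P
  let I := Q.under (ZMod 2)[X]
  have hI : ∀ f, f ∈ I ↔ aeval a f = 0 := by
    intro f
    change P (algebraMap (ZMod 2)[X] B f) = 0 ↔ _
    rw [← RingHom.comp_apply, hcomp]
    change ι (aeval a f) = 0 ↔ _
    exact map_eq_zero_iff _ ι.injective
  let ψ : (ZMod 2)[X] ⧸ I →+* GaloisField 2 n :=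
    Ideal.Quotient.lift I (aeval a : (ZMod 2)[X] →ₐ[ZMod 2] GaloisField 2 n).toRingHom
      (fun f hf => (hI f).1 hf)
  have hψ : Function.Injective ψ := by
    rw [injective_iff_map_eq_zero]
    intro z
    obtain ⟨f, rfl⟩ := Ideal.Quotient.mk_surjective z
    intro hz
    exact Ideal.Quotient.eq_zero_iff_mem.2 ((hI f).2 hz)
  have : Finite (GaloisField 2 n) := inferInstance
  have : Finite ((ZMod 2)[X] ⧸ I) := Finite.of_injective ψ hψ
  have : Module.Finite ((ZMod 2)[X] ⧸ I) (B ⧸ Q) := inferInstance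
  have : Finite (B ⧸ Q) := Module.finite_of_finite ((ZMod 2)[X] ⧸ I)
  obtain ⟨σ, hσ⟩ := IsArithFrobAt.exists_of_isInvariant (ZMod 2)[X] G Q
  have hσ' : ∀ b, P (σ • b) = P b ^ Nat.card ((ZMod 2)[X] ⧸ I) := by
    intro b
    have := hσ b
    rw [← map_pow, ← sub_eq_zero, ← map_sub]
    exact this
  let : Field ((ZMod 2)[X] ⧸ I) := (Finite.isField_of_domain ((ZMod 2)[X] ⧸ I)).toField
  let : Algebra ((ZMod 2)[X] ⧸ I) (GaloisField 2 n) := ψ.toAlgebra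
  have hcard : 2 ^ n = Nat.card ((ZMod 2)[X] ⧸ I) ^
      Module.finrank ((ZMod 2)[X] ⧸ I) (GaloisField 2 n) := by
    rw [← GaloisField.card 2 n hn]
    exact Module.natCard_eq_pow_finrank
  have key : ∀ j : ℕ, ∀ b, P (σ ^ j • b) = P b ^ (Nat.card ((ZMod 2)[X] ⧸ I) ^ j) := by
    intro j
    induction j with
    | zero => intro b; simp
    | succ j ih => intro b; rw [pow_succ, mul_smul, ih, hσ', ← pow_mul, pow_succ, mul_comm]
  exact ⟨σ ^ Module.finrank ((ZMod 2)[X] ⧸ I) (GaloisField 2 n), fun b => by rw [key, ← hcard]⟩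


section Stepanov
open Polynomial Module

/-- coordinates have degree less than `M`. -/
def Dg {B : Type*} [CommRing B] [Algebra (ZMod 2)[X] B] {ι : Type*}
    (b : Basis ι (ZMod 2)[X] B) (M : ℕ) (v : B) : Prop :=
  ∀ i, b.repr v i ∈ degreeLT (ZMod 2) M

theorem dLT_mul {M M' : ℕ} {f g : (ZMod 2)[X]} (hf : f ∈ degreeLT (ZMod 2) M)
    (hg : g ∈ degreeLT (ZMod 2) M') : f * g ∈ degreeLT (ZMod 2) (M + M') := by
  rw [mem_degreeLT] at *
  by_cases h0 : f = 0
  · simp [h0]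
  by_cases h1 : g = 0
  · simp [h1]
  rw [degree_eq_natDegree h0] at hf
  rw [degree_eq_natDegree h1] at hg
  rw [degree_mul, degree_eq_natDegree h0, degree_eq_natDegree h1]
  norm_cast at *
  omega

theorem exists_dLT (f : (ZMod 2)[X]) : ∃ M, f ∈ degreeLT (ZMod 2) M := by
  refine ⟨f.natDegree + 1, ?_⟩
  rw [mem_degreeLT]
  exact lt_of_le_of_lt degree_le_natDegree (by norm_cast; omega)

set_option linter.unusedSectionVars false
set_option linter.unusedFintypeInType false

variable {B : Type*} [CommRing B] [Algebra (ZMod 2)[X] B] {ι : Type*} [Fintype ι]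
  (b : Basis ι (ZMod 2)[X] B)

theorem Dg.mono {b : Basis ι (ZMod 2)[X] B} {M M' : ℕ} (h : M ≤ M') {v : B} (hv : Dg b M v) :
    Dg b M' v :=
  fun i => degreeLT_mono h (hv i)

theorem Dg.sum {b : Basis ι (ZMod 2)[X] B} {M : ℕ} {J : Type*} {s : Finset J} {v : J → B}
    (hv : ∀ j ∈ s, Dg b M (v j)) : Dg b M (∑ j ∈ s, v j) := by
  intro i
  rw [map_sum, Finsupp.finsetSum_apply]
  exact Submodule.sum_mem _ (fun j hj => hv j hj i)

theorem exists_Dg_family {J : Type*} [Finite J] (v : J → B) : ∃ M, ∀ j, Dg b M (v j) := by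
  choose M hM using fun (p : J × ι) => exists_dLT (b.repr (v p.1) p.2)
  obtain ⟨N, hN⟩ := (Set.finite_range M).bddAbove
  exact ⟨N, fun j i => degreeLT_mono (hN ⟨(j, i), rfl⟩) (hM (j, i))⟩

theorem Dg.smul {b : Basis ι (ZMod 2)[X] B} {M M' : ℕ} {f : (ZMod 2)[X]}
    (hf : f ∈ degreeLT (ZMod 2) M) {v : B} (hv : Dg b M' v) : Dg b (M + M') (f • v) := by
  intro i
  rw [map_smul, Finsupp.smul_apply, smul_eq_mul]
  exact dLT_mul hf (hv i)

theorem Dg_mul_exists : ∃ c, ∀ M M' u v, Dg b M u → Dg b M' v → Dg b (M + M' + c) (u * v) := by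
  obtain ⟨c, hc⟩ := exists_Dg_family b (fun p : ι × ι => b p.1 * b p.2)
  refine ⟨c, fun M M' u v hu hv => ?_⟩
  rw [← b.sum_repr u, ← b.sum_repr v, Finset.sum_mul_sum]
  refine Dg.sum fun i _ => Dg.sum fun j _ => ?_
  rw [smul_mul_smul_comm]
  exact (hc (i, j)).smul (dLT_mul (hu i) (hv j))

theorem Dg_aut_exists {G : Type*} [Group G] [Finite G] [MulSemiringAction G B]
    [SMulCommClass G (ZMod 2)[X] B] : ∃ c, ∀ (τ : G) M v, Dg b M v → Dg b (M + c) (τ • v) := by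
  obtain ⟨c, hc⟩ := exists_Dg_family b (fun p : G × ι => p.1 • b p.2)
  refine ⟨c, fun τ M v hv => ?_⟩
  rw [← b.sum_repr v, Finset.smul_sum]
  refine Dg.sum fun i _ => ?_
  rw [smul_comm]
  exact (hc (τ, i)).smul (hv i)

theorem natDegree_det_le_mul {n : Type*} [Fintype n] [DecidableEq n] (A : Matrix n n (ZMod 2)[X])
    (M : ℕ) (h : ∀ i j, (A i j).natDegree ≤ M) : A.det.natDegree ≤ Fintype.card n * M := by
  rw [Matrix.det_apply]
  refine natDegree_sum_le_of_forall_le _ _ fun σ _ => ?_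
  refine (natDegree_smul_le _ _).trans ?_
  refine (natDegree_prod_le _ _).trans ?_
  refine (Finset.sum_le_card_nsmul _ _ M fun i _ => h _ _).trans ?_
  simp

theorem Dg_norm_exists : ∃ c, ∀ M g, Dg b M g →
    (Algebra.norm (ZMod 2)[X] g).natDegree ≤ Fintype.card ι * (M + c) := by
  classical
  obtain ⟨c, hc⟩ := Dg_mul_exists b
  obtain ⟨c2, hc2⟩ := exists_Dg_family b b
  refine ⟨c2 + c, fun M g hg => ?_⟩
  rw [Algebra.norm_eq_matrix_det b]
  refine natDegree_det_le_mul _ _ fun i j => ?_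
  rw [Algebra.leftMulMatrix_eq_repr_mul]
  have := hc M c2 g (b j) hg (hc2 j) i
  rw [mem_degreeLT] at this
  rw [natDegree_le_iff_degree_le, ← add_assoc]
  exact this.le

theorem Dg_pow {b : Basis ι (ZMod 2)[X] B} {c : ℕ}
    (hmul : ∀ M M' u v, Dg b M u → Dg b M' v → Dg b (M + M' + c) (u * v))
    {M : ℕ} {v : B} (hv : Dg b M v) (a : ℕ) :
    ∃ N, N + c = 2 ^ a * (M + c) ∧ Dg b N (v ^ 2 ^ a) := by
  induction a with
  | zero => exact ⟨M, by simp, by simpa using hv⟩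
  | succ a ih =>
    obtain ⟨N, hN, hd⟩ := ih
    refine ⟨N + N + c, by rw [pow_succ]; linarith, ?_⟩
    rw [pow_succ, pow_mul, sq]
    exact hmul _ _ _ _ hd hd

/-- Counting zeros. -/
theorem zeros_le (b : Basis ι (ZMod 2)[X] B) [IsDomain B] [Algebra (ZMod 2) B] [IsScalarTower (ZMod 2) (ZMod 2)[X] B]
    {k : Type*} [Field k] [Algebra (ZMod 2) k] {g : B} (hg : g ≠ 0)
    (S : Finset (B →+* k)) (hS : ∀ P ∈ S, P g = 0) :
    S.card ≤ (Algebra.norm (ZMod 2)[X] g).natDegree := by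
  classical
  have h := Ideal.span_singleton_eq_bot.not.2 hg
  have hfin : Module.Finite (ZMod 2) (B ⧸ Ideal.span ({g} : Set B)) := by
    refine Module.Finite.equiv (Ideal.quotientEquivDirectSum (ZMod 2) b h).symm
  rw [← finrank_quotient_span_eq_natDegree_norm b hg]
  refine le_trans ?_ (card_algHom_le_finrank (ZMod 2) (B ⧸ Ideal.span ({g} : Set B)) k)
  have hker : ∀ P : S, ∀ x ∈ Ideal.span ({g} : Set B), P.1 x = 0 := by
    intro P x hx
    obtain ⟨y, rfl⟩ := Ideal.mem_span_singleton'.1 hx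
    rw [map_mul, hS P.1 P.2, mul_zero]
  let F : S → (B ⧸ Ideal.span ({g} : Set B)) →ₐ[ZMod 2] k := fun P =>
    { Ideal.Quotient.lift _ P.1 (hker P) with
      commutes' := fun r => by
        exact RingHom.congr_fun (RingHom.ext_zmod ((Ideal.Quotient.lift _ P.1 (hker P)).comp
          (algebraMap (ZMod 2) _)) (algebraMap (ZMod 2) k)) r }
  have hF : Function.Injective F := by
    intro P P' hPP
    ext x
    exact DFunLike.congr_fun hPP (Ideal.Quotient.mk _ x)
  have := Nat.card_le_card_of_injective F hF
  simpa using this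

theorem exists_relation {r l m N : ℕ} (s : Fin r → B) (T : ℕ)
    (hT : ∀ i v, Dg b m v → Dg b T (s i ^ N * v)) (hlt : T < r * m) [Nonempty ι] :
    ∃ u : Fin r → B, u ≠ 0 ∧ (∀ i, Dg b m (u i)) ∧ ∑ i, s i ^ N * u i = 0 := by
  classical
  let mk : (ι → degreeLT (ZMod 2) m) →+ B :=
    { toFun := fun f => ∑ i, (f i : (ZMod 2)[X]) • b i
      map_zero' := by simp
      map_add' := fun f g => by simp [add_smul, Finset.sum_add_distrib] }
  have hrepr : ∀ f i, b.repr (mk f) i = f i := fun f i => by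
    change b.repr (∑ i, (f i : (ZMod 2)[X]) • b i) i = _
    rw [Basis.repr_sum_self]
  have hmk : ∀ f, Dg b m (mk f) := fun f i => by rw [hrepr]; exact (f i).2
  let Φ : (Fin r → ι → degreeLT (ZMod 2) m) →+ (ι → degreeLT (ZMod 2) T) :=
    { toFun := fun u j => ⟨b.repr (∑ i, s i ^ N * mk (u i)) j,
        Dg.sum (fun i _ => hT i _ (hmk (u i))) j⟩
      map_zero' := by ext; simp
      map_add' := fun f g => by
        ext j
        simp [mul_add, Finset.sum_add_distrib] }
  let Φ' : (Fin r → ι → degreeLT (ZMod 2) m) →ₗ[ZMod 2] (ι → degreeLT (ZMod 2) T) :=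
    Φ.toZModLinearMap 2
  have hfr : ∀ M, finrank (ZMod 2) (degreeLT (ZMod 2) M) = M := fun M => by
    rw [(degreeLTEquiv (ZMod 2) M).finrank_eq]; simp
  have hfin : ∀ M, Module.Finite (ZMod 2) (degreeLT (ZMod 2) M) := fun M =>
    Module.Finite.equiv (degreeLTEquiv (ZMod 2) M).symm
  have hker : LinearMap.ker Φ' ≠ ⊥ := by
    refine LinearMap.ker_ne_bot_of_finrank_lt ?_
    rw [finrank_pi_fintype, finrank_pi_fintype]
    simp only [finrank_pi_fintype, hfr, Finset.sum_const, Finset.card_univ, smul_eq_mul,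
      Fintype.card_fin]
    have : 0 < Fintype.card ι := Fintype.card_pos
    nlinarith
  obtain ⟨u, hu, hu0⟩ := (Submodule.ne_bot_iff _).1 hker
  refine ⟨fun i => mk (u i), ?_, fun i => hmk _, ?_⟩
  · intro h
    apply hu0
    ext i j : 3
    rw [← hrepr, show mk (u i) = 0 from congrFun h i]
    simp
  · apply b.repr.injective
    ext1 j
    have := congrFun (LinearMap.mem_ker.1 hu) j
    have h3 : b.repr (∑ i, s i ^ N * mk (u i)) j = 0 := congrArg Subtype.val this
    rw [h3]
    simp

theorem stepanov [IsDomain B] [Algebra (ZMod 2) B] [IsScalarTower (ZMod 2) (ZMod 2)[X] B]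
    [Nonempty ι]
    {G : Type*} [Group G] [MulSemiringAction G B]
    {k : Type*} [Field k] [Algebra (ZMod 2) k] {c : ℕ}
    (hmul : ∀ M M' u v, Dg b M u → Dg b M' v → Dg b (M + M' + c) (u * v))
    (haut : ∀ (τ : G) M v, Dg b M v → Dg b (M + c) (τ • v))
    (hnorm : ∀ M g, Dg b M g →
      (Algebra.norm (ZMod 2)[X] g).natDegree ≤ Fintype.card ι * (M + c))
    {r l a n m : ℕ} (s : Fin r → B) (hs : ∀ i, Dg b l (s i))
    (hind : ∀ t : Fin r → B, ∑ i, s i * t i ^ 2 ^ a = 0 → t = 0) (han : a ≤ n)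
    (hm : 2 ^ (n - a) * (l + c) + m + c < r * m) (τ : G) (S : Finset (B →+* k))
    (hS : ∀ P ∈ S, ∀ x, P (τ • x) = P x ^ 2 ^ n) :
    S.card ≤ Fintype.card ι * (l + 2 ^ a * (m + c + c) + c + c) := by
  classical
  obtain ⟨u, hu0, hu, hrel⟩ := exists_relation (l := l) b (N := 2 ^ (n - a)) s
    (2 ^ (n - a) * (l + c) + m + c) (m := m) (by
      intro i v hv
      obtain ⟨N, hN, hd⟩ := Dg_pow hmul (hs i) (n - a)
      exact (hmul _ _ _ _ hd hv).mono (by omega)) hm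
  have : CharP k 2 := charP_of_injective_algebraMap (algebraMap (ZMod 2) k).injective 2
  let t : Fin r → B := fun i => τ⁻¹ • u i
  let g := ∑ i, s i * t i ^ 2 ^ a
  have hg0 : g ≠ 0 := by
    intro h
    have h2 := hind t h
    apply hu0
    ext i
    have : τ⁻¹ • u i = 0 := congrFun h2 i
    simpa using congrArg (fun z => τ • z) this
  have hgd : Dg b (l + 2 ^ a * (m + c + c) + c) g := by
    refine Dg.sum fun i _ => ?_
    obtain ⟨N, hN, hd⟩ := Dg_pow hmul (haut τ⁻¹ m _ (hu i)) a
    exact (hmul _ _ _ _ (hs i) hd).mono (by omega)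
  refine (zeros_le b hg0 S fun P hP => ?_).trans (hnorm _ _ hgd)
  have h1 : P g ^ 2 ^ (n - a) = 0 := by
    rw [← map_zero P, ← hrel, map_sum, map_sum, sum_pow_char_pow]
    refine Finset.sum_congr rfl fun i _ => ?_
    have h2 : P (u i) = P (t i) ^ 2 ^ n := by
      rw [← hS P hP]
      simp [t]
    rw [map_mul, map_mul, h2, map_pow, map_pow, mul_pow, ← pow_mul, ← pow_add]
    congr 3
    omega
  exact eq_zero_of_pow_eq_zero h1

end Stepanov


open Polynomial in
theorem const_of_pow {F : Type*} [Field F] [Algebra (ZMod 2)[X] F] [IsFractionRing (ZMod 2)[X] F]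
    (c : F) (hc : ∀ a : ℕ, ∃ d : F, d ^ 2 ^ a = c) :
    ∃ e : ZMod 2, c = algebraMap (ZMod 2)[X] F (C e) := by
  have hinj := IsFractionRing.injective (ZMod 2)[X] F
  obtain ⟨u, v, hv, rfl⟩ := IsFractionRing.div_surjective (A := (ZMod 2)[X]) c
  have hv0 : v ≠ 0 := nonZeroDivisors.ne_zero hv
  by_cases hu0 : u = 0
  · exact ⟨0, by simp [hu0]⟩
  obtain ⟨a, ha⟩ : ∃ a : ℕ, u.natDegree + v.natDegree < 2 ^ a :=
    ⟨_, Nat.lt_two_pow_self⟩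
  obtain ⟨d, hd⟩ := hc a
  obtain ⟨u', v', hrel, hd'⟩ := IsFractionRing.exists_reduced_fraction (A := (ZMod 2)[X]) d
  have hcop : IsCoprime u' (v' : (ZMod 2)[X]) := hrel.isCoprime
  have hv'0 : (v' : (ZMod 2)[X]) ≠ 0 := nonZeroDivisors.ne_zero v'.2
  rw [IsFractionRing.mk'_eq_div] at hd'
  have hvF : algebraMap (ZMod 2)[X] F v ≠ 0 := by
    simpa using (map_ne_zero_iff _ hinj).2 hv0
  have hv'F : algebraMap (ZMod 2)[X] F v' ≠ 0 := by
    simpa using (map_ne_zero_iff _ hinj).2 hv'0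
  have heq : u * (v' : (ZMod 2)[X]) ^ 2 ^ a = v * u' ^ 2 ^ a := by
    apply hinj
    rw [← hd', div_pow, div_eq_div_iff (pow_ne_zero _ hv'F) hvF] at hd
    simp only [map_mul, map_pow]
    rw [← hd]; ring
  have hpow : (2 : ℕ) ^ a ≠ 0 := by positivity
  have h1 : u' ^ 2 ^ a ∣ u := by
    have : u' ^ 2 ^ a ∣ u * (v' : (ZMod 2)[X]) ^ 2 ^ a := heq ▸ dvd_mul_left _ _
    exact (hcop.pow).dvd_of_dvd_mul_right this
  have h2 : (v' : (ZMod 2)[X]) ^ 2 ^ a ∣ v := by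
    have : (v' : (ZMod 2)[X]) ^ 2 ^ a ∣ v * u' ^ 2 ^ a := heq ▸ dvd_mul_left _ _
    exact (hcop.symm.pow).dvd_of_dvd_mul_right this
  have h3 := natDegree_le_of_dvd h1 hu0
  have h4 := natDegree_le_of_dvd h2 hv0
  rw [natDegree_pow] at h3 h4
  have h5 : u'.natDegree = 0 := by
    by_contra h
    have : 1 ≤ u'.natDegree := Nat.one_le_iff_ne_zero.2 h
    nlinarith
  have h6 : (v' : (ZMod 2)[X]).natDegree = 0 := by
    by_contra h
    have : 1 ≤ (v' : (ZMod 2)[X]).natDegree := Nat.one_le_iff_ne_zero.2 h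
    nlinarith
  have h7 : ∀ w : (ZMod 2)[X], w.natDegree = 0 → w ≠ 0 → w = 1 := by
    intro w hw hw0
    rw [eq_C_of_natDegree_eq_zero hw] at hw0 ⊢
    have h9 : w.coeff 0 ≠ 0 := fun h => hw0 (by rw [h, C_0])
    have h10 : ∀ z : ZMod 2, z ≠ 0 → z = 1 := by decide
    rw [h10 _ h9, C_1]
  have h8 : u' ≠ 0 := by
    rintro rfl
    rw [zero_pow hpow] at h1
    exact hu0 (zero_dvd_iff.1 h1)
  refine ⟨1, ?_⟩
  rw [← hd, ← hd', h7 _ h5 h8, h7 _ h6 hv'0]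
  simp

open Polynomial in
theorem alg_of_pow {F L : Type*} [Field F] [Algebra (ZMod 2)[X] F] [IsFractionRing (ZMod 2)[X] F]
    [Field L] [Algebra F L] [Algebra.IsSeparable F L] [Algebra (ZMod 2) L]
    (f : L) (hf : ∀ a : ℕ, ∃ d : L, d ^ 2 ^ a = f) : IsAlgebraic (ZMod 2) f := by
  have hL2 : CharP L 2 := charP_of_injective_algebraMap (algebraMap (ZMod 2) L).injective 2
  have hF2 : CharP F 2 := (RingHom.charP_iff (algebraMap F L) (algebraMap F L).injective 2).2 hL2
  have hcoef : ∀ i, ∃ e : ZMod 2, (minpoly F f).coeff i = algebraMap (ZMod 2)[X] F (C e) := by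
    intro i
    refine const_of_pow _ fun a => ?_
    obtain ⟨g, rfl⟩ := hf a
    have hg : IsIntegral F g := Algebra.IsIntegral.isIntegral g
    have hmon : ((minpoly F g).map (iterateFrobenius F 2 a)).Monic := (minpoly.monic hg).map _
    have hdeg : (minpoly F (g ^ 2 ^ a)).natDegree = (minpoly F g).natDegree := by
      rw [← IntermediateField.adjoin.finrank hg, ← IntermediateField.adjoin.finrank (hg.pow _),
        IntermediateField.adjoin_simple_eq_adjoin_pow_expChar_pow_of_isSeparable' F L g 2 a]
    have hroot : aeval (g ^ 2 ^ a) ((minpoly F g).map (iterateFrobenius F 2 a)) = 0 := by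
      have h0 : iterateFrobenius L 2 a (aeval g (minpoly F g)) = 0 := by simp
      have hc : (algebraMap F L).comp (iterateFrobenius F 2 a) =
          (iterateFrobenius L 2 a).comp (algebraMap F L) := by
        refine RingHom.ext fun z => ?_
        simp [iterateFrobenius_def]
      rw [aeval_def, hom_eval₂] at h0
      rw [aeval_def, eval₂_map, hc]
      simpa [iterateFrobenius_def] using h0
    have heq : (minpoly F g).map (iterateFrobenius F 2 a) = minpoly F (g ^ 2 ^ a) := by
      refine Polynomial.eq_of_monic_of_dvd_of_natDegree_le (minpoly.monic (hg.pow _)) hmon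
        (minpoly.dvd _ _ hroot) ?_ |>.symm ▸ rfl
      rw [hdeg, natDegree_map]
    exact ⟨(minpoly F g).coeff i, by rw [← heq, coeff_map, iterateFrobenius_def]⟩
  choose e he using hcoef
  have hint : IsIntegral F f := Algebra.IsIntegral.isIntegral f
  let φ : ZMod 2 →+* F := (algebraMap (ZMod 2)[X] F).comp C
  let q : (ZMod 2)[X] := ∑ i ∈ Finset.range ((minpoly F f).natDegree + 1), C (e i) * X ^ i
  have hq : q.map φ = minpoly F f := by
    conv_rhs => rw [as_sum_range_C_mul_X_pow (minpoly F f)]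
    simp only [q, Polynomial.map_sum, Polynomial.map_mul, map_C, Polynomial.map_pow, map_X]
    exact Finset.sum_congr rfl fun i _ => by rw [he]; rfl
  refine ⟨q, ?_, ?_⟩
  · rintro h
    rw [h, Polynomial.map_zero] at hq
    exact minpoly.ne_zero hint hq.symm
  · have := minpoly.aeval F f
    rw [← hq, aeval_def, eval₂_map] at this
    have hc : algebraMap (ZMod 2) L = (algebraMap F L).comp φ := RingHom.ext_zmod _ _
    rw [aeval_def, hc]
    exact this

theorem indep_pow_s3 {L : Type*} [Field L] [Algebra (ZMod 2) L]
    (hL : ∀ f : L, (∀ a : ℕ, ∃ d : L, d ^ 2 ^ a = f) → IsAlgebraic (ZMod 2) f) {r : ℕ}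
    (s : Fin r → L) (hs : LinearIndependent (algebraicClosure (ZMod 2) L) s) :
    ∃ a : ℕ, ∀ t : Fin r → L, ∑ i, s i * t i ^ 2 ^ a = 0 → t = 0 := by
  have hL2 : CharP L 2 := charP_of_injective_algebraMap (algebraMap (ZMod 2) L).injective 2
  induction r with
  | zero => exact ⟨0, fun t _ => Subsingleton.elim _ _⟩
  | succ r ih =>
    obtain ⟨a₁, ha₁⟩ := ih (fun i => s i.castSucc)
      (hs.comp _ (Fin.castSucc_injective r))
    by_contra! hcon
    have key : ∀ a : ℕ, ∃ w : Fin r → L, 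
        ∑ i, s i.castSucc * (w i ^ 2 ^ a) ^ 2 ^ a₁ + s (Fin.last r) = 0 := by
      intro a
      obtain ⟨t, ht, ht0⟩ := hcon (a + a₁)
      rw [Fin.sum_univ_castSucc] at ht
      have hl : t (Fin.last r) ≠ 0 := by
        intro hl
        rw [hl, zero_pow (by positivity), mul_zero, add_zero] at ht
        have h1 := ha₁ (fun i => t i.castSucc ^ 2 ^ a) (by
          rw [← ht]
          exact Finset.sum_congr rfl fun i _ => by rw [← pow_mul, ← pow_add])
        apply ht0
        ext i
        refine Fin.lastCases hl (fun i => ?_) i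
        exact eq_zero_of_pow_eq_zero (congrFun h1 i)
      refine ⟨fun i => t i.castSucc / t (Fin.last r), ?_⟩
      have h2 : (t (Fin.last r)) ^ 2 ^ (a + a₁) ≠ 0 := pow_ne_zero _ hl
      have h3 : ∑ i : Fin r, s i.castSucc * ((t i.castSucc / t (Fin.last r)) ^ 2 ^ a) ^ 2 ^ a₁
          = (∑ i : Fin r, s i.castSucc * t i.castSucc ^ 2 ^ (a + a₁)) /
            (t (Fin.last r)) ^ 2 ^ (a + a₁) := by
        rw [Finset.sum_div]
        refine Finset.sum_congr rfl fun i _ => ?_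
        rw [← pow_mul, ← pow_add, div_pow, mul_div_assoc]
      rw [h3, div_add' _ _ _ h2, ht, zero_div]
    choose w hw using key
    have huniq : ∀ a i, w a i ^ 2 ^ a = w 0 i := by
      intro a i
      have := ha₁ (fun i => w a i ^ 2 ^ a - w 0 i) (by
        have h1 := hw a
        have h2 := hw 0
        rw [← sub_eq_zero.2 (h1.trans h2.symm)]
        simp only [sub_pow_char_pow, pow_zero, pow_one, mul_sub, Finset.sum_sub_distrib]
        ring)
      exact sub_eq_zero.1 (congrFun this i)
    have halg : ∀ i, w 0 i ∈ algebraicClosure (ZMod 2) L := fun i =>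
      (mem_algebraicClosure_iff).2 (hL _ fun a => ⟨w a i, huniq a i⟩)
    rw [Fintype.linearIndependent_iff] at hs
    have h1 := hs (Fin.lastCases 1 fun i => (⟨w 0 i, halg i⟩ : algebraicClosure (ZMod 2) L) ^ 2 ^ a₁)
      (by
        rw [Fin.sum_univ_castSucc]
        simp only [Fin.lastCases_castSucc, Fin.lastCases_last, one_smul]
        rw [← hw 0]
        congr 1
        refine Finset.sum_congr rfl fun i _ => ?_
        rw [Algebra.smul_def, mul_comm, map_pow, pow_zero, pow_one]
        rfl) (Fin.last r)
    simp at h1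


open Polynomial in
theorem count_pairs {B : Type*} [CommRing B] [IsDomain B] [Algebra (ZMod 2)[X] B]
    [FaithfulSMul (ZMod 2)[X] B] [Module.Finite (ZMod 2)[X] B] {G : Type*} [Group G] [Fintype G]
    [MulSemiringAction G B]
    [SMulCommClass G (ZMod 2)[X] B] [Algebra.IsInvariant (ZMod 2)[X] B G]
    {k : Type*} [Field k] [IsAlgClosed k] [Algebra (ZMod 2) k] (n : ℕ) (hn : n ≠ 0)
    (ι : GaloisField 2 n →ₐ[ZMod 2] k) (W : Finset (GaloisField 2 n)) (bd : G → ℕ)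
    (hbd : ∀ (τ : G) (S : Finset (B →+* k)),
      (∀ P ∈ S, (∃ a ∈ W, P (algebraMap (ZMod 2)[X] B X) = ι a) ∧
        ∀ b, P (τ • b) = P b ^ 2 ^ n) → S.card ≤ bd τ) :
    W.card * Fintype.card G ≤ ∑ τ, bd τ := by
  classical
  have : Algebra.IsIntegral (ZMod 2)[X] B := inferInstance
  choose P0 hP0 using fun a : GaloisField 2 n => lift_exists (B := B) k (ι a)
  let P1 : GaloisField 2 n → G → (B →+* k) := fun a ρ =>
    (P0 a).comp (MulSemiringAction.toRingHom G B ρ)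
  have hP1 : ∀ a ρ b, P1 a ρ b = P0 a (ρ • b) := fun a ρ b => rfl
  have hP1X : ∀ a ρ, P1 a ρ (algebraMap (ZMod 2)[X] B X) = ι a := by
    intro a ρ
    rw [hP1, smul_algebraMap, hP0]
  have hfr : ∀ P : B →+* k, ∃ τ : G, (∃ a, P (algebraMap (ZMod 2)[X] B X) = ι a) →
      ∀ b, P (τ • b) = P b ^ 2 ^ n := by
    intro P
    by_cases h : ∃ a, P (algebraMap (ZMod 2)[X] B X) = ι a
    · obtain ⟨a, ha⟩ := h
      obtain ⟨τ, hτ⟩ := frob_exists (G := G) n hn ι a P ha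
      exact ⟨τ, fun _ => hτ⟩
    · exact ⟨1, fun h' => absurd h' h⟩
  choose fr hfr using hfr
  have hr : ∀ (a : GaloisField 2 n) (P : B →+* k), ∃ r : G, (∃ ρ, P = P1 a ρ) → P = P1 a r := by
    intro a P
    by_cases h : ∃ ρ, P = P1 a ρ
    · obtain ⟨ρ, h⟩ := h
      exact ⟨ρ, fun _ => h⟩
    · exact ⟨1, fun h' => absurd h' h⟩
  choose r hr using hr
  let Φ : GaloisField 2 n × G → (B →+* k) × G := fun x =>
    (P1 x.1 x.2, (r x.1 (P1 x.1 x.2))⁻¹ * x.2 * fr (P1 x.1 x.2))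
  have hΦ : Function.Injective Φ := by
    rintro ⟨a, ρ⟩ ⟨a', ρ'⟩ h
    have h1 : P1 a ρ = P1 a' ρ' := congrArg Prod.fst h
    have h2 : (r a (P1 a ρ))⁻¹ * ρ * fr (P1 a ρ) = (r a' (P1 a' ρ'))⁻¹ * ρ' * fr (P1 a' ρ') :=
      congrArg Prod.snd h
    have h3 : a = a' := by
      have := congrArg (fun f : B →+* k => f (algebraMap (ZMod 2)[X] B X)) h1
      simp only [hP1X] at this
      exact ι.toRingHom.injective this
    subst h3
    rw [h1] at h2
    have h4 : ρ = ρ' := by simpa using h2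
    rw [h4]
  have hfrob : ∀ x : GaloisField 2 n × G, ∀ b, (Φ x).1 ((Φ x).2 • b) = (Φ x).1 b ^ 2 ^ n := by
    rintro ⟨a, ρ⟩ b
    have h1 := hr a (P1 a ρ) ⟨ρ, rfl⟩
    change P1 a ρ (((r a (P1 a ρ))⁻¹ * ρ * fr (P1 a ρ)) • b) = P1 a ρ b ^ 2 ^ n
    rw [← hfr (P1 a ρ) ⟨a, hP1X a ρ⟩ b]
    generalize hR : r a (P1 a ρ) = R at *
    generalize fr (P1 a ρ) = T
    conv_lhs => rw [h1]
    rw [hP1, hP1]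
    simp [mul_smul]
  rw [← Finset.card_univ (α := G), ← Finset.card_product,
    Finset.card_eq_sum_card_fiberwise (f := fun x => (Φ x).2) (t := Finset.univ)
      (fun x _ => Finset.mem_coe.2 (Finset.mem_univ _))]
  refine Finset.sum_le_sum fun τ _ => ?_
  rw [← Finset.card_image_of_injOn (f := fun x => (Φ x).1)]
  · refine hbd τ _ fun P hP => ?_
    rw [Finset.mem_image] at hP
    obtain ⟨x, hx, rfl⟩ := hP
    rw [Finset.mem_filter, Finset.mem_product] at hx
    refine ⟨⟨x.1, hx.1.1, hP1X _ _⟩, fun b => ?_⟩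
    rw [← hx.2]
    exact hfrob x b
  · intro x hx x' hx' h
    rw [Finset.mem_coe, Finset.mem_filter] at hx hx'
    exact hΦ (Prod.ext h (hx.2.trans hx'.2.symm))


open Polynomial in
theorem x_transc {L : Type*} [Field L] [Algebra (ZMod 2)[X] L] [Algebra (ZMod 2) L]
    (hinj : Function.Injective (algebraMap (ZMod 2)[X] L)) :
    Transcendental (algebraicClosure (ZMod 2) L) (algebraMap (ZMod 2)[X] L X) := by
  intro h
  have h1 : IsAlgebraic (ZMod 2) (algebraMap (ZMod 2)[X] L X) :=
    h.restrictScalars (ZMod 2)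
  obtain ⟨p, hp, hp0⟩ := h1
  apply hp
  apply hinj
  have : IsScalarTower (ZMod 2) (ZMod 2)[X] L :=
    IsScalarTower.of_algebraMap_eq' (RingHom.ext_zmod _ _)
  rw [aeval_algebraMap_apply, aeval_X_left, AlgHom.id_apply] at hp0
  rw [hp0, map_zero]

open Polynomial Module in
theorem family_exists (F L : Type*) [Field F] [Algebra (ZMod 2)[X] F] [IsFractionRing (ZMod 2)[X] F]
    [Field L] [Algebra F L] [FiniteDimensional F L] [Algebra (ZMod 2) L]
    [Algebra (ZMod 2)[X] L] [IsScalarTower (ZMod 2)[X] F L]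
    {B : Type*} [CommRing B] [Algebra (ZMod 2)[X] B] [Algebra B L] [IsScalarTower (ZMod 2)[X] B L]
    [IsIntegralClosure B (ZMod 2)[X] L] {ι : Type*} [Fintype ι] (b : Basis ι (ZMod 2)[X] B) :
    ∃ c1, ∀ l0 : ℕ, ∃ s : Fin (finrank (IntermediateField.adjoin F
        (algebraicClosure (ZMod 2) L : Set L)) L * l0) → B, (∀ i, Dg b (l0 + c1) (s i)) ∧
      LinearIndependent (algebraicClosure (ZMod 2) L) (fun i => algebraMap B L (s i)) := by
  set E := IntermediateField.adjoin F (algebraicClosure (ZMod 2) L : Set L) with hE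
  have hinj : Function.Injective (algebraMap (ZMod 2)[X] L) := by
    rw [IsScalarTower.algebraMap_eq (ZMod 2)[X] F L]
    exact (algebraMap F L).injective.comp (IsFractionRing.injective _ _)
  let β := Module.finBasis E L
  have hden : ∀ j, ∃ v : B, ∃ y : (ZMod 2)[X], y ≠ 0 ∧ algebraMap B L v = algebraMap _ L y * β j := by
    intro j
    have h1 : IsAlgebraic (ZMod 2)[X] (β j) :=
      (IsFractionRing.isAlgebraic_iff (ZMod 2)[X] F L).2 (Algebra.IsAlgebraic.isAlgebraic _)
    obtain ⟨y, hy, hi⟩ := h1.exists_integral_multiple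
    exact ⟨IsIntegralClosure.mk' B _ hi, y, hy, by
      rw [IsIntegralClosure.algebraMap_mk', Algebra.smul_def]⟩
  choose v y hy hv using hden
  obtain ⟨c1, hc1⟩ := exists_Dg_family b v
  refine ⟨c1, fun l0 => ?_⟩
  let s : Fin (finrank E L) × Fin l0 → B := fun p => (X ^ (p.2 : ℕ) : (ZMod 2)[X]) • v p.1
  have hs : ∀ p, Dg b (l0 + c1) (s p) := fun p =>
    Dg.smul (by rw [mem_degreeLT, degree_X_pow]; exact_mod_cast p.2.2) (hc1 _)
  have hli : LinearIndependent (algebraicClosure (ZMod 2) L) (fun p => algebraMap B L (s p)) := by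
    rw [Fintype.linearIndependent_iff]
    intro g hg
    have hxE : algebraMap (ZMod 2)[X] L X ∈ E := by
      rw [IsScalarTower.algebraMap_apply (ZMod 2)[X] F L]
      exact E.algebraMap_mem _
    have hyE : ∀ j, algebraMap (ZMod 2)[X] L (y j) ∈ E := fun j => by
      rw [IsScalarTower.algebraMap_apply (ZMod 2)[X] F L]
      exact E.algebraMap_mem _
    have hκE : ∀ z : algebraicClosure (ZMod 2) L, (z : L) ∈ E := fun z =>
      IntermediateField.subset_adjoin F _ z.2
    let e : Fin (finrank E L) → E := fun j =>
      ∑ i : Fin l0, (⟨g (j, i), hκE _⟩ : E) * (⟨_, hxE⟩ : E) ^ (i : ℕ) * ⟨_, hyE j⟩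
    have he : ∑ j, e j • β j = 0 := by
      rw [← hg, Fintype.sum_prod_type]
      refine Finset.sum_congr rfl fun j _ => ?_
      rw [Finset.sum_smul]
      refine Finset.sum_congr rfl fun i _ => ?_
      rw [Algebra.smul_def, Algebra.smul_def]
      change (g (j, i) : L) * (algebraMap (ZMod 2)[X] L X) ^ (i : ℕ) * algebraMap _ L (y j) * β j =
        (g (j, i) : L) * algebraMap B L ((X ^ (i : ℕ) : (ZMod 2)[X]) • v j)
      rw [Algebra.smul_def, map_mul, ← IsScalarTower.algebraMap_apply, hv, map_pow]
      ring
    have he0 := Fintype.linearIndependent_iff.1 β.linearIndependent e he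
    rintro ⟨j, i⟩
    have h1 : (e j : L) = 0 := by rw [he0 j]; rfl
    have h2 : (e j : L) = (∑ i : Fin l0, (g (j, i) : L) * (algebraMap (ZMod 2)[X] L X) ^ (i : ℕ)) *
        algebraMap _ L (y j) := by
      rw [Finset.sum_mul]
      simp [e]
    rw [h2, mul_eq_zero, or_iff_left ((map_ne_zero_iff _ hinj).2 (hy j))] at h1
    have h3 : (∑ i : Fin l0, C (g (j, i)) * X ^ (i : ℕ) : (algebraicClosure (ZMod 2) L)[X]) = 0 := by
      by_contra hne
      refine x_transc hinj ⟨_, hne, ?_⟩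
      rw [← h1]
      simp [map_sum]
    have h4 := congrArg (fun p => p.coeff i) h3
    simp only [finset_sum_coeff, coeff_C_mul_X_pow, coeff_zero] at h4
    rw [Finset.sum_eq_single i] at h4
    · simpa using h4
    · intro i' _ hne
      rw [if_neg]
      exact fun h => hne (Fin.ext h.symm)
    · simp
  refine ⟨fun i => s (finProdFinEquiv.symm i), fun i => hs _, ?_⟩
  exact hli.comp _ finProdFinEquiv.symm.injective


theorem Hq_bound {F L : Type*} [Field F] [Field L] [Algebra F L] [FiniteDimensional F L]
    [IsGalois F L] (κ : Set L) (q : ℕ) (H : Finset (Gal(L/F)))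
    (hH : ∀ τ ∈ H, ∀ c ∈ κ, τ c = c ^ q) :
    H.card ≤ Module.finrank (IntermediateField.adjoin F κ) L := by
  classical
  rcases H.eq_empty_or_nonempty with rfl | ⟨τ0, h0⟩
  · simp
  have hmem : ∀ τ ∈ H, τ0⁻¹ * τ ∈ (IntermediateField.adjoin F κ).fixingSubgroup := by
    intro τ hτ
    rw [IntermediateField.mem_fixingSubgroup_iff]
    intro z hz
    induction hz using IntermediateField.adjoin_induction with
    | mem c hc =>
      rw [AlgEquiv.mul_apply, hH τ hτ c hc, ← hH τ0 h0 c hc]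
      exact τ0.symm_apply_apply c
    | algebraMap x => exact AlgEquiv.commutes _ x
    | add x y _ _ hx hy => rw [map_add, hx, hy]
    | inv x _ hx => rw [map_inv₀, hx]
    | mul x y _ _ hx hy => rw [map_mul, hx, hy]
  rw [← IsGalois.card_fixingSubgroup_eq_finrank, ← Nat.card_eq_finsetCard H]
  refine Nat.card_le_card_of_injective (fun τ : H => ⟨τ0⁻¹ * τ, hmem τ τ.2⟩) ?_
  intro τ τ' h
  have := congrArg Subtype.val h
  exact Subtype.ext (mul_left_cancel this)

open Polynomial in
theorem frob_mem {L : Type*} [Field L] [Algebra (ZMod 2) L] [Algebra (ZMod 2)[X] L] 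
    {B : Type*} [CommRing B] [Algebra (ZMod 2)[X] B] [Algebra B L] [IsScalarTower (ZMod 2)[X] B L]
    [IsIntegralClosure B (ZMod 2)[X] L] {k : Type*} [Field k] (τ : L →+* L) (τB : B → B)
    (hτ : ∀ b, algebraMap B L (τB b) = τ (algebraMap B L b)) (P : B →+* k) (q : ℕ)
    (hP : ∀ b, P (τB b) = P b ^ q) (c : L) (hc : c ∈ algebraicClosure (ZMod 2) L) :
    τ c = c ^ q := by
  have : IsScalarTower (ZMod 2) (ZMod 2)[X] L :=
    IsScalarTower.of_algebraMap_eq' (RingHom.ext_zmod _ _)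
  have hinj := IsIntegralClosure.algebraMap_injective B (ZMod 2)[X] L
  have hB : ∀ z ∈ algebraicClosure (ZMod 2) L, ∃ b : B, algebraMap B L b = z := by
    intro z hz
    have h1 : IsIntegral (ZMod 2) z := (mem_algebraicClosure_iff.1 hz).isIntegral
    have h2 : IsIntegral (ZMod 2)[X] z := h1.tower_top
    exact ⟨IsIntegralClosure.mk' B _ h2, IsIntegralClosure.algebraMap_mk' _ _ _⟩
  have hPinj : ∀ b : B, algebraMap B L b ∈ algebraicClosure (ZMod 2) L → P b = 0 → b = 0 := by
    intro b hb h0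
    by_contra hne
    obtain ⟨b', hb'⟩ := hB _ (inv_mem hb)
    have hbb : b * b' = 1 := hinj (by
      rw [map_mul, hb', map_one, mul_inv_cancel₀]
      rwa [Ne, map_eq_zero_iff _ hinj])
    have := congrArg P hbb
    rw [map_mul, h0, zero_mul, map_one] at this
    exact zero_ne_one this
  obtain ⟨b, rfl⟩ := hB c hc
  have hτc : τ (algebraMap B L b) ∈ algebraicClosure (ZMod 2) L := by
    rw [mem_algebraicClosure_iff] at hc ⊢
    obtain ⟨p, hp, hp0⟩ := hc
    refine ⟨p, hp, ?_⟩
    have h1 := congrArg τ hp0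
    rw [aeval_def, hom_eval₂, map_zero] at h1
    have hc : τ.comp (algebraMap (ZMod 2) L) = algebraMap (ZMod 2) L := RingHom.ext_zmod _ _
    rw [hc] at h1
    exact h1
  have h1 := hPinj (τB b - b ^ q) (by
    rw [map_sub, map_pow, hτ]
    exact sub_mem hτc (pow_mem hc _)) (by rw [map_sub, map_pow, hP, sub_self])
  rw [← hτ, ← map_pow, sub_eq_zero.1 h1]

theorem tau0_exists {F L : Type*} [Field F] [Field L] [Algebra F L] [FiniteDimensional F L]
    [IsGalois F L] (κ : Set L) (q : ℕ) (τ : Gal(L/F)) (hτ : ∀ c ∈ κ, τ c = c ^ q) (y : L)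
    (hy : (minpoly (IntermediateField.adjoin F κ) y).natDegree = (minpoly F y).natDegree) :
    ∃ τ0 : Gal(L/F), (∀ c ∈ κ, τ0 c = c ^ q) ∧ τ0 y = y := by
  set E := IntermediateField.adjoin F κ
  have hint : IsIntegral F y := Algebra.IsIntegral.isIntegral y
  have hintE : IsIntegral E y := Algebra.IsIntegral.isIntegral y
  have h1 : minpoly E y = (minpoly F y).map (algebraMap F E) := by
    refine (Polynomial.eq_of_monic_of_dvd_of_natDegree_le (minpoly.monic hintE)
      ((minpoly.monic hint).map _) (minpoly.dvd_map_of_isScalarTower F E y) ?_).symm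
    rw [hy, Polynomial.natDegree_map]
  have h2 : minpoly E y = minpoly E (τ y) := by
    symm
    apply minpoly.eq_of_root hintE.isAlgebraic
    rw [h1, Polynomial.aeval_map_algebraMap, Polynomial.aeval_algHom_apply, minpoly.aeval, map_zero]
  have : IsGalois E L := inferInstance
  obtain ⟨σ, hσ⟩ := (Normal.minpoly_eq_iff_mem_orbit L).1 h2
  refine ⟨(σ.restrictScalars F) * τ, fun c hc => ?_, hσ⟩
  have hcE : c ∈ E := IntermediateField.subset_adjoin F κ hc
  change σ (τ c) = c ^ q
  rw [hτ c hc]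
  exact σ.commutes ⟨c ^ q, pow_mem hcE _⟩

theorem numeric (c c1 ν d : ℕ) (hν : 1 ≤ ν) : ∃ l0, ∀ a, ∃ N, a ≤ N ∧ ∀ n ≥ N, ∃ m,
    2 ^ (n - a) * ((l0 + c1) + c) + m + c < (ν * l0) * m ∧
    (ν - 1) * ((l0 + c1) + 2 ^ a * (m + c + c) + c + c) + d < 2 ^ n := by
  obtain ⟨μ, rfl⟩ : ∃ μ, ν = μ + 1 := ⟨ν - 1, by omega⟩
  simp only [Nat.add_sub_cancel]
  refine ⟨μ * (c1 + c) + 2, fun a => ?_⟩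
  set l0 := μ * (c1 + c) + 2 with hl0
  obtain ⟨R, hR⟩ : ∃ R, (μ + 1) * l0 = R + 1 := ⟨(μ + 1) * l0 - 1, by
    have : 0 < (μ + 1) * l0 := by positivity
    omega⟩
  have hRK : μ * (l0 + c1 + c) + 1 ≤ R := by
    have h1 : μ * (l0 + c1 + c) = μ * l0 + μ * (c1 + c) := by ring
    have h2 : (μ + 1) * l0 = μ * l0 + l0 := by ring
    omega
  set const := μ * 2 ^ a * (c + R) + R * (μ * (l0 + c1 + 2 ^ a * (c + c) + c + c) + d) with hconst
  refine ⟨a + const, by omega, fun n hn => ?_⟩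
  have hpow : 2 ^ n = 2 ^ a * 2 ^ (n - a) := by rw [← pow_add]; congr 1; omega
  set T := 2 ^ (n - a) * ((l0 + c1) + c) + c with hT
  have hRpos : 0 < R := by omega
  refine ⟨T / R + 1, ?_, ?_⟩
  · have := Nat.lt_mul_div_succ T hRpos
    rw [hR, add_mul, one_mul]
    omega
  · set m := T / R + 1 with hm
    have h1 : R * m ≤ T + R := by
      rw [hm, mul_add, mul_one]
      exact Nat.add_le_add_right (Nat.mul_div_le T R) R
    have h2 : const < 2 ^ n := lt_of_lt_of_le Nat.lt_two_pow_self
      (Nat.pow_le_pow_right (by norm_num) (by omega))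
    refine lt_of_mul_lt_mul_left (a := R) ?_ (Nat.zero_le _)
    have h3 : R * (μ * (l0 + c1 + 2 ^ a * (m + c + c) + c + c) + d) =
        μ * 2 ^ a * (R * m) + R * (μ * (l0 + c1 + 2 ^ a * (c + c) + c + c) + d) := by ring
    have h4 : μ * 2 ^ a * (R * m) ≤ μ * 2 ^ a * (T + R) := Nat.mul_le_mul_left _ h1
    have h5 : μ * 2 ^ a * (T + R) = μ * (l0 + c1 + c) * 2 ^ n + μ * 2 ^ a * (c + R) := by
      rw [hT, hpow]; ring
    have h6 : (μ * (l0 + c1 + c) + 1) * 2 ^ n ≤ R * 2 ^ n := Nat.mul_le_mul_right _ hRK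
    have h7 : (μ * (l0 + c1 + c) + 1) * 2 ^ n = μ * (l0 + c1 + c) * 2 ^ n + 2 ^ n := by ring
    omega


open Polynomial in
theorem mem_range_of_pow {k : Type*} [Field k] [Algebra (ZMod 2) k] (n : ℕ) (hn : n ≠ 0)
    (ι : GaloisField 2 n →ₐ[ZMod 2] k) (z : k) (hz : z ^ 2 ^ n = z) : ∃ β, ι β = z := by
  classical
  have : Finite (GaloisField 2 n) := inferInstance
  have : Fintype (GaloisField 2 n) := Fintype.ofFinite _
  have hcard : Fintype.card (GaloisField 2 n) = 2 ^ n := by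
    rw [← Nat.card_eq_fintype_card, GaloisField.card 2 n hn]
  have h1 : (1 : ℕ) < 2 ^ n := Nat.one_lt_two_pow hn
  have hne : (X ^ 2 ^ n - X : k[X]) ≠ 0 := FiniteField.X_pow_card_sub_X_ne_zero k h1
  have hsub : Finset.univ.image ι ⊆ (X ^ 2 ^ n - X : k[X]).roots.toFinset := by
    intro w hw
    obtain ⟨a, -, rfl⟩ := Finset.mem_image.1 hw
    rw [Multiset.mem_toFinset, mem_roots hne, IsRoot.def, eval_sub, eval_pow, eval_X, ← map_pow,
      ← hcard, FiniteField.pow_card, sub_self]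
  have hιi : Function.Injective ι := ι.toRingHom.injective
  have heq := Finset.eq_of_subset_of_card_le hsub (by
    rw [Finset.card_image_of_injective _ hιi, Finset.card_univ, hcard]
    refine (Multiset.toFinset_card_le _).trans ((card_roots' _).trans ?_)
    rw [FiniteField.X_pow_card_sub_X_natDegree_eq k h1])
  have : z ∈ Finset.univ.image ι := by
    rw [heq, Multiset.mem_toFinset, mem_roots hne, IsRoot.def, eval_sub, eval_pow, eval_X, hz,
      sub_self]
  obtain ⟨a, -, h⟩ := Finset.mem_image.1 this
  exact ⟨a, h⟩

open Polynomial in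
theorem good_card (n : ℕ) (hn : n ≠ 0) (w : (ZMod 2)[X]) (hw : w ≠ 0) :
    ∃ W : Finset (GaloisField 2 n), (∀ a ∈ W, aeval a w ≠ 0) ∧ 2 ^ n ≤ W.card + w.natDegree := by
  classical
  have : Fintype (GaloisField 2 n) := Fintype.ofFinite _
  have hcard : Fintype.card (GaloisField 2 n) = 2 ^ n := by
    rw [← Nat.card_eq_fintype_card, GaloisField.card 2 n hn]
  have hinj := (algebraMap (ZMod 2) (GaloisField 2 n)).injective
  have hw' : w.map (algebraMap (ZMod 2) (GaloisField 2 n)) ≠ 0 :=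
    (Polynomial.map_ne_zero_iff hinj).2 hw
  refine ⟨(w.map (algebraMap (ZMod 2) (GaloisField 2 n))).roots.toFinsetᶜ, ?_, ?_⟩
  · intro a ha h
    rw [Finset.mem_compl, Multiset.mem_toFinset, mem_roots hw', IsRoot.def, eval_map_algebraMap] at ha
    exact ha h
  · have h1 := Finset.card_compl_add_card
      (w.map (algebraMap (ZMod 2) (GaloisField 2 n))).roots.toFinset
    have h2 : (w.map (algebraMap (ZMod 2) (GaloisField 2 n))).roots.toFinset.card ≤ w.natDegree :=
      (Multiset.toFinset_card_le _).trans ((card_roots' _).trans natDegree_map_le)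
    omega

open Polynomial Module in
theorem main_abs (F L : Type*) [Field F] [Algebra (ZMod 2)[X] F] [IsFractionRing (ZMod 2)[X] F]
    [Field L] [Algebra F L] [FiniteDimensional F L] [IsGalois F L] [Algebra (ZMod 2) L]
    [Algebra (ZMod 2)[X] L] [IsScalarTower (ZMod 2)[X] F L]
    {B : Type*} [CommRing B] [IsDomain B] [Algebra (ZMod 2)[X] B] [Algebra B L]
    [IsScalarTower (ZMod 2)[X] B L] [IsIntegralClosure B (ZMod 2)[X] L]
    [Module.Finite (ZMod 2)[X] B] [Module.Free (ZMod 2)[X] B]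
    [MulSemiringAction Gal(L/F) B] [SMulCommClass Gal(L/F) (ZMod 2)[X] B]
    [Algebra.IsInvariant (ZMod 2)[X] B Gal(L/F)]
    (hact : ∀ (σ : Gal(L/F)) (b : B), algebraMap B L (σ • b) = σ (algebraMap B L b))
    (k : Type*) [Field k] [IsAlgClosed k] [Algebra (ZMod 2) k]
    (y : B) (hy : (minpoly (IntermediateField.adjoin F (algebraicClosure (ZMod 2) L : Set L))
      (algebraMap B L y)).natDegree = (minpoly F (algebraMap B L y)).natDegree)
    (w : (ZMod 2)[X]) (hw : w ≠ 0) :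
    ∃ N : ℕ, ∀ n ≥ N, ∀ ι : GaloisField 2 n →ₐ[ZMod 2] k, ∃ α β : GaloisField 2 n,
      ∃ P : B →+* k, P (algebraMap (ZMod 2)[X] B X) = ι α ∧ P y = ι β ∧ aeval α w ≠ 0 := by
  classical
  have hinj := IsIntegralClosure.algebraMap_injective B (ZMod 2)[X] L
  have hAL : Function.Injective (algebraMap (ZMod 2)[X] L) := by
    rw [IsScalarTower.algebraMap_eq (ZMod 2)[X] F L]
    exact (algebraMap F L).injective.comp (IsFractionRing.injective _ _)
  have hAB : Function.Injective (algebraMap (ZMod 2)[X] B) := by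
    rw [IsScalarTower.algebraMap_eq (ZMod 2)[X] B L] at hAL
    exact Function.Injective.of_comp hAL
  have : FaithfulSMul (ZMod 2)[X] B := (faithfulSMul_iff_algebraMap_injective _ _).2 hAB
  have : FaithfulSMul (ZMod 2)[X] L := (faithfulSMul_iff_algebraMap_injective _ _).2 hAL
  let algB : Algebra (ZMod 2) B := ((algebraMap (ZMod 2)[X] B).comp C).toAlgebra
  have : IsScalarTower (ZMod 2) (ZMod 2)[X] B := IsScalarTower.of_algebraMap_eq' rfl
  let b := Module.Free.chooseBasis (ZMod 2)[X] B
  have hne : Nonempty (Module.Free.ChooseBasisIndex (ZMod 2)[X] B) := b.index_nonempty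
  have : Fintype Gal(L/F) := Fintype.ofFinite _
  have hcardι : Fintype.card (Module.Free.ChooseBasisIndex (ZMod 2)[X] B) =
      Fintype.card Gal(L/F) := by
    rw [← Module.finrank_eq_card_basis b, IsIntegralClosure.rank (ZMod 2)[X] F L B,
      ← IsGalois.card_aut_eq_finrank, Nat.card_eq_fintype_card]
  obtain ⟨ca, hca⟩ := Dg_mul_exists b
  obtain ⟨cb, hcb⟩ := Dg_aut_exists b (G := Gal(L/F))
  obtain ⟨cc, hcc⟩ := Dg_norm_exists b
  let c := ca + cb + cc
  have hmul : ∀ M M' u v, Dg b M u → Dg b M' v → Dg b (M + M' + c) (u * v) :=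
    fun M M' u v hu hv => (hca M M' u v hu hv).mono (by omega)
  have haut : ∀ (τ : Gal(L/F)) M v, Dg b M v → Dg b (M + c) (τ • v) :=
    fun τ M v hv => (hcb τ M v hv).mono (by omega)
  have hnorm : ∀ M g, Dg b M g → (Algebra.norm (ZMod 2)[X] g).natDegree ≤
      Fintype.card (Module.Free.ChooseBasisIndex (ZMod 2)[X] B) * (M + c) :=
    fun M g hg => (hcc M g hg).trans (Nat.mul_le_mul_left _ (by omega))
  obtain ⟨c1, hfam⟩ := family_exists F L b
  set E := IntermediateField.adjoin F (algebraicClosure (ZMod 2) L : Set L) with hE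
  set ν := finrank E L with hν
  have hν1 : 1 ≤ ν := Module.finrank_pos
  obtain ⟨l0, hnum⟩ := numeric c c1 ν w.natDegree hν1
  obtain ⟨s, hs, hli⟩ := hfam l0
  obtain ⟨a, ha⟩ := indep_pow_s3 (fun f hf => alg_of_pow (F := F) f hf) _ hli
  have hind : ∀ t : Fin (ν * l0) → B, ∑ i, s i * t i ^ 2 ^ a = 0 → t = 0 := by
    intro t ht
    have h1 := ha (fun i => algebraMap B L (t i)) (by
      have := congrArg (algebraMap B L) ht
      simpa using this)
    ext i
    exact (map_eq_zero_iff _ hinj).1 (congrFun h1 i)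
  obtain ⟨N, haN, hN⟩ := hnum a
  refine ⟨N + 1, fun n hn ι => ?_⟩
  have hn0 : n ≠ 0 := by omega
  obtain ⟨m, hm1, hm2⟩ := hN n (by omega)
  obtain ⟨W, hW, hWc⟩ := good_card n hn0 w hw
  -- the elements acting as Frobenius on constants
  let H : Finset Gal(L/F) := Finset.univ.filter fun τ =>
    ∀ c ∈ algebraicClosure (ZMod 2) L, τ c = c ^ 2 ^ n
  have hHmem : ∀ (τ : Gal(L/F)) (P : B →+* k), (∀ b, P (τ • b) = P b ^ 2 ^ n) → τ ∈ H := by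
    intro τ P hP
    refine Finset.mem_filter.2 ⟨Finset.mem_univ _, fun c hc => ?_⟩
    exact frob_mem (τ : L →+* L) (fun b : B => τ • b) (hact τ) P _ hP c hc
  have hHcard : H.card ≤ ν := Hq_bound _ (2 ^ n) H fun τ hτ => (Finset.mem_filter.1 hτ).2
  obtain ⟨P00, hP00⟩ := lift_exists (B := B) k (ι 0)
  obtain ⟨τ', hτ'⟩ := frob_exists (G := Gal(L/F)) n hn0 ι 0 P00 hP00
  obtain ⟨τ0, hτ0, hτ0y⟩ := tau0_exists _ (2 ^ n) τ'
    (Finset.mem_filter.1 (hHmem τ' P00 hτ')).2 (algebraMap B L y) hy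
  have hτ0H : τ0 ∈ H := Finset.mem_filter.2 ⟨Finset.mem_univ _, hτ0⟩
  by_contra hcon
  push Not at hcon
  let Bd := Fintype.card Gal(L/F) * ((l0 + c1) + 2 ^ a * (m + c + c) + c + c)
  have hcount := count_pairs (B := B) (G := Gal(L/F)) n hn0 ι W
    (fun τ => if τ ∈ H.erase τ0 then Bd else 0) (by
      intro τ S hS
      by_cases hτ : τ ∈ H.erase τ0
      · rw [if_pos hτ]
        have := stepanov b hmul haut hnorm s hs hind (by omega : a ≤ n) hm1 τ S
          fun P hP => (hS P hP).2
        rw [hcardι] at this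
        exact this
      · rw [if_neg hτ, Nat.le_zero, Finset.card_eq_zero, Finset.eq_empty_iff_forall_notMem]
        intro P hP
        obtain ⟨⟨α, hα, hPα⟩, hPτ⟩ := hS P hP
        have hττ : τ = τ0 := by
          by_contra hne
          exact hτ (Finset.mem_erase.2 ⟨hne, hHmem τ P hPτ⟩)
        subst hττ
        have h1 : τ • y = y := hinj ((hact τ y).trans hτ0y)
        have h2 := hPτ y
        rw [h1] at h2
        obtain ⟨β, hβ⟩ := mem_range_of_pow n hn0 ι (P y) h2.symm
        exact hW α hα (hcon α β P hPα hβ.symm))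
  rw [Finset.sum_ite_mem, Finset.univ_inter, Finset.sum_const, smul_eq_mul,
    Finset.card_erase_of_mem hτ0H] at hcount
  have hG : 0 < Fintype.card Gal(L/F) := Fintype.card_pos
  have h3 : W.card ≤ (H.card - 1) * ((l0 + c1) + 2 ^ a * (m + c + c) + c + c) := by
    refine Nat.le_of_mul_le_mul_right ?_ hG
    refine hcount.trans (le_of_eq ?_)
    simp only [Bd]
    ring
  have h4 : (H.card - 1) * ((l0 + c1) + 2 ^ a * (m + c + c) + c + c) ≤
    (ν - 1) * ((l0 + c1) + 2 ^ a * (m + c + c) + c + c) := Nat.mul_le_mul_right _ (by omega)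
  omega


open Polynomial Module in
theorem main_conc (F L : Type*) [Field F] [Algebra (ZMod 2)[X] F] [IsFractionRing (ZMod 2)[X] F]
    [Field L] [Algebra F L] [FiniteDimensional F L] [IsGalois F L] [Algebra (ZMod 2) L]
    [Algebra (ZMod 2)[X] L] [IsScalarTower (ZMod 2)[X] F L]
    (k : Type*) [Field k] [IsAlgClosed k] [Algebra (ZMod 2) k]
    (y : L) (hyi : IsIntegral (ZMod 2)[X] y)
    (hy : (minpoly (IntermediateField.adjoin F (algebraicClosure (ZMod 2) L : Set L))
      y).natDegree = (minpoly F y).natDegree)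
    (w : (ZMod 2)[X]) (hw : w ≠ 0) :
    ∃ N : ℕ, ∀ n ≥ N, ∀ _ : GaloisField 2 n →ₐ[ZMod 2] k, ∃ α β : GaloisField 2 n,
      aeval α w ≠ 0 ∧ ∀ h : (ZMod 2)[X][X], aeval y h = 0 →
        eval₂ (aeval α : (ZMod 2)[X] →ₐ[ZMod 2] GaloisField 2 n).toRingHom β h = 0 := by
  let B := integralClosure (ZMod 2)[X] L
  have hAL : Function.Injective (algebraMap (ZMod 2)[X] L) := by
    rw [IsScalarTower.algebraMap_eq (ZMod 2)[X] F L]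
    exact (algebraMap F L).injective.comp (IsFractionRing.injective _ _)
  have : FaithfulSMul (ZMod 2)[X] L := (faithfulSMul_iff_algebraMap_injective _ _).2 hAL
  have : Module.Finite (ZMod 2)[X] B := IsIntegralClosure.finite (ZMod 2)[X] F L B
  have : Module.Free (ZMod 2)[X] B := IsIntegralClosure.module_free (ZMod 2)[X] F L B
  have : IsFractionRing B L :=
    IsIntegralClosure.isFractionRing_of_finite_extension (ZMod 2)[X] F L B
  let act : MulSemiringAction Gal(L/F) B := IsIntegralClosure.MulSemiringAction (ZMod 2)[X] F L B
  have hinv : Algebra.IsInvariant (ZMod 2)[X] B Gal(L/F) :=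
    Algebra.isInvariant_of_isGalois (ZMod 2)[X] F L B
  have hact : ∀ (σ : Gal(L/F)) (b : B), algebraMap B L (σ • b) = σ (algebraMap B L b) :=
    fun σ b => algebraMap_galRestrict_apply (ZMod 2)[X] σ b
  have hinj := IsIntegralClosure.algebraMap_injective B (ZMod 2)[X] L
  have hcomm : SMulCommClass Gal(L/F) (ZMod 2)[X] B := ⟨fun σ a b => by
    apply hinj
    rw [hact, Algebra.smul_def, Algebra.smul_def, map_mul, map_mul, map_mul, hact,
      ← IsScalarTower.algebraMap_apply, IsScalarTower.algebraMap_apply (ZMod 2)[X] F L,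
      AlgEquiv.commutes]⟩
  obtain ⟨N, hN⟩ := main_abs F L (B := B) hact k ⟨y, hyi⟩ hy w hw
  refine ⟨N, fun n hn ι => ?_⟩
  obtain ⟨α, β, P, hα, hβ, hwα⟩ := hN n hn ι
  refine ⟨α, β, hwα, fun h hh => ?_⟩
  apply ι.toRingHom.injective
  have h1 : aeval (⟨y, hyi⟩ : B) h = 0 := by
    apply hinj
    rw [← aeval_algebraMap_apply, map_zero]
    exact hh
  have h2 := congrArg P h1
  rw [aeval_def, hom_eval₂, map_zero] at h2
  rw [map_zero, hom_eval₂]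
  have hc : ι.toRingHom.comp (aeval α : (ZMod 2)[X] →ₐ[ZMod 2] GaloisField 2 n).toRingHom =
      P.comp (algebraMap (ZMod 2)[X] B) := by
    refine Polynomial.ringHom_ext' (RingHom.ext_zmod _ _) ?_
    simpa using hα.symm
  rw [hc]
  have hβ' : ι.toRingHom β = P ⟨y, hyi⟩ := hβ.symm
  rw [hβ']
  exact h2


theorem mem_range_of_alg {k Ω : Type*} [Field k] [IsAlgClosed k] [Field Ω] [Algebra (ZMod 2) k]
    [Algebra (ZMod 2) Ω] (j : k →+* Ω) (z : Ω) (hz : IsAlgebraic (ZMod 2) z) : ∃ u, j u = z := by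
  let := j.toAlgebra
  have : IsScalarTower (ZMod 2) k Ω := IsScalarTower.of_algebraMap_eq' (RingHom.ext_zmod _ _)
  have h1 : IsIntegral k z := hz.isIntegral.tower_top
  have h2 : (minpoly k z).degree = 1 :=
    IsAlgClosed.degree_eq_one_of_irreducible k (minpoly.irreducible h1)
  exact minpoly.mem_range_of_degree_eq_one k z h2

open Polynomial in
theorem degree_over_E_aux (F L : Type*) [Field F] [Algebra (ZMod 2)[X] F] [IsFractionRing (ZMod 2)[X] F]
    [Field L] [Algebra F L] [FiniteDimensional F L] [Algebra (ZMod 2) L]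
    (k : Type*) [Field k] [IsAlgClosed k] [Algebra (ZMod 2) k]
    (K Ω : Type*) [Field K] [Algebra k[X] K] [IsFractionRing k[X] K] [Field Ω] [IsAlgClosed Ω]
    [Algebra K Ω] [Algebra F Ω] [Algebra (ZMod 2) Ω] (ψ : F →+* K)
    (hψ : ψ.comp (algebraMap (ZMod 2)[X] F) =
      (algebraMap k[X] K).comp (mapRingHom (algebraMap (ZMod 2) k)))
    (hFΩ : algebraMap F Ω = (algebraMap K Ω).comp ψ)
    (p : (ZMod 2)[X][X]) (hp : p.Monic)
    (hirr : Irreducible (p.map (mapRingHom (algebraMap (ZMod 2) k))))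
    (y : L) (hy : aeval y (p.map (algebraMap (ZMod 2)[X] F)) = 0) :
    (minpoly (IntermediateField.adjoin F (algebraicClosure (ZMod 2) L : Set L))
      y).natDegree = (minpoly F y).natDegree := by
  set E := IntermediateField.adjoin F (algebraicClosure (ZMod 2) L : Set L) with hE
  have hp1 : Irreducible p := hp.irreducible_of_irreducible_map _ _ hirr
  have hpF : Irreducible (p.map (algebraMap (ZMod 2)[X] F)) :=
    (hp.irreducible_iff_irreducible_map_fraction_map).1 hp1
  have hminF : p.map (algebraMap (ZMod 2)[X] F) = minpoly F y :=
    minpoly.eq_of_irreducible_of_monic hpF hy (hp.map _)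
  have hpK : Irreducible ((p.map (mapRingHom (algebraMap (ZMod 2) k))).map (algebraMap k[X] K)) :=
    ((hp.map _).irreducible_iff_irreducible_map_fraction_map).1 hirr
  let Λ : L →ₐ[F] Ω := IsAlgClosed.lift
  have hminK : (p.map (mapRingHom (algebraMap (ZMod 2) k))).map (algebraMap k[X] K) =
      minpoly K (Λ y) := by
    refine minpoly.eq_of_irreducible_of_monic hpK ?_ ((hp.map _).map _)
    have h1 : Λ (aeval y (p.map (algebraMap (ZMod 2)[X] F))) = 0 := by rw [hy, map_zero]
    rw [← aeval_algHom_apply, aeval_def, eval₂_map] at h1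
    rw [Polynomial.map_map, aeval_def, eval₂_map]
    have hc : (algebraMap F Ω).comp (algebraMap (ZMod 2)[X] F) =
      (algebraMap K Ω).comp ((algebraMap k[X] K).comp (mapRingHom (algebraMap (ZMod 2) k))) := by
      rw [← hψ, hFΩ, RingHom.comp_assoc]
    rw [hc] at h1
    exact h1
  have hdeg : (minpoly K (Λ y)).natDegree = (minpoly F y).natDegree := by
    rw [← hminF, ← hminK, (hp.map _).natDegree_map, hp.natDegree_map, hp.natDegree_map]
  have hrange : ∀ z ∈ E, Λ z ∈ (algebraMap K Ω).fieldRange := by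
    intro z hz
    induction hz using IntermediateField.adjoin_induction with
    | mem c hc =>
      have h1 : IsAlgebraic (ZMod 2) c := mem_algebraicClosure_iff.1 hc
      have h2 : IsAlgebraic (ZMod 2) (Λ c) := by
        obtain ⟨q, hq, hq0⟩ := h1
        refine ⟨q, hq, ?_⟩
        have h3 := congrArg Λ.toRingHom hq0
        rw [aeval_def, hom_eval₂, map_zero] at h3
        have hc : Λ.toRingHom.comp (algebraMap (ZMod 2) L) = algebraMap (ZMod 2) Ω :=
          RingHom.ext_zmod _ _
        rw [hc] at h3
        exact h3
      obtain ⟨u, hu⟩ := mem_range_of_alg ((algebraMap K Ω).comp ((algebraMap k[X] K).comp C)) _ h2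
      exact ⟨_, hu⟩
    | algebraMap x => rw [Λ.commutes, hFΩ]; exact ⟨ψ x, rfl⟩
    | add x y _ _ hx hy => rw [map_add]; exact add_mem hx hy
    | inv x _ hx => rw [map_inv₀]; exact inv_mem hx
    | mul x y _ _ hx hy => rw [map_mul]; exact mul_mem hx hy
  have hintE : IsIntegral E y := Algebra.IsIntegral.isIntegral y
  have hint : IsIntegral F y := Algebra.IsIntegral.isIntegral y
  apply le_antisymm
  · have h1 := natDegree_le_of_dvd (minpoly.dvd_map_of_isScalarTower F E y)
      ((minpoly.monic hint).map _).ne_zero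
    rwa [natDegree_map] at h1
  · let g := (minpoly E y).map (Λ.toRingHom.comp (algebraMap E L))
    have hg : g.Monic := (minpoly.monic hintE).map _
    have hl : g ∈ lifts (algebraMap K Ω) := by
      rw [lifts_iff_coeff_lifts]
      intro i
      rw [coeff_map]
      exact hrange _ ((minpoly E y).coeff i).2
    obtain ⟨gk, hgk, hgd, hgm⟩ := lifts_and_natDegree_eq_and_monic hl hg
    have h0 : aeval (Λ y) gk = 0 := by
      rw [aeval_def, ← eval_map, hgk, eval_map, ]
      have := congrArg Λ.toRingHom (minpoly.aeval E y)
      rw [aeval_def, hom_eval₂, map_zero] at this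
      exact this
    have h1 := natDegree_le_of_dvd (minpoly.dvd _ _ h0) hgm.ne_zero
    rw [hdeg, hgd] at h1
    simpa [g] using h1

open Polynomial in
theorem degree_over_E (F L : Type*) [Field F] [Algebra (ZMod 2)[X] F] [IsFractionRing (ZMod 2)[X] F]
    [Field L] [Algebra F L] [FiniteDimensional F L] [Algebra (ZMod 2) L]
    (k : Type*) [Field k] [IsAlgClosed k] [Algebra (ZMod 2) k]
    (p : (ZMod 2)[X][X]) (hp : p.Monic)
    (hirr : Irreducible (p.map (mapRingHom (algebraMap (ZMod 2) k))))
    (y : L) (hy : aeval y (p.map (algebraMap (ZMod 2)[X] F)) = 0) :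
    (minpoly (IntermediateField.adjoin F (algebraicClosure (ZMod 2) L : Set L))
      y).natDegree = (minpoly F y).natDegree := by
  have hφ : Function.Injective ((algebraMap k[X] (FractionRing k[X])).comp
      (mapRingHom (algebraMap (ZMod 2) k))) :=
    (IsFractionRing.injective k[X] (FractionRing k[X])).comp
      (map_injective _ (algebraMap (ZMod 2) k).injective)
  let ψ : F →+* FractionRing k[X] := IsFractionRing.lift hφ
  have hψ : ψ.comp (algebraMap (ZMod 2)[X] F) = (algebraMap k[X] (FractionRing k[X])).comp
      (mapRingHom (algebraMap (ZMod 2) k)) := RingHom.ext fun z => IsFractionRing.lift_algebraMap (K := F) hφ z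
  let algFΩ : Algebra F (AlgebraicClosure (FractionRing k[X])) :=
    ((algebraMap (FractionRing k[X]) (AlgebraicClosure (FractionRing k[X]))).comp ψ).toAlgebra
  let alg2 : Algebra (ZMod 2) (AlgebraicClosure (FractionRing k[X])) :=
    ((algebraMap F (AlgebraicClosure (FractionRing k[X]))).comp
      ((algebraMap (ZMod 2)[X] F).comp C)).toAlgebra
  exact degree_over_E_aux F L k (FractionRing k[X]) (AlgebraicClosure (FractionRing k[X]))
    ψ hψ rfl p hp hirr y hy


open Polynomial in
/-- two-variable polynomials as iterated polynomials. -/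
noncomputable def thetaEquiv (R : Type*) [CommRing R] : MvPolynomial (Fin 2) R ≃+* R[X][X] :=
  RingEquiv.ofRingHom
    (MvPolynomial.eval₂Hom (C.comp C) ![C X, X])
    (Polynomial.eval₂RingHom (Polynomial.eval₂RingHom MvPolynomial.C (MvPolynomial.X 0))
      (MvPolynomial.X 1))
    (by
      refine Polynomial.ringHom_ext' (Polynomial.ringHom_ext' ?_ ?_) ?_
      · ext; simp
      · simp
      · simp)
    (by
      refine MvPolynomial.ringHom_ext' ?_ ?_
      · ext; simp
      · intro i; fin_cases i <;> simp)

open Polynomial in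
theorem theta_C (R : Type*) [CommRing R] (r : R) :
    thetaEquiv R (MvPolynomial.C r) = C (C r) := by
  simp [thetaEquiv]

open Polynomial in
theorem theta_X0 (R : Type*) [CommRing R] :
    thetaEquiv R (MvPolynomial.X 0) = C X := by
  simp [thetaEquiv]

open Polynomial in
theorem theta_X1 (R : Type*) [CommRing R] :
    thetaEquiv R (MvPolynomial.X 1) = X := by
  simp [thetaEquiv]

open Polynomial in
theorem theta_map {R S : Type*} [CommRing R] [CommRing S] (φ : R →+* S)
    (p : MvPolynomial (Fin 2) R) :
    thetaEquiv S (MvPolynomial.map φ p) = (thetaEquiv R p).map (mapRingHom φ) := by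
  have : (thetaEquiv S : MvPolynomial (Fin 2) S →+* S[X][X]).comp (MvPolynomial.map φ) =
      (mapRingHom (mapRingHom φ)).comp (thetaEquiv R : MvPolynomial (Fin 2) R →+* R[X][X]) := by
    refine MvPolynomial.ringHom_ext' ?_ ?_
    · ext r : 1
      simp [theta_C]
    · intro i
      fin_cases i <;> simp [theta_X0, theta_X1]
  exact congrArg (fun f => f p) this

open Polynomial in
theorem theta_eval {S : Type*} [CommRing S] [Algebra (ZMod 2) S] (α β : S)
    (p : MvPolynomial (Fin 2) (ZMod 2)) :
    MvPolynomial.aeval ![α, β] p =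
      eval₂ (aeval α : (ZMod 2)[X] →ₐ[ZMod 2] S).toRingHom β (thetaEquiv (ZMod 2) p) := by
  have : (MvPolynomial.aeval ![α, β] : MvPolynomial (Fin 2) (ZMod 2) →ₐ[ZMod 2] S).toRingHom =
      (eval₂RingHom (aeval α : (ZMod 2)[X] →ₐ[ZMod 2] S).toRingHom β).comp
        (thetaEquiv (ZMod 2) : MvPolynomial (Fin 2) (ZMod 2) →+* (ZMod 2)[X][X]) := by
    refine MvPolynomial.ringHom_ext' (RingHom.ext_zmod _ _) ?_
    intro i
    fin_cases i <;> simp [theta_X0, theta_X1]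
  exact congrArg (fun f => f p) this

open Polynomial in
theorem D_monic {R : Type*} [CommRing R] [Nontrivial R] [CharP R 2] (t : ℕ) (ht : 3 ≤ t) (htodd : Odd t) (u : R) :
    ((X + 1) ^ t + X ^ t + C u : R[X]).Monic ∧
    ((X + 1) ^ t + X ^ t + C u : R[X]).natDegree = t - 1 := by
  have hto : ((t : ℕ) : R) = 1 := by
    obtain ⟨m, rfl⟩ := htodd
    have h2 : (2 : R) = 0 := CharTwo.two_eq_zero
    push_cast
    rw [h2, zero_mul, zero_add]
  have h1 : ((X + 1) ^ t + X ^ t + C u : R[X]).coeff (t - 1) = 1 := by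
    rw [coeff_add, coeff_add, coeff_X_add_one_pow, coeff_X_pow, coeff_C, if_neg (by omega),
      if_neg (by omega), Nat.choose_symm (by omega : 1 ≤ t), Nat.choose_one_right, hto]
    simp
  have h2 : ((X + 1) ^ t + X ^ t + C u : R[X]).natDegree ≤ t - 1 := by
    rw [natDegree_le_iff_coeff_eq_zero]
    intro i hi
    rw [coeff_add, coeff_add, coeff_X_add_one_pow, coeff_X_pow, coeff_C, 
      if_neg (by omega : i ≠ 0), add_zero]
    by_cases h : i = t
    · rw [if_pos h, h, Nat.choose_self, Nat.cast_one]
      exact CharTwo.add_self_eq_zero 1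
    · rw [if_neg h, Nat.choose_eq_zero_of_lt (by omega), Nat.cast_zero, add_zero]
  exact ⟨monic_of_natDegree_le_of_coeff_eq_one _ h2 h1,
    le_antisymm h2 (le_natDegree_of_ne_zero (by rw [h1]; exact one_ne_zero))⟩

open Polynomial in
theorem eval_h_ne (t : ℕ) (ht : 3 ≤ t) (htodd : Odd t) (h : (ZMod 2)[X][X])
    (hh : (C X + X) * (C X + X + 1) * h = (C X + 1) ^ t + C X ^ t + (X + 1) ^ t + X ^ t) (e : ZMod 2) :
    eval (X + C e) h ≠ 0 := by
  have hto : ((t : ℕ) : (ZMod 2)[X]) = 1 := by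
    obtain ⟨m, rfl⟩ := htodd
    have h2 : (2 : (ZMod 2)[X]) = 0 := CharTwo.two_eq_zero
    push_cast
    rw [h2, zero_mul, zero_add]
  have h1 := congrArg (fun g => eval (X + C e) (derivative g)) hh
  have hxx : (X + X : (ZMod 2)[X]) = 0 := CharTwo.add_self_eq_zero X
  have h11 : (1 + 1 : (ZMod 2)[X]) = 0 := CharTwo.add_self_eq_zero 1
  have key : eval (X + C e) h = (X + C e + 1) ^ (t - 1) + (X + C e) ^ (t - 1) := by
    simp only [derivative_mul, derivative_add, derivative_C, derivative_X, derivative_one,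
      derivative_pow, eval_add, eval_mul, eval_pow, eval_C, eval_X, eval_one, eval_zero,
      hto] at h1
    have hall : ∀ z : ZMod 2, z = 0 ∨ z = 1 := by decide
    have he := hall e
    rcases he with rfl | rfl
    · simp only [map_zero, add_zero, zero_add, one_mul, mul_one, zero_mul, mul_zero, hxx] at h1 ⊢
      simpa using h1
    · have h3 : (X + (X + C 1) : (ZMod 2)[X]) = 1 := by rw [← add_assoc, hxx]; simp
      simp only [add_zero, zero_add, one_mul, mul_one, zero_mul, mul_zero, h3, h11] at h1 ⊢
      simpa using h1
  rw [key]
  intro h0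
  have h2 := congrArg (eval e) h0
  have h4 : (e + e : ZMod 2) = 0 := CharTwo.add_self_eq_zero e
  simp [h4, zero_pow (by omega : t - 1 ≠ 0)] at h2


open Polynomial in
theorem core_aux (t : ℕ) (ht : 3 ≤ t) (htodd : Odd t) (h p : (ZMod 2)[X][X])
    (hh : (C X + X) * (C X + X + 1) * h = (C X + 1) ^ t + C X ^ t + (X + 1) ^ t + X ^ t)
    (hph : p ∣ h) (k : Type*) [Field k] [IsAlgClosed k] [Algebra (ZMod 2) k]
    (hirr : Irreducible (p.map (mapRingHom (algebraMap (ZMod 2) k))))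
    (F L : Type*) [Field F] [Algebra (ZMod 2)[X] F] [IsFractionRing (ZMod 2)[X] F]
    [Field L] [Algebra F L] [Algebra (ZMod 2) L]
    [Algebra (ZMod 2)[X] L] [IsScalarTower (ZMod 2)[X] F L]
    [IsSplittingField F L (p.map (algebraMap (ZMod 2)[X] F))] :
    ∃ N : ℕ, ∀ n ≥ N, ∃ α β : GaloisField 2 n, α ≠ β ∧ α ≠ β + 1 ∧
      eval₂ (aeval α : (ZMod 2)[X] →ₐ[ZMod 2] GaloisField 2 n).toRingHom β h = 0 := by
  have hAL : Function.Injective (algebraMap (ZMod 2)[X] L) := by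
    rw [IsScalarTower.algebraMap_eq (ZMod 2)[X] F L]
    exact (algebraMap F L).injective.comp (IsFractionRing.injective _ _)
  set D : (ZMod 2)[X] := (X + 1) ^ t + X ^ t with hD
  set f : (ZMod 2)[X][X] := (X + 1) ^ t + X ^ t + C D with hf
  obtain ⟨hfm, hfd⟩ := D_monic t ht htodd D
  rw [← hf] at hfm hfd
  have hhf : (C X + X) * (C X + X + 1) * h = f := by
    rw [hh, hf, hD]
    simp only [map_add, map_pow, map_one]
    ring
  have hpf : p ∣ f := hhf ▸ Dvd.dvd.mul_left hph _
  obtain ⟨g, hg⟩ := hpf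
  have hunit : ∀ u v : (ZMod 2)[X], u * v = 1 → u = 1 := by
    intro u v huv
    obtain ⟨r, hr, rfl⟩ := isUnit_iff.1 (IsUnit.of_mul_eq_one v huv)
    have hall : ∀ z : ZMod 2, z ≠ 0 → z = 1 := by decide
    rw [hall r hr.ne_zero, C_1]
  have hpm : p.Monic := by
    refine hunit _ g.leadingCoeff ?_
    rw [← leadingCoeff_mul, ← hg]
    exact hfm
  have hp1 : Irreducible p := hpm.irreducible_of_irreducible_map _ _ hirr
  have hpF : Irreducible (p.map (algebraMap (ZMod 2)[X] F)) :=
    (hpm.irreducible_iff_irreducible_map_fraction_map).1 hp1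
  have hsplit := IsSplittingField.splits L (p.map (algebraMap (ZMod 2)[X] F))
  obtain ⟨y, hy⟩ : ∃ y : L, aeval y (p.map (algebraMap (ZMod 2)[X] F)) = 0 := by
    obtain ⟨y, hy⟩ := hsplit.exists_eval_eq_zero (by
      rw [degree_map]
      exact hpF.degree_pos.ne')
    exact ⟨y, by rwa [eval_map_algebraMap] at hy⟩
  have hyp : aeval y p = 0 := by rwa [aeval_map_algebraMap] at hy
  have hsep : (p.map (algebraMap (ZMod 2)[X] F)).Separable := by
    rw [separable_iff_derivative_ne_zero hpF]
    intro hder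
    have hder' : aeval y (derivative p) = 0 := by
      rw [derivative_map] at hder
      rw [← aeval_map_algebraMap F, hder, map_zero]
    have h1 : aeval y (derivative f) = 0 := by
      rw [hg, derivative_mul, map_add, map_mul, map_mul, hder', hyp, zero_mul, zero_mul, add_zero]
    -- y is algebraic over `ZMod 2`
    have hyalg : IsAlgebraic (ZMod 2) y := by
      refine ⟨derivative D, ?_, ?_⟩
      · intro h0
        have h2 := congrArg (eval 0) h0
        have hto : ((t : ℕ) : ZMod 2) = 1 := (ZMod.natCast_eq_one_iff_odd).2 htodd
        simp [hD, derivative_pow, hto, zero_pow (by omega : t - 1 ≠ 0)] at h2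
      · have h3 : derivative f = mapRingHom (C : ZMod 2 →+* (ZMod 2)[X]) (derivative D) := by
          rw [hf, hD]
          simp [derivative_pow]
        rw [h3, coe_mapRingHom, aeval_def, eval₂_map] at h1
        have hc : (algebraMap (ZMod 2)[X] L).comp C = algebraMap (ZMod 2) L :=
          RingHom.ext_zmod _ _
        rw [hc] at h1
        exact h1
    have h2 : aeval y f = 0 := by rw [hg, map_mul, hyp, zero_mul]
    have hDx : algebraMap (ZMod 2)[X] L D ∈ algebraicClosure (ZMod 2) L := by
      have h3 : algebraMap (ZMod 2)[X] L D = -((y + 1) ^ t + y ^ t) := by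
        rw [hf] at h2
        simp only [map_add, map_pow, map_one, aeval_X, aeval_C] at h2
        linear_combination h2
      rw [h3]
      have hyc : y ∈ algebraicClosure (ZMod 2) L := mem_algebraicClosure_iff.2 hyalg
      exact neg_mem (add_mem (pow_mem (add_mem hyc (one_mem _)) _) (pow_mem hyc _))
    have hch : CharP (algebraicClosure (ZMod 2) L) 2 :=
      charP_of_injective_algebraMap (algebraMap (ZMod 2) _).injective 2
    obtain ⟨hm, hd⟩ := D_monic t ht htodd (-⟨_, hDx⟩ : algebraicClosure (ZMod 2) L)
    refine x_transc hAL ⟨_, hm.ne_zero, ?_⟩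
    simp only [map_add, map_pow, map_one, aeval_X, aeval_C, map_neg]
    change _ + -algebraMap (ZMod 2)[X] L D = 0
    rw [hD]
    simp
  have hfin : FiniteDimensional F L := IsSplittingField.finiteDimensional L
    (p.map (algebraMap (ZMod 2)[X] F))
  have hgal : IsGalois F L := IsGalois.of_separable_splitting_field hsep
  have hyi : IsIntegral (ZMod 2)[X] y := ⟨p, hpm, hyp⟩
  have hdeg := degree_over_E F L k p hpm hirr y hy
  have hw0 := eval_h_ne t ht htodd h hh 0
  have hw1 := eval_h_ne t ht htodd h hh 1
  obtain ⟨N, hN⟩ := main_conc F L k y hyi hdeg _ (mul_ne_zero hw0 hw1)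
  refine ⟨N, fun n hn => ?_⟩
  obtain ⟨α, β, hα, hβ⟩ := hN n hn (IsAlgClosed.lift)
  have hyh : aeval y h = 0 := by
    obtain ⟨q, rfl⟩ := hph
    rw [map_mul, hyp, zero_mul]
  have hev : ∀ e : ZMod 2, aeval α (eval (X + C e) h) =
      eval₂ (aeval α : (ZMod 2)[X] →ₐ[ZMod 2] GaloisField 2 n).toRingHom
        (α + algebraMap (ZMod 2) _ e) h := by
    intro e
    have h5 := hom_eval₂ h (RingHom.id _)
      (aeval α : (ZMod 2)[X] →ₐ[ZMod 2] GaloisField 2 n).toRingHom (X + C e)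
    rw [RingHom.comp_id] at h5
    have h6 : (aeval α : (ZMod 2)[X] →ₐ[ZMod 2] GaloisField 2 n).toRingHom (X + C e) =
        α + algebraMap (ZMod 2) _ e := by simp
    rw [h6] at h5
    exact h5
  have hz := hβ h hyh
  rw [map_mul] at hα
  refine ⟨α, β, ?_, ?_, hz⟩
  · rintro rfl
    refine (left_ne_zero_of_mul hα) ?_
    rw [hev, map_zero, add_zero]
    exact hz
  · intro hαβ
    refine (right_ne_zero_of_mul hα) ?_
    have h7 : β = α + 1 := by
      have h11 : (1 + 1 : GaloisField 2 n) = 0 := CharTwo.add_self_eq_zero 1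
      rw [hαβ, add_assoc, h11, add_zero]
    rw [hev, map_one, ← h7]
    exact hz

open Polynomial in
theorem core (t : ℕ) (ht : 3 ≤ t) (htodd : Odd t) (h p : (ZMod 2)[X][X])
    (hh : (C X + X) * (C X + X + 1) * h = (C X + 1) ^ t + C X ^ t + (X + 1) ^ t + X ^ t)
    (hph : p ∣ h) (k : Type*) [Field k] [IsAlgClosed k] [Algebra (ZMod 2) k]
    (hirr : Irreducible (p.map (mapRingHom (algebraMap (ZMod 2) k)))) :
    ∃ N : ℕ, ∀ n ≥ N, ∃ α β : GaloisField 2 n, α ≠ β ∧ α ≠ β + 1 ∧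
      eval₂ (aeval α : (ZMod 2)[X] →ₐ[ZMod 2] GaloisField 2 n).toRingHom β h = 0 := by
  let F := FractionRing (ZMod 2)[X]
  let L := SplittingField (p.map (algebraMap (ZMod 2)[X] F))
  exact core_aux t ht htodd h p hh hph k hirr F L

open MvPolynomial

theorem stmt_3 (t : ℕ) (ht : 3 ≤ t) (htodd : Odd t)
    (h : MvPolynomial (Fin 2) (ZMod 2))
    (hh : (X 0 + X 1) * (X 0 + X 1 + 1) * h = (X 0 + 1) ^ t + X 0 ^ t + (X 1 + 1) ^ t + X 1 ^ t)
    (hfac : ∃ p : MvPolynomial (Fin 2) (ZMod 2), p ∣ h ∧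
      Irreducible (MvPolynomial.map (algebraMap (ZMod 2) (AlgebraicClosure (ZMod 2))) p)) :
    ∃ N : ℕ, ∀ n ≥ N, ∃ α β : GaloisField 2 n,
      α ≠ β ∧ α ≠ β + 1 ∧ (MvPolynomial.aeval ![α, β]) h = 0 := by
  obtain ⟨p, hph, hirr⟩ := hfac
  have hh' := congrArg (thetaEquiv (ZMod 2)) hh
  simp only [map_mul, map_add, map_pow, map_one, theta_X0, theta_X1] at hh'
  have hirr' := (MulEquiv.irreducible_iff (thetaEquiv (AlgebraicClosure (ZMod 2)))).2 hirr
  rw [theta_map] at hirr'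
  obtain ⟨N, hN⟩ := core t ht htodd (thetaEquiv (ZMod 2) h) (thetaEquiv (ZMod 2) p) hh'
    (map_dvd _ hph) (AlgebraicClosure (ZMod 2)) hirr'
  refine ⟨N, fun n hn => ?_⟩
  obtain ⟨α, β, h1, h2, h3⟩ := hN n hn
  exact ⟨α, β, h1, h2, by rw [theta_eval]; exact h3⟩
end

section
/- Let t = 2^i·ℓ + 1 where i ≥ 1 and ℓ ≥ 1 is odd, let K be a field of characteristic 2, let α, β ∈ K and set λ = α + β + 1. Write f_t(x,y) = x^t + y^t + 1 + (x+y+1)^t ∈ K[x,y], and for m ≥ 0 let F_m denote the degree-m homogeneous component of f_t(x+α, y+β). Then: F_0 = α^t + β^t + λ^t + 1; F_1 = (α^{t−1} + λ^{t−1})x + (β^{t−1} + λ^{t−1})y; F_j = 0 for all j with 1 < j < 2^i; F_{2^i} = (α^{t−2^i} + λ^{t−2^i})x^{2^i} + (β^{t−2^i} + λ^{t−2^i})y^{2^i}; and F_{2^i+1} = (α^{t−2^i−1} + λ^{t−2^i−1})x^{2^i+1} + (β^{t−2^i−1} + λ^{t−2^i−1})y^{2^i+1} + λ^{t−2^i−1}(x^{2^i}y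 + x y^{2^i}). -/
open MvPolynomial

theorem aux_hc {K : Type*} [Field K] (P : MvPolynomial (Fin 2) K) (hP : P.IsHomogeneous 1)
    (c : K) (t j : ℕ) :
    homogeneousComponent j ((P + C c) ^ t) = C ((t.choose j : K) * c ^ (t - j)) * P ^ j := by
  have h : ∀ m, homogeneousComponent j (P ^ m * C c ^ (t - m) * (t.choose m : MvPolynomial (Fin 2) K))
      = if j = m then C ((t.choose j : K) * c ^ (t - j)) * P ^ j else 0 := by
    intro m
    have e : P ^ m * C c ^ (t - m) * (t.choose m : MvPolynomial (Fin 2) K)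
        = C ((t.choose m : K) * c ^ (t - m)) * P ^ m := by
      simp only [map_mul, map_pow, map_natCast]; ring
    have hm : (P ^ m * C c ^ (t - m) * (t.choose m : MvPolynomial (Fin 2) K)).IsHomogeneous m := by
      rw [e]
      have := (isHomogeneous_C (Fin 2) ((t.choose m : K) * c ^ (t - m))).mul (hP.pow m)
      simpa using this
    rw [homogeneousComponent_of_mem hm]
    split_ifs with h1
    · subst h1; exact e
    · rfl
  rw [add_pow, map_sum, Finset.sum_congr rfl (fun m _ => h m), Finset.sum_ite_eq]
  split_ifs with h1
  · rfl
  · rw [Nat.choose_eq_zero_of_lt (by simpa [Nat.lt_succ_iff] using h1)]; simp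

theorem aux_choose {K : Type*} [Field K] [CharP K 2] (i l j : ℕ) :
    ((2 ^ i * l + 1).choose (j + 1) : K) =
      (if 2 ^ i ∣ j then (l.choose (j / 2 ^ i) : K) else 0) +
      (if 2 ^ i ∣ (j + 1) then (l.choose ((j + 1) / 2 ^ i) : K) else 0) := by
  have h : ((Polynomial.X + 1 : Polynomial K) ^ (2 ^ i * l + 1)) =
      Polynomial.expand K (2 ^ i) ((Polynomial.X + 1) ^ l) * (Polynomial.X + 1) := by
    rw [pow_succ, pow_mul, add_pow_char_pow]; simp
  have hq : 0 < 2 ^ i := by positivity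
  have h2 := congrArg (fun p => Polynomial.coeff p (j + 1)) h
  simp only [mul_add, mul_one, Polynomial.coeff_add, Polynomial.coeff_mul_X,
    Polynomial.coeff_expand hq, Polynomial.coeff_X_add_one_pow] at h2
  exact h2

/-- The low-degree homogeneous components of `f_t(x+α, y+β)`, where
`f_t(x,y) = x^t + y^t + 1 + (x+y+1)^t` and `t = 2^i ℓ + 1`. -/
theorem stmt_6 (K : Type*) [Field K] [CharP K 2] (i l t : ℕ) (hi : 1 ≤ i)
    (hl : 1 ≤ l) (hlodd : Odd l) (ht : t = 2 ^ i * l + 1) (α β : K) :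
    let lam : K := α + β + 1
    let sh : MvPolynomial (Fin 2) K := bind₁ ![X 0 + C α, X 1 + C β]
      (X 0 ^ t + X 1 ^ t + 1 + (X 0 + X 1 + 1) ^ t)
    (homogeneousComponent 0 sh = C (α ^ t + β ^ t + lam ^ t + 1)) ∧
    (homogeneousComponent 1 sh =
      C (α ^ (t - 1) + lam ^ (t - 1)) * X 0 + C (β ^ (t - 1) + lam ^ (t - 1)) * X 1) ∧
    (∀ j : ℕ, 1 < j → j < 2 ^ i → homogeneousComponent j sh = 0) ∧
    (homogeneousComponent (2 ^ i) sh =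
      C (α ^ (t - 2 ^ i) + lam ^ (t - 2 ^ i)) * X 0 ^ 2 ^ i +
        C (β ^ (t - 2 ^ i) + lam ^ (t - 2 ^ i)) * X 1 ^ 2 ^ i) ∧
    (homogeneousComponent (2 ^ i + 1) sh =
      C (α ^ (t - 2 ^ i - 1) + lam ^ (t - 2 ^ i - 1)) * X 0 ^ (2 ^ i + 1) +
        C (β ^ (t - 2 ^ i - 1) + lam ^ (t - 2 ^ i - 1)) * X 1 ^ (2 ^ i + 1) +
        C (lam ^ (t - 2 ^ i - 1)) * (X 0 ^ 2 ^ i * X 1 + X 0 * X 1 ^ 2 ^ i)) := by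
  intro lam sh
  have hsh : sh = (X 0 + C α) ^ t + (X 1 + C β) ^ t + C 1 + ((X 0 + X 1) + C lam) ^ t := by
    simp only [sh, lam, map_add, map_pow, map_one, bind₁_X_right]
    simp only [Matrix.cons_val_zero, Matrix.cons_val_one]
    ring
  have hc1 : ∀ j, j ≠ 0 → homogeneousComponent j (C 1 : MvPolynomial (Fin 2) K) = 0 := by
    intro j hj
    rw [homogeneousComponent_of_mem (isHomogeneous_C (Fin 2) (1 : K)), if_neg hj]
  have hX0 := isHomogeneous_X K (0 : Fin 2)
  have hX1 := isHomogeneous_X K (1 : Fin 2)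
  have key : ∀ j, j ≠ 0 → homogeneousComponent j sh =
      C ((t.choose j : K) * α ^ (t - j)) * X 0 ^ j + C ((t.choose j : K) * β ^ (t - j)) * X 1 ^ j
       + C ((t.choose j : K) * lam ^ (t - j)) * (X 0 + X 1) ^ j := by
    intro j hj
    rw [hsh, map_add, map_add, map_add, hc1 j hj, aux_hc _ hX0, aux_hc _ hX1,
      aux_hc _ (hX0.add hX1), add_zero]
  have hq2 : 2 ≤ 2 ^ i := by
    calc 2 = 2 ^ 1 := rfl
      _ ≤ 2 ^ i := Nat.pow_le_pow_right (by norm_num) hi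
  have hqp : 0 < 2 ^ i := by positivity
  have hlK : (l : K) = 1 := by
    obtain ⟨k, rfl⟩ := hlodd
    push_cast
    rw [CharTwo.two_eq_zero]; simp
  have nd : ∀ j, 0 < j → j < 2 ^ i → ¬ 2 ^ i ∣ j := fun j h1 h2 h3 =>
    absurd (Nat.le_of_dvd h1 h3) (by omega)
  have nd1 : ¬ 2 ^ i ∣ 2 ^ i + 1 := by
    intro h
    have := (Nat.dvd_add_right (dvd_refl (2 ^ i))).1 h
    exact nd 1 (by norm_num) (by omega) this
  refine ⟨?_, ?_, ?_, ?_, ?_⟩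
  · rw [hsh, map_add, map_add, map_add, aux_hc _ hX0, aux_hc _ hX1, aux_hc _ (hX0.add hX1),
      homogeneousComponent_of_mem (isHomogeneous_C (Fin 2) (1 : K))]
    simp only [if_true, Nat.choose_zero_right, Nat.cast_one, one_mul, Nat.sub_zero, pow_zero,
      mul_one, map_add]
    ring
  · have hc : (t.choose 1 : K) = 1 := by
      rw [ht, aux_choose i l 0, if_pos (dvd_zero _), if_neg (nd 1 (by norm_num) (by omega))]
      simp
    rw [key 1 one_ne_zero, hc]
    simp only [one_mul, map_add, pow_one]; ring
  · intro j h1 h2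
    have hc : (t.choose j : K) = 0 := by
      obtain ⟨k, rfl⟩ : ∃ k, j = k + 1 := ⟨j - 1, by omega⟩
      rw [ht, aux_choose i l k, if_neg (nd _ (by omega) (by omega)),
        if_neg (nd _ (by omega) h2), add_zero]
    rw [key j (by omega), hc]; simp
  · have hc : (t.choose (2 ^ i) : K) = 1 := by
      obtain ⟨k, hk⟩ : ∃ k, 2 ^ i = k + 1 := ⟨2 ^ i - 1, by omega⟩
      have := aux_choose (K := K) i l k
      rw [← hk, if_neg (nd _ (by omega) (by omega)), if_pos (dvd_refl _), Nat.div_self hqp,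
        Nat.choose_one_right, zero_add, hlK] at this
      rw [ht]; exact this
    rw [key _ (by omega), hc, add_pow_char_pow]
    simp only [one_mul, map_add]; ring
  · have hc : (t.choose (2 ^ i + 1) : K) = 1 := by
      rw [ht, aux_choose i l (2 ^ i), if_pos (dvd_refl _), if_neg nd1, Nat.div_self hqp,
        Nat.choose_one_right, add_zero, hlK]
    rw [key _ (by omega), hc, pow_succ (X 0 + X 1), add_pow_char_pow, ← Nat.sub_sub]
    simp only [one_mul, map_add]; ring
end

section
/- Let t = 2^i·ℓ + 1 where i ≥ 1 and ℓ ≥ 3 is odd, let K be an algebraically closed field of characteristic 2, and let α, β ∈ K satisfy α^ℓ = β^ℓ = (α+β+1)^ℓ = 1. Set λ = α + β + 1 and let F_{2^i+1} = (α^{t−2^i−1} + λ^{t−2^i−1})x^{2^i+1} + (β^{t−2^i−1} + λ^{t−2^i−1})y^{2^i+1} + λ^{t−2^i−1}(x^{2^i}y + x y^{2^i}), the degree-(2^i+1) homogeneous component of f_t(x+α, y+β) where f_t(x,y) = x^t + y^t + 1 + (x+y+1)^t. Then F_{2^i+1} is nonzero and is a product of 2^i + 1 pairwise non-proportional linear forms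 over K; in particular F_{2^i+1} is squarefree. -/
open MvPolynomial

theorem aux_fac {K : Type*} [Field K] [IsAlgClosed K] (p : Polynomial K) (n : ℕ)
    (hn : p.natDegree = n) (hs : p.Separable) :
    ∃ r : Fin n → K, Function.Injective r ∧
      p = Polynomial.C p.leadingCoeff * ∏ j, (Polynomial.X - Polynomial.C (r j)) := by
  classical
  have hnd := Polynomial.nodup_roots hs
  have hc : p.roots.toFinset.card = n := by
    rw [Multiset.toFinset_card_of_nodup hnd, IsAlgClosed.card_roots_eq_natDegree, hn]
  let e := (p.roots.toFinset.equivFinOfCardEq hc).symm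
  refine ⟨fun j => (e j : K), fun a b h => e.injective (Subtype.ext h), ?_⟩
  have h1 := (IsAlgClosed.splits p).eq_prod_roots
  have h2 : (p.roots.map (fun a => Polynomial.X - Polynomial.C a)).prod =
      ∏ x ∈ p.roots.toFinset, (Polynomial.X - Polynomial.C x) := by
    rw [Finset.prod, Multiset.toFinset_val, hnd.dedup]
  have h3 : ∏ j, (Polynomial.X - Polynomial.C ((e j : K))) =
      ∏ x ∈ p.roots.toFinset, (Polynomial.X - Polynomial.C x) := by
    rw [← Finset.prod_coe_sort p.roots.toFinset]
    exact e.prod_comp (fun x : p.roots.toFinset => Polynomial.X - Polynomial.C (x : K))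
  rw [h3, ← h2]
  exact h1

theorem aux_homog {K : Type*} [Field K] {n : ℕ} (r : Fin n → K) (c : K) :
    (Polynomial.C c * ∏ j, (Polynomial.X - Polynomial.C (r j))).homogenize n =
      C c * ∏ j, ((X 0 - C (r j) * X 1 : MvPolynomial (Fin 2) K)) := by
  rw [Polynomial.homogenize_C_mul]
  have := Polynomial.homogenize_finsetProd (s := Finset.univ)
    (p := fun j : Fin n => Polynomial.X - Polynomial.C (r j)) (n := fun _ => 1)
    (fun i _ => by simp)
  simp at this
  rw [this]

theorem aux_sqf {K : Type*} [Field K] {n : ℕ} (L : Fin n → MvPolynomial (Fin 2) K)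
    (h1 : ∀ j, (L j).IsHomogeneous 1 ∧ L j ≠ 0)
    (h2 : ∀ j k, j ≠ k → ∀ c : K, L j ≠ C c * L k) : Squarefree (∏ j, L j) := by
  have hirr : ∀ j, Irreducible (L j) := by
    intro j
    apply irreducible_of_totalDegree_eq_one
    · exact (h1 j).1.totalDegree (h1 j).2
    · intro x hx
      rw [isUnit_iff_ne_zero]
      rintro rfl
      apply (h1 j).2
      ext m
      simpa using hx m
  apply Finset.squarefree_prod_of_pairwise_isCoprime
  · intro j _ k _ hjk
    show IsRelPrime (L j) (L k)
    rw [(hirr j).isRelPrime_iff_not_dvd]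
    intro hd
    obtain ⟨u, hu⟩ := (hirr j).associated_of_dvd (hirr k) hd
    obtain ⟨c, hc⟩ := (MvPolynomial.isUnit_iff_eq_C_of_isReduced.mp u.isUnit)
    apply h2 k j hjk.symm c
    rw [← hu, hc.2, mul_comm]
  · intro j _
    exact (hirr j).squarefree

theorem aux_lin {K : Type*} [Field K] (u v : K) :
    (C u * X 0 + C v * X 1 : MvPolynomial (Fin 2) K).IsHomogeneous 1 := by
  apply IsHomogeneous.add
  · exact isHomogeneous_C_mul_X u 0
  · exact isHomogeneous_C_mul_X v 1

theorem aux_main {K : Type*} [Field K] [IsAlgClosed K] [CharP K 2] (q : ℕ) (hq : 2 ≤ q)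
    (hq2 : Even q) (a b m : K) (hD : a * b - m ^ 2 ≠ 0) :
    ∃ L : Fin (q + 1) → MvPolynomial (Fin 2) K,
      (C a * X 0 ^ (q + 1) + C b * X 1 ^ (q + 1) + C m * (X 0 ^ q * X 1 + X 0 * X 1 ^ q)
        : MvPolynomial (Fin 2) K) = ∏ j, L j ∧
      (∀ j, (L j).IsHomogeneous 1 ∧ L j ≠ 0) ∧
      (∀ j k, j ≠ k → ∀ c : K, L j ≠ C c * L k) := by
  have hqK : (q : K) = 0 := by
    rw [CharP.cast_eq_zero_iff K 2]; exact hq2.two_dvd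
  let p : Polynomial K := Polynomial.C a * Polynomial.X ^ (q + 1) +
    Polynomial.C m * Polynomial.X ^ q + Polynomial.C m * Polynomial.X + Polynomial.C b
  have hder : Polynomial.derivative p = Polynomial.C a * Polynomial.X ^ q + Polynomial.C m := by
    simp [p, hqK, Polynomial.derivative_X_pow]
  have hsep : p.Separable := by
    rw [Polynomial.separable_def]
    refine ⟨Polynomial.C ((a * b - m ^ 2)⁻¹) * Polynomial.C a,
      - Polynomial.C ((a * b - m ^ 2)⁻¹) * (Polynomial.C a * Polynomial.X + Polynomial.C m), ?_⟩
    have h1 : Polynomial.C ((a * b - m ^ 2)⁻¹) *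
      (Polynomial.C a * Polynomial.C b - Polynomial.C m ^ 2) = 1 := by
      rw [← map_mul, ← map_pow, ← map_sub, ← map_mul, inv_mul_cancel₀ hD, map_one]
    rw [hder, ← h1]
    simp only [p]
    ring
  by_cases ha : a = 0
  · have hm : m ≠ 0 := by
      rintro rfl; simp [ha] at hD
    let p' : Polynomial K :=
      Polynomial.C m * Polynomial.X ^ q + Polynomial.C m * Polynomial.X + Polynomial.C b
    have hpp : p = p' := by simp [p, p', ha]
    have hdeg : p'.natDegree = q := by
      apply Polynomial.natDegree_eq_of_le_of_coeff_ne_zero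
      · simp only [p']
        compute_degree
        all_goals omega
      · simp only [p', Polynomial.coeff_add, Polynomial.coeff_C_mul, Polynomial.coeff_X_pow,
          Polynomial.coeff_X, Polynomial.coeff_C]
        rw [if_pos trivial, if_neg (by omega), if_neg (by omega)]
        simpa using hm
    have hlead : p'.leadingCoeff = m := by
      rw [Polynomial.leadingCoeff, hdeg]
      simp [p', Polynomial.coeff_X, Polynomial.coeff_C]
      rw [if_neg (by omega), if_neg (by omega)]; simp
    obtain ⟨r, hr, hp⟩ := aux_fac p' q hdeg (hpp ▸ hsep)
    have hh := aux_homog r m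
    rw [← hlead, ← hp, hlead] at hh
    have hh2 : p'.homogenize q = C m * X 0 ^ q + C m * (X 0 * X 1 ^ (q - 1)) + C b * X 1 ^ q := by
      simp only [p', Polynomial.homogenize_add, Polynomial.homogenize_C_mul,
        Polynomial.homogenize_C, Polynomial.homogenize_X_pow le_rfl,
        Polynomial.homogenize_X (show q ≠ 0 by omega)]
      simp
    refine ⟨Fin.cons (C m * X 1) (fun j => X 0 - C (r j) * X 1), ?_, ?_, ?_⟩
    · rw [Fin.prod_univ_succ]
      simp only [Fin.cons_zero, Fin.cons_succ]
      rw [mul_right_comm, ← hh, hh2, ha]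
      obtain ⟨s, rfl⟩ : ∃ s, q = s + 1 := ⟨q - 1, by omega⟩
      simp only [Nat.add_sub_cancel, map_zero]
      ring
    · intro j
      refine Fin.cases ?_ (fun j => ?_) j
      · simp only [Fin.cons_zero]
        refine ⟨isHomogeneous_C_mul_X m 1, ?_⟩
        simp [hm]
      · simp only [Fin.cons_succ]
        constructor
        · have := aux_lin 1 (-(r j))
          convert this using 1
          simp; ring
        · intro h
          have := congrArg (eval ![1, 0]) h
          simp at this
    · intro j k
      refine Fin.cases ?_ (fun j => ?_) j <;> refine Fin.cases ?_ (fun k => ?_) k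
      · intro h; exact absurd rfl h
      · intro _ c h
        have := congrArg (eval ![r k, 1]) h
        simp [hm] at this
      · intro _ c h
        have := congrArg (eval ![1, 0]) h
        simp at this
      · intro hjk c h
        have := congrArg (eval ![r k, 1]) h
        simp [sub_eq_zero] at this
        exact hjk (congrArg _ (hr this).symm)
  · have hdeg : p.natDegree = q + 1 := by
      apply Polynomial.natDegree_eq_of_le_of_coeff_ne_zero
      · simp only [p]
        compute_degree
        all_goals omega
      · simp only [p, Polynomial.coeff_add, Polynomial.coeff_C_mul, Polynomial.coeff_X_pow,
          Polynomial.coeff_X, Polynomial.coeff_C]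
        rw [if_pos trivial, if_neg (by omega), if_neg (by omega), if_neg (by omega)]
        simpa using ha
    have hlead : p.leadingCoeff = a := by
      rw [Polynomial.leadingCoeff, hdeg]
      simp [p, Polynomial.coeff_X, Polynomial.coeff_C, Polynomial.coeff_X_pow]
      omega
    obtain ⟨r, hr, hp⟩ := aux_fac p (q + 1) hdeg hsep
    have hh := aux_homog r a
    rw [← hlead, ← hp, hlead] at hh
    have hh2 : p.homogenize (q + 1) = C a * X 0 ^ (q + 1) + C m * (X 0 ^ q * X 1) +
        C m * (X 0 * X 1 ^ q) + C b * X 1 ^ (q + 1) := by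
      simp only [p, Polynomial.homogenize_add, Polynomial.homogenize_C_mul,
        Polynomial.homogenize_C, Polynomial.homogenize_X_pow le_rfl,
        Polynomial.homogenize_X_pow (Nat.le_succ q),
        Polynomial.homogenize_X (show q + 1 ≠ 0 by omega)]
      simp
    obtain ⟨z, hz⟩ := IsAlgClosed.exists_pow_nat_eq a (Nat.succ_pos q)
    have hz0 : z ≠ 0 := by
      rintro rfl; simp at hz; exact ha hz.symm
    refine ⟨fun j => C z * (X 0 - C (r j) * X 1), ?_, ?_, ?_⟩
    · rw [Finset.prod_mul_distrib, Finset.prod_const, Finset.card_univ, Fintype.card_fin,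
        ← map_pow, hz, ← hh, hh2]
      ring
    · intro j
      constructor
      · have := aux_lin z (-(z * r j))
        convert this using 1
        simp; ring
      · intro h
        have := congrArg (eval ![1, 0]) h
        simp [hz0] at this
    · intro j k hjk c h
      have := congrArg (eval ![r k, 1]) h
      simp [sub_eq_zero, hz0] at this
      exact hjk (hr this).symm

/-- At a singular point `(α, β)` of `f_t` (with `t = 2^i ℓ + 1`), the tangent-cone
candidate `F_{2^i+1}` is a nonzero product of `2^i + 1` pairwise non-proportional linear
forms over the algebraically closed field `K`; in particular it is squarefree. -/
theorem stmt_7 (K : Type*) [Field K] [IsAlgClosed K] [CharP K 2] (i l t : ℕ)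
    (hi : 1 ≤ i) (hl : 3 ≤ l) (hlodd : Odd l) (ht : t = 2 ^ i * l + 1)
    (α β : K) (hα : α ^ l = 1) (hβ : β ^ l = 1) (hlam : (α + β + 1) ^ l = 1) :
    let lam : K := α + β + 1
    let F : MvPolynomial (Fin 2) K :=
      C (α ^ (t - 2 ^ i - 1) + lam ^ (t - 2 ^ i - 1)) * X 0 ^ (2 ^ i + 1) +
        C (β ^ (t - 2 ^ i - 1) + lam ^ (t - 2 ^ i - 1)) * X 1 ^ (2 ^ i + 1) +
        C (lam ^ (t - 2 ^ i - 1)) * (X 0 ^ 2 ^ i * X 1 + X 0 * X 1 ^ 2 ^ i)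
    F ≠ 0 ∧
    (∃ L : Fin (2 ^ i + 1) → MvPolynomial (Fin 2) K,
      F = ∏ j, L j ∧
      (∀ j, (L j).IsHomogeneous 1 ∧ L j ≠ 0) ∧
      (∀ j k, j ≠ k → ∀ c : K, L j ≠ C c * L k)) ∧
    Squarefree F := by
  intro lam F
  have h0 : ∀ x : K, x ^ l = 1 → x ≠ 0 := by
    rintro x hx rfl
    rw [zero_pow (by omega)] at hx
    exact zero_ne_one hx
  have hexp : t - 2 ^ i - 1 = (l - 1) * 2 ^ i := by
    obtain ⟨s, rfl⟩ : ∃ s, l = s + 1 := ⟨l - 1, by omega⟩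
    rw [ht, Nat.add_sub_cancel, Nat.mul_add, mul_comm s]
    omega
  have hinv : ∀ x : K, x ^ l = 1 → x ^ (t - 2 ^ i - 1) * x ^ 2 ^ i = 1 := by
    intro x hx
    rw [hexp, ← pow_add, show (l - 1) * 2 ^ i + 2 ^ i = l * 2 ^ i by
      obtain ⟨s, rfl⟩ : ∃ s, l = s + 1 := ⟨l - 1, by omega⟩
      rw [Nat.add_sub_cancel]; ring, pow_mul, hx, one_pow]
  have hA := hinv α hα
  have hB := hinv β hβ
  have hM := hinv lam hlam
  have h2 : (2 : K) = 0 := CharTwo.two_eq_zero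
  have hsum : α ^ 2 ^ i + β ^ 2 ^ i + lam ^ 2 ^ i = 1 := by
    rw [← add_pow_char_pow, ← add_pow_char_pow]
    have : α + β + lam = 1 := by
      simp only [lam]
      linear_combination (α + β) * h2
    rw [this, one_pow]
  have hD : (α ^ (t - 2 ^ i - 1) + lam ^ (t - 2 ^ i - 1)) *
      (β ^ (t - 2 ^ i - 1) + lam ^ (t - 2 ^ i - 1)) - (lam ^ (t - 2 ^ i - 1)) ^ 2 ≠ 0 := by
    generalize α ^ (t - 2 ^ i - 1) = A at *
    generalize β ^ (t - 2 ^ i - 1) = B at *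
    generalize lam ^ (t - 2 ^ i - 1) = M at *
    generalize α ^ 2 ^ i = A' at *
    generalize β ^ 2 ^ i = B' at *
    generalize lam ^ 2 ^ i = M' at *
    intro h
    have h3 : A * B + A * M + B * M = 0 := by linear_combination h
    have h4 : A * B * M = 0 := by
      linear_combination h3 - A * B * M * hsum + B * M * hA + A * M * hB + A * B * hM
    have : A * B * M * (A' * B' * M') = 1 := by
      calc A * B * M * (A' * B' * M') = (A * A') * (B * B') * (M * M') := by ring
        _ = 1 := by rw [hA, hB, hM]; ring
    rw [h4, zero_mul] at this
    exact zero_ne_one this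
  obtain ⟨L, hL, hL1, hL2⟩ := aux_main (K := K) (2 ^ i)
    (by calc 2 = 2 ^ 1 := rfl
          _ ≤ 2 ^ i := Nat.pow_le_pow_right (by norm_num) hi)
    (by rw [Nat.even_pow]; exact ⟨even_two, by omega⟩) _ _ _ hD
  have hF : F = ∏ j, L j := hL
  refine ⟨?_, ⟨L, hF, hL1, hL2⟩, ?_⟩
  · rw [hF]
    exact Finset.prod_ne_zero_iff.mpr fun j _ => (hL1 j).2
  · rw [hF]
    exact aux_sqf L hL1 hL2
end

section
/- Let t = 2^i·ℓ + 1 where i ≥ 1 and ℓ ≥ 3 is odd, let K be an algebraically closed field of characteristic 2, and let f_t(x,y) = x^t + y^t + 1 + (x+y+1)^t ∈ K[x,y]. A point P = (α, β) ∈ K^2 is a singular point of f_t (that is, m_P(f_t) ≥ 2) if and only if α^ℓ = 1, β^ℓ = 1 and (α + β + 1)^ℓ = 1. -/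
open MvPolynomial

/-- The multiplicity of a two-variable polynomial `h` at a point `P = (α, β)`:
the least `m` such that the degree-`m` homogeneous component of `h(x+α, y+β)`
is nonzero. -/
noncomputable def multAt {K : Type*} [CommRing K]
    (h : MvPolynomial (Fin 2) K) (P : K × K) : ℕ :=
  sInf {m : ℕ | homogeneousComponent m (bind₁ ![X 0 + C P.1, X 1 + C P.2] h) ≠ 0}

/- In `multAt` the shifted polynomial lives in variables indexed by `ℕ`
(only the variables `0` and `1` occur). -/
theorem aux_low {K : Type*} [CommRing K] (g : MvPolynomial ℕ K) :
    (homogeneousComponent 0 g = 0 ∧ homogeneousComponent 1 g = 0) ↔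
      (constantCoeff g = 0 ∧ ∀ j, constantCoeff (pderiv j g) = 0) := by
  have h0 : ∀ j, constantCoeff (pderiv j g) = coeff (Finsupp.single j 1) g := by
    intro j
    rw [constantCoeff_eq, coeff_pderiv]
    simp
  simp only [h0]
  refine and_congr ?_ ?_
  · rw [homogeneousComponent_zero, constantCoeff_eq]
    simp
  · constructor
    · intro h j
      have := congrArg (coeff (Finsupp.single j 1)) h
      simpa [coeff_homogeneousComponent] using this
    · intro ha
      ext d
      rw [coeff_homogeneousComponent]
      split_ifs with hd
      · obtain ⟨j, rfl⟩ := (Finsupp.sum_eq_one_iff d).mp hd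
        simpa using ha j
      · simp

theorem aux_alg (K : Type*) [Field K] [CharP K 2] (i l t : ℕ)
    (hi : 1 ≤ i) (ht : t = 2 ^ i * l + 1) (α β : K)
    (g : MvPolynomial ℕ K)
    (hg : g = bind₁ ![X 0 + C α, X 1 + C β]
      (X 0 ^ t + X 1 ^ t + 1 + (X 0 + X 1 + 1) ^ t : MvPolynomial (Fin 2) K)) :
    (homogeneousComponent 0 g = 0 ∧ homogeneousComponent 1 g = 0) ↔
      α ^ l = 1 ∧ β ^ l = 1 ∧ (α + β + 1) ^ l = 1 := by
  have h2 : (2 : K) = 0 := CharTwo.two_eq_zero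
  have hq : ((2 ^ i : ℕ) : K) = 0 := by
    push_cast
    rw [h2, zero_pow (by omega)]
  have htK : (t : K) = 1 := by
    rw [ht]
    push_cast at hq ⊢
    rw [hq]; ring
  have hinj : ∀ a b : K, a ^ (t - 1) + b ^ (t - 1) = 0 ↔ a ^ l = b ^ l := by
    intro a b
    have e : t - 1 = l * 2 ^ i := by rw [ht, mul_comm]; simp
    rw [CharTwo.add_eq_zero, e, pow_mul, pow_mul]
    exact (iterateFrobenius_inj K 2 i).eq_iff (a := a ^ l) (b := b ^ l)
  have hc : constantCoeff g = α ^ t + β ^ t + 1 + (α + β + 1) ^ t := by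
    rw [hg]; simp
  have hd0 : constantCoeff (pderiv 0 g) = α ^ (t - 1) + (α + β + 1) ^ (t - 1) := by
    rw [hg]; simp [pderiv_X, htK]
  have hd1 : constantCoeff (pderiv 1 g) = β ^ (t - 1) + (α + β + 1) ^ (t - 1) := by
    rw [hg]; simp [pderiv_X, htK]
  have hdj : ∀ j, constantCoeff (pderiv (j + 2) g) = 0 := by
    intro j
    rw [hg]; simp [pderiv_X]
  have hall : (∀ j, constantCoeff (pderiv j g) = 0) ↔
      (constantCoeff (pderiv 0 g) = 0 ∧ constantCoeff (pderiv 1 g) = 0) := by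
    constructor
    · intro h
      exact ⟨h 0, h 1⟩
    · rintro ⟨ha, hb⟩ j
      match j with
      | 0 => exact ha
      | 1 => exact hb
      | j + 2 => exact hdj j
  rw [aux_low, hall, hc, hd0, hd1, hinj, hinj]
  have ht1 : t = t - 1 + 1 := by omega
  have key : ∀ γ : K, γ = α + β + 1 → α ^ l = γ ^ l → β ^ l = γ ^ l →
      (α ^ t + β ^ t + 1 + γ ^ t = 0 ↔ γ ^ l = 1) := by
    intro γ hγ ha hb
    have ha' := (hinj _ _).2 ha
    have hb' := (hinj _ _).2 hb
    have e := hinj γ 1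
    rw [one_pow, one_pow] at e
    rw [← e, ht1, pow_succ, pow_succ, pow_succ, CharTwo.add_eq_zero.1 ha',
      CharTwo.add_eq_zero.1 hb', Nat.add_sub_cancel]
    have : γ ^ (t - 1) * α + γ ^ (t - 1) * β + 1 + γ ^ (t - 1) * γ = γ ^ (t - 1) + 1 := by
      rw [hγ]
      linear_combination (α + β) * (α + β + 1) ^ (t - 1) * h2
    rw [this]
  have key := key _ rfl
  constructor
  · rintro ⟨h, ha, hb⟩
    have := (key ha hb).1 h
    exact ⟨ha.trans this, hb.trans this, this⟩
  · rintro ⟨ha, hb, hc⟩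
    have ha := ha.trans hc.symm
    have hb := hb.trans hc.symm
    exact ⟨(key ha hb).2 hc, ha, hb⟩

/-- For `t = 2^i ℓ + 1`, a point `(α, β)` is a singular point of
`f_t(x,y) = x^t + y^t + 1 + (x+y+1)^t` if and only if `α`, `β` and `α+β+1` are
`ℓ`-th roots of unity. -/
theorem stmt_8 (K : Type*) [Field K] [IsAlgClosed K] [CharP K 2] (i l t : ℕ)
    (hi : 1 ≤ i) (hl : 3 ≤ l) (hlodd : Odd l) (ht : t = 2 ^ i * l + 1) (α β : K) :
    2 ≤ multAt (X 0 ^ t + X 1 ^ t + 1 + (X 0 + X 1 + 1) ^ t : MvPolynomial (Fin 2) K)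
        (α, β) ↔
      α ^ l = 1 ∧ β ^ l = 1 ∧ (α + β + 1) ^ l = 1 := by
  have hl0 : l ≠ 0 := by omega
  have hi' := aux_alg K i l t hi ht
  rw [← hi' α β _ rfl]
  unfold multAt
  set f : MvPolynomial (Fin 2) K := X 0 ^ t + X 1 ^ t + 1 + (X 0 + X 1 + 1) ^ t with hf
  set g : MvPolynomial ℕ K := bind₁ ![X 0 + C α, X 1 + C β] f with hg
  constructor
  · intro h
    constructor
    · by_contra hne
      have := Nat.sInf_le (s := {m : ℕ | homogeneousComponent m g ≠ 0}) (m := 0) hne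
      have := h.trans this
      omega
    · by_contra hne
      have := Nat.sInf_le (s := {m : ℕ | homogeneousComponent m g ≠ 0}) (m := 1) hne
      have := h.trans this
      omega
  · rintro ⟨h0, h1⟩
    have hne : {m : ℕ | homogeneousComponent m g ≠ 0}.Nonempty := by
      by_contra hemp
      have hz : ∀ m, homogeneousComponent m g = 0 := by
        intro m
        by_contra hm
        exact hemp ⟨m, hm⟩
      have hg0 : g = 0 := by
        rw [← sum_homogeneousComponent g]
        exact Finset.sum_eq_zero fun m _ => hz m
      have hback : bind₁ (fun j : ℕ => if j = 0 then (X 0 - C α : MvPolynomial (Fin 2) K)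
          else X 1 - C β) g = f := by
        rw [hg, hf]; simp
      have hf0 : f = 0 := by rw [← hback, hg0, map_zero]
      have := (hi' 0 0 0 (by rw [hf0, map_zero])).1 (by simp)
      simp [hl0] at this
    have hmem := Nat.sInf_mem hne
    have hs : ∀ s : ℕ, homogeneousComponent s g ≠ 0 → 2 ≤ s := by
      intro s hs
      by_contra hlt
      have : s = 0 ∨ s = 1 := by omega
      rcases this with rfl | rfl
      · exact hs h0
      · exact hs h1
    exact hs _ hmem
end

section
/- Let K be a field of characteristic 2, let ℓ be an odd positive integer, and let H = {a ∈ K : a^ℓ = 1}; assume H has exactly ℓ elements. Then for every α ∈ H with α ≠ 1 there exists β ∈ H with β ≠ 1, β ≠ α, and (α + β + 1)^ℓ ≠ 1. -/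
/-- If `K` has characteristic `2` and contains all `ℓ` of the `ℓ`-th roots of unity
(`ℓ` odd), then for every `ℓ`-th root of unity `α ≠ 1` there is an `ℓ`-th root of
unity `β` with `β ≠ 1`, `β ≠ α` and `(α + β + 1)^ℓ ≠ 1`. -/
theorem stmt_9 (K : Type*) [Field K] [CharP K 2] (l : ℕ) (hlodd : Odd l)
    (hlpos : 0 < l) (hcard : Set.ncard {a : K | a ^ l = 1} = l)
    (α : K) (hα : α ^ l = 1) (hα1 : α ≠ 1) :
    ∃ β : K, β ^ l = 1 ∧ β ≠ 1 ∧ β ≠ α ∧ (α + β + 1) ^ l ≠ 1 := by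
  classical
  by_contra hcon
  push Not at hcon
  have h2 : ∀ x : K, x + x = 0 := fun x => CharTwo.add_self_eq_zero x
  have key : ∀ b : K, b ^ l = 1 → (α + b + 1) ^ l = 1 := by
    intro b hb
    by_cases h1 : b = 1
    · subst h1
      rw [add_assoc, h2, add_zero, hα]
    by_cases h3 : b = α
    · subst h3
      rw [h2, zero_add, one_pow]
    exact hcon b hb h1 h3
  have hfin : {a : K | a ^ l = 1}.Finite := Set.finite_of_ncard_pos (by omega)
  have hc : hfin.toFinset.card = l := by
    rw [← Set.ncard_eq_toFinset_card _ hfin, hcard]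
  have hsum : ∑ _x ∈ hfin.toFinset, (1 : K) = 0 := by
    refine Finset.sum_involution (fun b _ => α + b + 1) ?_ ?_ ?_ ?_
    · intro a _
      exact h2 1
    · intro a _ _ h
      apply hα1
      linear_combination h - h2 1
    · intro a ha
      simp only [Set.Finite.mem_toFinset, Set.mem_setOf_eq] at ha ⊢
      exact key a ha
    · intro a _
      linear_combination h2 α + h2 1
  rw [Finset.sum_const, hc, nsmul_eq_mul, mul_one] at hsum
  rw [CharP.cast_eq_zero_iff K 2] at hsum
  obtain ⟨k, hk⟩ := hlodd
  omega
end

section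
/- Let t = 2^i·ℓ + 1 where i ≥ 1 and ℓ ≥ 3 is odd, let K be an algebraically closed field of characteristic 2, and let α, β ∈ K satisfy α^ℓ = β^ℓ = (α+β+1)^ℓ = 1. Set λ = α + β + 1 and let F_{2^i} = (α^{t−2^i} + λ^{t−2^i})x^{2^i} + (β^{t−2^i} + λ^{t−2^i})y^{2^i}, the degree-2^i homogeneous component of f_t(x+α, y+β) where f_t(x,y) = x^t + y^t + 1 + (x+y+1)^t. Then F_{2^i} = 0 if and only if α^{2^i−1} = β^{2^i−1} = λ^{2^i−1}. In particular, if gcd(ℓ, 2^i − 1) = ℓ then F_{2^i} = 0 at every such point. -/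
open MvPolynomial

/-- At a singular point `(α, β)` of `f_t` (with `t = 2^i ℓ + 1`), the component
`F_{2^i}` vanishes iff `α^{2^i-1} = β^{2^i-1} = λ^{2^i-1}` where `λ = α + β + 1`;
in particular it vanishes whenever `gcd(ℓ, 2^i - 1) = ℓ`. -/
theorem stmt_10 (K : Type*) [Field K] [IsAlgClosed K] [CharP K 2] (i l t : ℕ)
    (hi : 1 ≤ i) (hl : 3 ≤ l) (hlodd : Odd l) (ht : t = 2 ^ i * l + 1)
    (α β : K) (hα : α ^ l = 1) (hβ : β ^ l = 1) (hlam : (α + β + 1) ^ l = 1) :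
    let lam : K := α + β + 1
    let F : MvPolynomial (Fin 2) K :=
      C (α ^ (t - 2 ^ i) + lam ^ (t - 2 ^ i)) * X 0 ^ 2 ^ i +
        C (β ^ (t - 2 ^ i) + lam ^ (t - 2 ^ i)) * X 1 ^ 2 ^ i
    (F = 0 ↔
      α ^ (2 ^ i - 1) = lam ^ (2 ^ i - 1) ∧ β ^ (2 ^ i - 1) = lam ^ (2 ^ i - 1)) ∧
    (Nat.gcd l (2 ^ i - 1) = l → F = 0) := by
  intro lam F
  have key : ∀ a : K, a ^ l = 1 → a ^ (t - 2 ^ i) = (a ^ (2 ^ i - 1))⁻¹ := by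
    intro a ha
    apply eq_inv_of_mul_eq_one_left
    rw [← pow_add]
    have h1 : 1 ≤ 2 ^ i := Nat.one_le_two_pow
    have h2 : 2 ^ i ≤ 2 ^ i * l := Nat.le_mul_of_pos_right _ (by omega)
    have h3 : t - 2 ^ i + (2 ^ i - 1) = l * 2 ^ i := by
      rw [mul_comm l]; omega
    rw [h3, pow_mul, ha, one_pow]
  have hco : ∀ a : K, a ^ l = 1 → (a ^ (t - 2 ^ i) + lam ^ (t - 2 ^ i) = 0 ↔
      a ^ (2 ^ i - 1) = lam ^ (2 ^ i - 1)) := by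
    intro a ha
    rw [key a ha, key lam hlam, CharTwo.add_eq_zero, inv_inj]
  have hF : F = 0 ↔
      α ^ (2 ^ i - 1) = lam ^ (2 ^ i - 1) ∧ β ^ (2 ^ i - 1) = lam ^ (2 ^ i - 1) := by
    rw [← hco α hα, ← hco β hβ]
    constructor
    · intro h
      have e1 := congrArg (eval ![(1 : K), 0]) h
      have e2 := congrArg (eval ![(0 : K), 1]) h
      simp only [F, map_add, map_mul, map_pow, eval_C, eval_X, map_zero] at e1 e2
      simp at e1 e2
      exact ⟨e1, e2⟩
    · rintro ⟨h1, h2⟩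
      simp only [F, h1, h2, map_zero, zero_mul, add_zero]
  refine ⟨hF, fun hg => hF.2 ?_⟩
  obtain ⟨k, hk⟩ := Nat.gcd_eq_left_iff_dvd.1 hg
  have hlam' : lam ^ l = 1 := hlam
  rw [hk]
  simp only [pow_mul, hα, hβ, hlam', one_pow, and_self]
end
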